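/- For any discrete memoryless channel W: X → Y on finite alphabets and any r ≥ 0, the strong converse exponent satisfies E_sc^{(α)}(W,r) = max_{α≤β≤1} [α(1−β)/(β(1−α))] (I_β(W) − r) for α ∈ (0,1), and E_sc^{(α)}(W,r) = max{I_α(W) − r, 0} for α ∈ {0} ∪ [1,∞]. -/

import Mathlib

open scoped ENNReal NNReal BigOperators Classical
open Filter

noncomputable section

namespace RST

/-- Base-2 logarithm `ℝ≥0∞ → EReal`, with `log 0 = ⊥` and `log ⊤ = ⊤`. -/
def elog2 (s : ℝ≥0∞) : EReal :=
  if s = 0 then ⊥ else if s = ⊤ then ⊤ else ((Real.logb 2 s.toReal : ℝ) : EReal)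

/-- Base-2 logarithm `EReal → EReal` (for nonnegative arguments). -/
def eLog2 (x : EReal) : EReal :=
  if x = ⊤ then ⊤ else if x ≤ 0 then ⊥ else ((Real.logb 2 x.toReal : ℝ) : EReal)

/-- Base-2 exponential `EReal → ℝ≥0∞`. -/
def epow2 (x : EReal) : ℝ≥0∞ :=
  if x = ⊤ then ⊤ else if x = ⊥ then 0 else ENNReal.ofReal ((2 : ℝ) ^ x.toReal)

variable {X Y : Type*}

/-- A probability distribution on a finite alphabet, as an `ℝ≥0∞`-valued function. -/
def IsDist [Fintype X] (P : X → ℝ≥0∞) : Prop := ∑ x, P x = 1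

/-- A discrete memoryless channel: every row is a probability distribution. -/
def IsChannel [Fintype X] [Fintype Y] (W : X → Y → ℝ≥0∞) : Prop := ∀ x, ∑ y, W x y = 1

/-- Order-`α` Rényi divergence (base 2), with the order `α ∈ [0,∞]` encoded as `ℝ≥0∞`.
The conventions `0/0 = 0` and `a/0 = ∞` (for `a > 0`, `α > 1`) are built into `ℝ≥0∞`
arithmetic.  The second argument is allowed to be an arbitrary nonnegative vector. -/
def renyiD [Fintype X] (α : ℝ≥0∞) (P Q : X → ℝ≥0∞) : EReal :=
  if α = 0 then - elog2 (∑ x ∈ Finset.univ.filter fun x => P x ≠ 0, Q x)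
  else if α = 1 then ∑ x, ((P x).toReal : EReal) * elog2 (P x / Q x)
  else if α = ⊤ then elog2 (⨆ x, P x / Q x)
  else (((α.toReal - 1)⁻¹ : ℝ) : EReal) *
    elog2 (∑ x, P x ^ α.toReal * Q x ^ (1 - α.toReal))

/-- The `X`-marginal of a joint distribution on `X × Y`. -/
def margX [Fintype X] [Fintype Y] (P : X × Y → ℝ≥0∞) : X → ℝ≥0∞ := fun x => ∑ y, P (x, y)

/-- Order-`α` Rényi mutual information `I_α(X:Y)_P = min_{Q_Y} D_α(P‖P_X × Q_Y)`. -/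
def renyiMI [Fintype X] [Fintype Y] (α : ℝ≥0∞) (P : X × Y → ℝ≥0∞) : EReal :=
  ⨅ Q : {Q : Y → ℝ≥0∞ // IsDist Q}, renyiD α P fun p => margX P p.1 * Q.1 p.2

/-- The joint input-output distribution `P_X · W`. -/
def joint [Fintype X] [Fintype Y] (PX : X → ℝ≥0∞) (W : X → Y → ℝ≥0∞) : X × Y → ℝ≥0∞ :=
  fun p => PX p.1 * W p.1 p.2

/-- Order-`α` Rényi capacity `I_α(W) = max_{P_X} I_α(X:Y)_{P_X · W}`. -/
def renyiCap [Fintype X] [Fintype Y] (α : ℝ≥0∞) (W : X → Y → ℝ≥0∞) : EReal :=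
  ⨆ P : {P : X → ℝ≥0∞ // IsDist P}, renyiMI α (joint P.1 W)

/-- `N` is a simulation of a channel `X → Y` with communication cost at most `c` bits:
shared randomness `K = Fin m` with distribution `PK`, a message set `{1,…,M}` with
`log₂ M ≤ c`, an encoder `E` and a decoder `D`. -/
def IsSimulation [Fintype X] [Fintype Y] (c : ℝ) (N : X → Y → ℝ≥0∞) : Prop :=
  ∃ (m M : ℕ) (PK : Fin m → ℝ≥0∞) (E : X → Fin m → Fin M → ℝ≥0∞)
    (D : Fin M → Fin m → Y → ℝ≥0∞),
    0 < M ∧ Real.logb 2 M ≤ c ∧ (∑ k, PK k = 1) ∧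
    (∀ x k, ∑ j, E x k j = 1) ∧ (∀ j k, ∑ y, D j k y = 1) ∧
    ∀ x y, N x y = ∑ k, ∑ j, PK k * E x k j * D j k y

/-- `D_α(W, N) := max_x D_α(W(·|x) ‖ N(·|x))`. -/
def chD [Fintype X] [Fintype Y] (α : ℝ≥0∞) (W N : X → Y → ℝ≥0∞) : EReal :=
  ⨆ x, renyiD α (W x) (N x)

/-- `𝖣_α(W, c) := min_{N ∈ A(W,c)} D_α(W, N)`. -/
def simD [Fintype X] [Fintype Y] (α : ℝ≥0∞) (W : X → Y → ℝ≥0∞) (c : ℝ) : EReal :=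
  ⨅ N : {N : X → Y → ℝ≥0∞ // IsSimulation c N}, chD α W N.1

/-- The `n`-fold memoryless extension `W^{×n}` of a channel `W`. -/
def prodCh [Fintype X] [Fintype Y] (n : ℕ) (W : X → Y → ℝ≥0∞) :
    (Fin n → X) → (Fin n → Y) → ℝ≥0∞ :=
  fun xs ys => ∏ i, W (xs i) (ys i)

/-- A sequence of communication costs with rate at most `r`. -/
def RateOK (r : ℝ) (c : ℕ → ℝ) : Prop :=
  (∀ n, 0 ≤ c n) ∧ Filter.limsup (fun n : ℕ => ((c n / n : ℝ) : EReal)) Filter.atTop ≤ (r : EReal)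

/-- Reliability function `E_rf^{(α)}(W, r)`. -/
def Erf [Fintype X] [Fintype Y] (α : ℝ≥0∞) (W : X → Y → ℝ≥0∞) (r : ℝ) : EReal :=
  ⨆ c : {c : ℕ → ℝ // RateOK r c},
    Filter.liminf
      (fun n : ℕ => (((-1 : ℝ) / n : ℝ) : EReal) * eLog2 (simD α (prodCh n W) (c.1 n)))
      Filter.atTop

/-- Strong converse exponent `E_sc^{(α)}(W, r)`. -/
def Esc [Fintype X] [Fintype Y] (α : ℝ≥0∞) (W : X → Y → ℝ≥0∞) (r : ℝ) : EReal :=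
  ⨅ c : {c : ℕ → ℝ // RateOK r c},
    Filter.limsup
      (fun n : ℕ => (((1 : ℝ) / n : ℝ) : EReal) * simD α (prodCh n W) (c.1 n))
      Filter.atTop

/-- The `α`-Rényi simulation rate `R_RST^{(α)}(W)`. -/
def Rrst [Fintype X] [Fintype Y] (α : ℝ≥0∞) (W : X → Y → ℝ≥0∞) : EReal :=
  ⨅ c : {c : ℕ → ℝ // (∀ n, 0 ≤ c n) ∧
      Filter.limsup (fun n : ℕ => simD α (prodCh n W) (c n)) Filter.atTop = 0},
    Filter.limsup (fun n : ℕ => ((c.1 n / n : ℝ) : EReal)) Filter.atTop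

/-- n-fold product of a joint distribution on `X × Y`, as a distribution on pairs of
sequences. -/
def prodJoint [Fintype X] [Fintype Y] (n : ℕ) (P : X × Y → ℝ≥0∞) :
    (Fin n → X) × (Fin n → Y) → ℝ≥0∞ :=
  fun p => ∏ i, P (p.1 i, p.2 i)

/-- n-fold product distribution. -/
def prodDist [Fintype X] (n : ℕ) (P : X → ℝ≥0∞) : (Fin n → X) → ℝ≥0∞ :=
  fun xs => ∏ i, P (xs i)

/-- The type (empirical count vector) of a sequence. -/
def seqType [Fintype Y] [DecidableEq Y] {n : ℕ} (ys : Fin n → Y) : Y → ℕ :=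
  fun y => (Finset.univ.filter fun i => ys i = y).card

/-- The cardinality of the type class of a sequence. -/
def typeClassCard [Fintype Y] [DecidableEq Y] {n : ℕ} (ys : Fin n → Y) : ℕ :=
  (Finset.univ.filter fun zs : Fin n → Y => seqType zs = seqType ys).card

/-- The number of types of sequences in `Y^n`. -/
def numTypes (Y : Type*) [Fintype Y] [DecidableEq Y] (n : ℕ) : ℕ :=
  (Finset.univ.image fun ys : Fin n → Y => seqType ys).card

/-- `Φ_{Y^n}`: the uniform mixture over type classes of `Y^n`. -/
def PhiY (Y : Type*) [Fintype Y] [DecidableEq Y] (n : ℕ) : (Fin n → Y) → ℝ≥0∞ :=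
  fun ys => ((numTypes Y n : ℝ≥0∞) * (typeClassCard ys : ℝ≥0∞))⁻¹

end RST

namespace RST


lemma two_rpow_pos (d : ℝ) : (0:ℝ) < (2:ℝ) ^ d := Real.rpow_pos_of_pos two_pos d

lemma elog2_le_iff (s : ℝ≥0∞) (d : ℝ) : elog2 s ≤ (d : EReal) ↔ s ≤ ENNReal.ofReal ((2:ℝ) ^ d) := by
  unfold elog2
  split_ifs with h1 h2
  · simp [h1]
  · simp [h2]
  · have hs : 0 < s.toReal := ENNReal.toReal_pos h1 h2
    rw [EReal.coe_le_coe_iff, Real.logb_le_iff_le_rpow (by norm_num) hs,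
      ENNReal.le_ofReal_iff_toReal_le h2 (two_rpow_pos d).le]

lemma le_elog2_iff (s : ℝ≥0∞) (d : ℝ) : (d : EReal) ≤ elog2 s ↔ ENNReal.ofReal ((2:ℝ) ^ d) ≤ s := by
  unfold elog2
  split_ifs with h1 h2
  · simp [h1, two_rpow_pos]
  · simp [h2]
  · have hs : 0 < s.toReal := ENNReal.toReal_pos h1 h2
    rw [EReal.coe_le_coe_iff, Real.le_logb_iff_rpow_le (by norm_num) hs,
      ENNReal.ofReal_le_iff_le_toReal h2]

lemma ereal_pos_mul_le_iff {c : ℝ} (hc : 0 < c) (e : EReal) (d : ℝ) :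
    ((c⁻¹ : ℝ) : EReal) * e ≤ d ↔ e ≤ ((c * d : ℝ) : EReal) := by
  have hi : 0 < c⁻¹ := inv_pos.2 hc
  induction e with
  | bot => simp [EReal.coe_mul_bot_of_pos hi]
  | top => rw [EReal.coe_mul_top_of_pos hi]; simp only [top_le_iff, EReal.coe_ne_top]
  | coe e =>
    rw [← EReal.coe_mul, EReal.coe_le_coe_iff, EReal.coe_le_coe_iff, inv_mul_le_iff₀ hc]

lemma ereal_neg_mul_le_iff {c : ℝ} (hc : c < 0) (e : EReal) (d : ℝ) :
    ((c⁻¹ : ℝ) : EReal) * e ≤ d ↔ ((c * d : ℝ) : EReal) ≤ e := by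
  have hi : c⁻¹ < 0 := inv_lt_zero.2 hc
  induction e with
  | bot =>
    rw [EReal.coe_mul_bot_of_neg hi]; simp only [top_le_iff, EReal.coe_ne_top, le_bot_iff, EReal.coe_ne_bot]
  | top => simp [EReal.coe_mul_top_of_neg hi]
  | coe e =>
    rw [← EReal.coe_mul, EReal.coe_le_coe_iff, EReal.coe_le_coe_iff, inv_mul_eq_div,
      div_le_iff_of_neg hc, mul_comm]

section
variable {A : Type*} [Fintype A]

lemma IsDist.le_one {P : A → ℝ≥0∞} (h : IsDist P) (x : A) : P x ≤ 1 := by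
  unfold IsDist at h
  rw [← h]; exact Finset.single_le_sum (f := P) (fun _ _ => zero_le) (Finset.mem_univ x)

lemma IsDist.ne_top {P : A → ℝ≥0∞} (h : IsDist P) (x : A) : P x ≠ ⊤ :=
  ne_top_of_le_ne_top ENNReal.one_ne_top (h.le_one x)

lemma renyiD_lt_one_iff {a : ℝ} (h0 : 0 < a) (h1 : a < 1) (P Q : A → ℝ≥0∞) (d : ℝ) :
    renyiD (ENNReal.ofReal a) P Q ≤ d ↔
      ENNReal.ofReal ((2:ℝ) ^ ((a - 1) * d)) ≤ ∑ x, P x ^ a * Q x ^ (1 - a) := by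
  have e0 : ENNReal.ofReal a ≠ 0 := by simpa using h0
  have e1 : ENNReal.ofReal a ≠ 1 := by simpa using h1.ne
  rw [renyiD, if_neg e0, if_neg e1, if_neg ENNReal.ofReal_ne_top, ENNReal.toReal_ofReal h0.le,
    ereal_neg_mul_le_iff (by linarith), le_elog2_iff]

lemma renyiD_gt_one_iff {a : ℝ} (h1 : 1 < a) (P Q : A → ℝ≥0∞) (d : ℝ) :
    renyiD (ENNReal.ofReal a) P Q ≤ d ↔
      ∑ x, P x ^ a * Q x ^ (1 - a) ≤ ENNReal.ofReal ((2:ℝ) ^ ((a - 1) * d)) := by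
  have h0 : 0 < a := by linarith
  have e0 : ENNReal.ofReal a ≠ 0 := by simpa using h0
  have e1 : ENNReal.ofReal a ≠ 1 := by simpa using h1.ne'
  rw [renyiD, if_neg e0, if_neg e1, if_neg ENNReal.ofReal_ne_top, ENNReal.toReal_ofReal h0.le,
    ereal_pos_mul_le_iff (by linarith), elog2_le_iff]

lemma renyiD_zero_iff (P Q : A → ℝ≥0∞) (d : ℝ) :
    renyiD 0 P Q ≤ d ↔
      ENNReal.ofReal ((2:ℝ) ^ (- d)) ≤ ∑ x ∈ Finset.univ.filter fun x => P x ≠ 0, Q x := by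
  rw [renyiD, if_pos rfl, EReal.neg_le, ← EReal.coe_neg, le_elog2_iff]

lemma renyiD_top_iff {P : A → ℝ≥0∞} (_hP : ∀ x, P x ≠ ⊤) (Q : A → ℝ≥0∞) (d : ℝ) :
    renyiD ⊤ P Q ≤ d ↔ ∀ x, P x ≤ ENNReal.ofReal ((2:ℝ) ^ d) * Q x := by
  rw [renyiD, if_neg (by simp), if_neg (by simp), if_pos rfl, elog2_le_iff, iSup_le_iff]
  refine forall_congr' fun x => ?_
  have := two_rpow_pos d
  by_cases hx : P x = 0
  · simp [hx]
  rw [ENNReal.div_le_iff_le_mul]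
  · right; exact ENNReal.ofReal_ne_top
  · right; simpa using this

lemma sum_coe_ereal (f : A → ℝ) : ∑ x, ((f x : ℝ) : EReal) = ((∑ x, f x : ℝ) : EReal) := by
  induction (Finset.univ : Finset A) using Finset.induction_on with
  | empty => simp
  | insert a s ha ih => rw [Finset.sum_insert ha, Finset.sum_insert ha, ih, EReal.coe_add]

lemma sum_ereal_ne_bot (s : Finset A) (f : A → EReal) (hf : ∀ x, f x ≠ ⊥) : ∑ x ∈ s, f x ≠ ⊥ := by
  induction s using Finset.induction_on with
  | empty => simp
  | insert a s ha ih => rw [Finset.sum_insert ha, EReal.add_ne_bot_iff]; exact ⟨hf a, ih⟩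

lemma renyiD_one_eq {P Q : A → ℝ≥0∞} (hP : ∀ x, P x ≠ ⊤) (hQ : ∀ x, Q x ≠ ⊤)
    (h : ∀ x, P x ≠ 0 → Q x ≠ 0) :
    renyiD 1 P Q = ((∑ x, (P x).toReal * Real.logb 2 ((P x).toReal / (Q x).toReal) : ℝ) : EReal) := by
  rw [renyiD, if_neg (by simp), if_pos rfl, ← sum_coe_ereal]
  refine Finset.sum_congr rfl fun x _ => ?_
  by_cases hx : P x = 0
  · simp [hx]
  have hq := h x hx
  have : P x / Q x ≠ 0 := by simp [ENNReal.div_eq_zero_iff, hx, hQ x]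
  have h2 : P x / Q x ≠ ⊤ := by simp [ENNReal.div_eq_top, hx, hP x, hq]
  rw [elog2, if_neg this, if_neg h2, ENNReal.toReal_div, EReal.coe_mul]

lemma renyiD_one_supp {P Q : A → ℝ≥0∞} (hP : ∀ x, P x ≠ ⊤) (hQ : ∀ x, Q x ≠ ⊤) {d : ℝ}
    (h : renyiD 1 P Q ≤ d) : ∀ x, P x ≠ 0 → Q x ≠ 0 := by
  intro x hx hq
  have : renyiD 1 P Q = ⊤ := by
    rw [renyiD, if_neg (by simp), if_pos rfl]
    have hnb : ∀ y, ((P y).toReal : EReal) * elog2 (P y / Q y) ≠ ⊥ := by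
      intro y
      by_cases hy : P y = 0
      · simp [hy]
      have hpos : 0 < (P y).toReal := ENNReal.toReal_pos hy (hP y)
      have h0 : P y / Q y ≠ 0 := by simp [ENNReal.div_eq_zero_iff, hy, hQ y]
      rw [elog2, if_neg h0]
      split_ifs
      · rw [EReal.coe_mul_top_of_pos hpos]; simp
      · rw [← EReal.coe_mul]; exact EReal.coe_ne_bot _
    rw [← Finset.add_sum_erase _ _ (Finset.mem_univ x)]
    have e1 : ((P x).toReal : EReal) * elog2 (P x / Q x) = ⊤ := by
      have hpos : 0 < (P x).toReal := ENNReal.toReal_pos hx (hP x)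
      have h0 : P x / Q x = ⊤ := by rw [hq]; exact ENNReal.div_zero hx
      rw [elog2, h0]; simp [EReal.coe_mul_top_of_pos hpos]
    rw [e1, EReal.top_add_of_ne_bot]
    exact sum_ereal_ne_bot _ _ hnb
  rw [this] at h
  exact absurd h (by simp)

lemma renyiD_one_iff {P Q : A → ℝ≥0∞} (hP : ∀ x, P x ≠ ⊤) (hQ : ∀ x, Q x ≠ ⊤) (d : ℝ) :
    renyiD 1 P Q ≤ d ↔ (∀ x, P x ≠ 0 → Q x ≠ 0) ∧
      ∑ x, (P x).toReal * Real.logb 2 ((P x).toReal / (Q x).toReal) ≤ d := by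
  constructor
  · intro h
    have hs := renyiD_one_supp hP hQ h
    refine ⟨hs, ?_⟩
    rwa [renyiD_one_eq hP hQ hs, EReal.coe_le_coe_iff] at h
  · rintro ⟨hs, h⟩
    rwa [renyiD_one_eq hP hQ hs, EReal.coe_le_coe_iff]

lemma order_cases (α : ℝ≥0∞) : α = 0 ∨ α = 1 ∨ α = ⊤ ∨ (∃ a : ℝ, 0 < a ∧ a < 1 ∧ α = ENNReal.ofReal a) ∨
    (∃ a : ℝ, 1 < a ∧ α = ENNReal.ofReal a) := by
  by_cases h0 : α = 0
  · simp [h0]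
  by_cases h1 : α = 1
  · simp [h1]
  by_cases ht : α = ⊤
  · simp [ht]
  have e : α = ENNReal.ofReal α.toReal := (ENNReal.ofReal_toReal ht).symm
  rcases lt_trichotomy α.toReal 1 with h | h | h
  · right; right; right; left
    exact ⟨α.toReal, ENNReal.toReal_pos h0 ht, h, e⟩
  · rw [h] at e; simp at e; exact absurd e h1
  · right; right; right; right
    exact ⟨α.toReal, h, e⟩

/-- Monotonicity and scaling in the second argument. -/
lemma renyiD_scale {α : ℝ≥0∞} {P Q Q' : A → ℝ≥0∞} (hP : IsDist P) (hQ : ∀ x, Q x ≠ ⊤)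
    {c : ℝ} (hc : 0 < c) (hle : ∀ x, Q' x ≤ ENNReal.ofReal c * Q x) {d : ℝ}
    (h : renyiD α P Q' ≤ d) : renyiD α P Q ≤ ((d + Real.logb 2 c : ℝ) : EReal) := by
  have hQ' : ∀ x, Q' x ≠ ⊤ := fun x =>
    ne_top_of_le_ne_top (ENNReal.mul_ne_top ENNReal.ofReal_ne_top (hQ x)) (hle x)
  have hcc : (2:ℝ) ^ (Real.logb 2 c) = c := Real.rpow_logb two_pos (by norm_num) hc
  have hc0 : ENNReal.ofReal c ≠ 0 := by simpa using hc
  rcases order_cases α with rfl | rfl | rfl | ⟨a, h0, h1, rfl⟩ | ⟨a, h1, rfl⟩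
  · rw [renyiD_zero_iff] at *
    have : ENNReal.ofReal (2 ^ (-d)) ≤ ENNReal.ofReal c * ∑ x with P x ≠ 0, Q x := by
      refine h.trans ?_
      rw [Finset.mul_sum]
      exact Finset.sum_le_sum fun x _ => hle x
    rw [neg_add, Real.rpow_add two_pos, Real.rpow_neg two_pos.le (Real.logb 2 c), hcc,
      ENNReal.ofReal_mul (two_rpow_pos _).le, ENNReal.ofReal_inv_of_pos hc, ← div_eq_mul_inv]
    exact ENNReal.div_le_of_le_mul' this
  · rw [renyiD_one_iff (fun x => hP.ne_top x) hQ'] at h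
    rw [renyiD_one_iff (fun x => hP.ne_top x) hQ]
    obtain ⟨hs, h⟩ := h
    have hs' : ∀ x, P x ≠ 0 → Q x ≠ 0 := by
      intro x hx hq
      have := hle x
      rw [hq, mul_zero] at this
      exact hs x hx (le_antisymm this zero_le)
    refine ⟨hs', ?_⟩
    have hsum : ∑ x, (P x).toReal = 1 := by
      rw [← ENNReal.toReal_sum (fun x _ => hP.ne_top x), show ∑ x, P x = 1 from hP]; simp
    have : d + Real.logb 2 c = d + ∑ x, (P x).toReal * Real.logb 2 c := by
      rw [← Finset.sum_mul, hsum, one_mul]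
    rw [this]
    refine le_trans ?_ (add_le_add_left h _)
    rw [← Finset.sum_add_distrib]
    refine Finset.sum_le_sum fun x _ => ?_
    rw [← mul_add]
    by_cases hx : P x = 0
    · simp [hx]
    have hp : 0 < (P x).toReal := ENNReal.toReal_pos hx (hP.ne_top x)
    have hq : 0 < (Q x).toReal := ENNReal.toReal_pos (hs' x hx) (hQ x)
    have hq' : 0 < (Q' x).toReal := ENNReal.toReal_pos (hs x hx) (hQ' x)
    refine mul_le_mul_of_nonneg_left ?_ hp.le
    rw [← Real.logb_mul (by positivity) hc.ne']
    refine Real.logb_le_logb_of_le (by norm_num) (by positivity) ?_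
    have : (Q' x).toReal ≤ c * (Q x).toReal := by
      have := ENNReal.toReal_mono (ENNReal.mul_ne_top ENNReal.ofReal_ne_top (hQ x)) (hle x)
      rwa [ENNReal.toReal_mul, ENNReal.toReal_ofReal hc.le] at this
    rw [div_mul_eq_mul_div, div_le_div_iff₀ hq hq']
    nlinarith
  · rw [renyiD_top_iff (fun x => hP.ne_top x)] at *
    intro x
    rw [Real.rpow_add two_pos, hcc, ENNReal.ofReal_mul (two_rpow_pos _).le, mul_assoc]
    exact (h x).trans (mul_le_mul_right (hle x) _)
  · rw [renyiD_lt_one_iff h0 h1] at *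
    have e1 : (2:ℝ) ^ ((a - 1) * (d + Real.logb 2 c)) = 2 ^ ((a-1)*d) * (c ^ (1 - a))⁻¹ := by
      rw [mul_add, Real.rpow_add two_pos, mul_comm (a-1) (Real.logb 2 c), Real.rpow_mul two_pos.le (Real.logb 2 c), hcc,
        ← Real.rpow_neg hc.le, neg_sub]
    rw [e1, ENNReal.ofReal_mul (two_rpow_pos _).le, ENNReal.ofReal_inv_of_pos (by positivity),
      ← ENNReal.ofReal_rpow_of_pos hc, ← div_eq_mul_inv]
    refine ENNReal.div_le_of_le_mul' (h.trans ?_)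
    rw [Finset.mul_sum]
    refine Finset.sum_le_sum fun x _ => ?_
    rw [mul_left_comm, ← ENNReal.mul_rpow_of_nonneg _ _ (by linarith)]
    gcongr
    exact hle x
  · rw [renyiD_gt_one_iff h1] at *
    have e1 : (2:ℝ) ^ ((a - 1) * (d + Real.logb 2 c)) = 2 ^ ((a-1)*d) * (c ^ (a - 1)) := by
      rw [mul_add, Real.rpow_add two_pos, mul_comm (a-1) (Real.logb 2 c), Real.rpow_mul two_pos.le (Real.logb 2 c), hcc]
    rw [e1, ENNReal.ofReal_mul (two_rpow_pos _).le, ← ENNReal.ofReal_rpow_of_pos hc]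
    refine le_trans ?_ (mul_le_mul_left h _)
    rw [Finset.sum_mul]
    refine Finset.sum_le_sum fun x _ => ?_
    rw [mul_assoc]
    refine mul_le_mul_right ?_ _
    have e2 : ENNReal.ofReal c ^ (a - 1) = (ENNReal.ofReal c ^ (1 - a))⁻¹ := by
      rw [← ENNReal.rpow_neg, neg_sub]
    rw [e2, ← div_eq_mul_inv]
    rw [ENNReal.le_div_iff_mul_le (by left; simp [ENNReal.rpow_eq_zero_iff, hc0]) (by left; simp [ENNReal.rpow_eq_top_iff, hc0]), mul_comm,
      ← ENNReal.mul_rpow_of_ne_top ENNReal.ofReal_ne_top (hQ x)]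
    rw [← neg_sub a 1, ENNReal.rpow_neg, ENNReal.rpow_neg, ENNReal.inv_le_inv]
    exact ENNReal.rpow_le_rpow (hle x) (by linarith)
end

end RST

namespace RST

section
variable {A B : Type*} [Fintype A] [Fintype B]

lemma simulation_bound {c : ℝ} {N : A → B → ℝ≥0∞} (h : IsSimulation c N) :
    ∃ (M : ℝ) (Q : B → ℝ≥0∞), 1 ≤ M ∧ Real.logb 2 M ≤ c ∧ IsDist Q ∧ (∀ x, IsDist (N x)) ∧
      ∀ x y, N x y ≤ ENNReal.ofReal M * Q y := by
  obtain ⟨m, M, PK, E, D, hM, hc, hPK, hE, hD, hN⟩ := h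
  have hM0 : (M : ℝ≥0∞) ≠ 0 := by exact_mod_cast hM.ne'
  have hMt : (M : ℝ≥0∞) ≠ ⊤ := ENNReal.natCast_ne_top M
  refine ⟨M, fun y => (M:ℝ≥0∞)⁻¹ * ∑ k, ∑ j, PK k * D j k y, by exact_mod_cast hM, hc, ?_, ?_, ?_⟩
  · unfold IsDist
    rw [← Finset.mul_sum, Finset.sum_comm]
    have : ∀ k, ∑ y, ∑ j, PK k * D j k y = PK k * M := by
      intro k
      rw [Finset.sum_comm]
      simp [← Finset.mul_sum, hD, mul_comm]
    simp_rw [this, ← Finset.sum_mul, hPK, one_mul]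
    exact ENNReal.inv_mul_cancel hM0 hMt
  · intro x
    unfold IsDist
    simp_rw [hN]
    rw [Finset.sum_comm]
    have : ∀ k, ∑ y, ∑ j, PK k * E x k j * D j k y = PK k := by
      intro k
      rw [Finset.sum_comm]
      simp [← Finset.mul_sum, hD, hE]
    simp_rw [this, hPK]
  · intro x y
    rw [ENNReal.ofReal_natCast, ← mul_assoc, ENNReal.mul_inv_cancel hM0 hMt, one_mul, hN]
    refine Finset.sum_le_sum fun k _ => Finset.sum_le_sum fun j _ => ?_
    have : E x k j ≤ 1 := by
      rw [← hE x k]; exact Finset.single_le_sum (f := E x k) (fun _ _ => zero_le) (Finset.mem_univ j)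
    calc PK k * E x k j * D j k y ≤ PK k * 1 * D j k y := by gcongr
      _ = _ := by rw [mul_one]

lemma sum_pi_prod {n : ℕ} (f : Fin n → B → ℝ≥0∞) :
    ∑ k : Fin n → B, ∏ l, f l (k l) = ∏ l, ∑ y, f l y := by
  rw [Finset.prod_univ_sum]
  simp

lemma rejection {M : ℕ} (hM : 0 < M) {c : ℝ} (hc : Real.logb 2 M ≤ c) {Q : B → ℝ≥0∞} (hQ : IsDist Q)
    {N' : A → B → ℝ≥0∞} (hN1 : ∀ x, ∑ y, N' x y ≤ 1) (hN : ∀ x y, N' x y ≤ M * Q y) :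
    ∃ N : A → B → ℝ≥0∞, IsSimulation c N ∧ ∀ x y, N' x y ≤ ENNReal.ofReal 4 * N x y := by
  have hM0 : (M : ℝ≥0∞) ≠ 0 := by exact_mod_cast hM.ne'
  have hMt : (M : ℝ≥0∞) ≠ ⊤ := ENNReal.natCast_ne_top M
  have h2M0 : (2 * M : ℝ≥0∞) ≠ 0 := by simp [hM0]
  have h2Mt : (2 * M : ℝ≥0∞) ≠ ⊤ := ENNReal.mul_ne_top (by simp) hMt
  have hQt := hQ.ne_top
  set a : A → B → ℝ≥0∞ := fun x y => N' x y / (2 * M * Q y) with ha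
  have hQa : ∀ x y, Q y * a x y = N' x y / (2 * M) := by
    intro x y
    by_cases hq : Q y = 0
    · have := hN x y
      rw [hq, mul_zero] at this
      have h0 : N' x y = 0 := le_antisymm this zero_le
      simp [ha, hq, h0]
    · simp only [ha]
      rw [ENNReal.div_eq_inv_mul, ENNReal.mul_inv (Or.inl h2M0) (Or.inl h2Mt), ← mul_assoc,
        mul_comm (Q y), mul_assoc (2 * M : ℝ≥0∞)⁻¹, ENNReal.inv_mul_cancel hq (hQt y), mul_one,
        ENNReal.div_eq_inv_mul]
  have ha1 : ∀ x y, a x y ≤ 1 := by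
    intro x y
    simp only [ha]
    refine ENNReal.div_le_of_le_mul ?_
    rw [one_mul]
    refine (hN x y).trans ?_
    rw [mul_assoc, two_mul]
    exact le_self_add
  set b : A → B → ℝ≥0∞ := fun x y => 1 - a x y with hb
  have hab : ∀ x y, b x y + a x y = 1 := fun x y => tsub_add_cancel_of_le (ha1 x y)
  set e : A → (Fin M → B) → Fin M → ℝ≥0∞ := fun x k j =>
    a x (k j) * ∏ l with j < l, b x (k l) with he
  have hesum : ∀ x k, ∑ j, e x k j ≤ 1 := by
    intro x k
    have := Finset.prod_add_ordered (Finset.univ : Finset (Fin M)) (fun l => b x (k l)) (fun l => a x (k l))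
    simp only [hab, Finset.prod_const_one, mul_one] at this
    rw [this]
    exact le_add_self
  set E : A → (Fin M → B) → Fin M → ℝ≥0∞ := fun x k j =>
    e x k j + if j = ⟨0, hM⟩ then 1 - ∑ j, e x k j else 0 with hEdef
  have hE1 : ∀ x k, ∑ j, E x k j = 1 := by
    intro x k
    simp only [hEdef, Finset.sum_add_distrib, Finset.sum_ite_eq', Finset.mem_univ, if_true]
    rw [add_comm]
    exact tsub_add_cancel_of_le (hesum x k)
  set θ : ℝ := 1 - 1 / (2 * M) with hθ
  have hMr : (1:ℝ) ≤ M := by exact_mod_cast hM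
  have hθ0 : 0 ≤ θ := by
    rw [hθ, sub_nonneg, div_le_one (by positivity)]; linarith
  have hθp : (1:ℝ)/2 ≤ θ ^ (M - 1) := by
    have h := one_add_mul_le_pow (a := -(1 / (2 * (M:ℝ)))) (by
      have : 1 / (2 * (M:ℝ)) ≤ 1 := by rw [div_le_one (by positivity)]; linarith
      linarith) (M - 1)
    rw [show 1 + -(1 / (2 * (M:ℝ))) = θ by rw [hθ]; ring] at h
    refine le_trans ?_ h
    rw [Nat.cast_sub hM]
    have : (M:ℝ) * (1 / (2 * M)) = 1 / 2 := by field_simp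
    have h3 : 0 ≤ 1 / (2 * (M:ℝ)) := by positivity
    push_cast
    nlinarith
  have hQb : ∀ x, ENNReal.ofReal θ ≤ ∑ y, Q y * b x y := by
    intro x
    have h1 : ∑ y, Q y * b x y + ∑ y, Q y * a x y = 1 := by
      rw [← Finset.sum_add_distrib]
      simp_rw [← mul_add, hab, mul_one]
      exact hQ
    have h2 : ∑ y, Q y * a x y ≤ ENNReal.ofReal (1 / (2 * M)) := by
      simp_rw [hQa, ENNReal.div_eq_inv_mul, ← Finset.mul_sum]
      rw [one_div, ENNReal.ofReal_inv_of_pos (by positivity), ENNReal.ofReal_mul two_pos.le]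
      simp only [ENNReal.ofReal_ofNat, ENNReal.ofReal_natCast]
      calc _ ≤ (2 * M : ℝ≥0∞)⁻¹ * 1 := by gcongr; exact hN1 x
        _ = _ := mul_one _
    have h3 : ENNReal.ofReal θ + ENNReal.ofReal (1 / (2 * M)) = 1 := by
      rw [← ENNReal.ofReal_add hθ0 (by positivity)]; simp [hθ]
    have h4 : ENNReal.ofReal θ + ENNReal.ofReal (1 / (2 * M)) ≤ ∑ y, Q y * b x y + ENNReal.ofReal (1 / (2 * M)) := by
      rw [h3, ← h1]; gcongr
    exact (ENNReal.add_le_add_iff_right ENNReal.ofReal_ne_top).1 h4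
  have key : ∀ x y j, N' x y / (2 * M) * ENNReal.ofReal (1/2) ≤
      ∑ k : Fin M → B, (∏ l, Q (k l)) * e x k j * (if k j = y then 1 else 0) := by
    intro x y j
    have hrw : ∀ k : Fin M → B, (∏ l, Q (k l)) * e x k j * (if k j = y then 1 else 0) =
        ∏ l, (Q (k l) * (if l = j then (a x (k l) * if k l = y then 1 else 0) else if j < l then b x (k l) else 1)) := by
      intro k
      rw [Finset.prod_mul_distrib, mul_assoc]
      congr 1
      rw [← Finset.mul_prod_erase _ _ (Finset.mem_univ j), if_pos rfl]
      simp only [he]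
      rw [mul_right_comm]
      congr 1
      rw [Finset.prod_filter]
      rw [← Finset.mul_prod_erase _ _ (Finset.mem_univ j), if_neg (lt_irrefl j), one_mul]
      refine Finset.prod_congr rfl fun l hl => ?_
      rw [if_neg (Finset.ne_of_mem_erase hl)]
    simp_rw [hrw]
    rw [sum_pi_prod (fun l y' => (Q y' * (if l = j then (a x y' * if y' = y then 1 else 0) else if j < l then b x y' else 1)))]
    rw [← Finset.mul_prod_erase _ _ (Finset.mem_univ j)]
    refine mul_le_mul' ?_ ?_
    · simp [hQa]
    · calc ENNReal.ofReal (1/2) ≤ ENNReal.ofReal (θ ^ (M-1)) := ENNReal.ofReal_le_ofReal hθp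
        _ = ∏ l ∈ Finset.univ.erase j, ENNReal.ofReal θ := by
          rw [Finset.prod_const, Finset.card_erase_of_mem (Finset.mem_univ j)]
          simp [ENNReal.ofReal_pow hθ0]
        _ ≤ _ := by
          refine Finset.prod_le_prod' fun l hl => ?_
          simp only [if_neg (Finset.ne_of_mem_erase hl)]
          by_cases hl : j < l
          · simp only [hl, if_true]; exact hQb x
          · simp only [hl, if_false, mul_one]
            rw [show ∑ y, Q y = 1 from hQ]
            simp [hθ]
  let eqv := Fintype.equivFin (Fin M → B)
  refine ⟨fun x y => ∑ k, ∑ j, (∏ l, Q (eqv.symm k l)) * E x (eqv.symm k) j *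
      (if eqv.symm k j = y then 1 else 0), ⟨_, M, fun k => ∏ l, Q (eqv.symm k l),
      fun x k j => E x (eqv.symm k) j, fun j k y => if eqv.symm k j = y then 1 else 0, hM, hc, ?_, ?_, ?_, ?_⟩, ?_⟩
  · rw [Equiv.sum_comp eqv.symm (fun k => ∏ l, Q (k l)), sum_pi_prod (fun _ => Q)]
    simp [show ∑ y, Q y = 1 from hQ]
  · intro x k; exact hE1 x _
  · intro j k; simp
  · intro x y; rfl
  · intro x y
    beta_reduce
    rw [Equiv.sum_comp eqv.symm (fun k => ∑ j, (∏ l, Q (k l)) * E x k j *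
      (if k j = y then 1 else 0)), Finset.sum_comm]
    have h1 : ∑ j : Fin M, N' x y / (2 * M) * ENNReal.ofReal (1/2) ≤
        ∑ j : Fin M, ∑ k : Fin M → B, (∏ l, Q (k l)) * E x k j * (if k j = y then 1 else 0) := by
      refine Finset.sum_le_sum fun j _ => (key x y j).trans ?_
      refine Finset.sum_le_sum fun k _ => ?_
      gcongr
      exact le_self_add
    refine le_trans (le_of_eq ?_) (mul_le_mul_right h1 _)
    simp only [Finset.sum_const, Finset.card_univ, Fintype.card_fin, nsmul_eq_mul]
    rw [show ENNReal.ofReal (1/2) = (2:ℝ≥0∞)⁻¹ by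
      rw [one_div, ENNReal.ofReal_inv_of_pos two_pos]; simp]
    rw [ENNReal.div_eq_inv_mul, ENNReal.mul_inv (by simp) (by simp)]
    have h4 : ENNReal.ofReal 4 = 2 * 2 := by norm_num
    rw [h4]
    have c2 : (2:ℝ≥0∞) * 2⁻¹ = 1 := ENNReal.mul_inv_cancel (by simp) (by simp)
    have cM : (M:ℝ≥0∞) * (M:ℝ≥0∞)⁻¹ = 1 := ENNReal.mul_inv_cancel hM0 hMt
    calc N' x y = (2 * 2⁻¹) * (2 * 2⁻¹) * ((M:ℝ≥0∞) * (M:ℝ≥0∞)⁻¹) * N' x y := by rw [c2, cM]; simp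
      _ = _ := by ring
end
end RST

namespace RST

section
variable {A B : Type*} [Fintype A] [Fintype B]

lemma holder_lt {a : ℝ} (h0 : 0 < a) (h1 : a < 1) (f Q : B → ℝ≥0∞) (hQ : IsDist Q) :
    ∑ y, f y * Q y ^ (1 - a) ≤ (∑ y, f y ^ (1 / a)) ^ a := by
  have hpq : (1 / a).HolderConjugate (1 / (1 - a)) := by
    rw [Real.holderConjugate_iff]
    refine ⟨by rw [lt_div_iff₀ h0]; linarith, ?_⟩
    simp
  have := ENNReal.inner_le_Lp_mul_Lq Finset.univ f (fun y => Q y ^ (1 - a)) hpq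
  refine this.trans ?_
  have e : ∀ y, (Q y ^ (1 - a)) ^ (1 / (1 - a)) = Q y := by
    intro y
    rw [← ENNReal.rpow_mul, mul_one_div_cancel (by linarith), ENNReal.rpow_one]
  simp only [e, one_div_one_div, show ∑ y, Q y = 1 from hQ, ENNReal.one_rpow, mul_one, le_refl]

lemma holder_gt {a : ℝ} (h1 : 1 < a) (f Q : B → ℝ≥0∞) (hQ : IsDist Q) :
    (∑ y, f y ^ (1 / a)) ^ a ≤ ∑ y, f y * Q y ^ (1 - a) := by
  have h0 : 0 < a := by linarith
  by_cases hex : ∃ y, f y ≠ 0 ∧ Q y = 0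
  · obtain ⟨y, hf, hq⟩ := hex
    have : f y * Q y ^ (1 - a) = ⊤ := by
      rw [hq, ENNReal.zero_rpow_of_neg (by linarith), ENNReal.mul_top hf]
    have h2 : ∑ y, f y * Q y ^ (1 - a) = ⊤ := by
      rw [ENNReal.sum_eq_top]; exact ⟨y, Finset.mem_univ _, this⟩
    rw [h2]; exact le_top
  push Not at hex
  have hpq : a.HolderConjugate (a / (a - 1)) := by
    rw [Real.holderConjugate_iff]
    refine ⟨h1, ?_⟩
    have : a - 1 ≠ 0 := by linarith
    field_simp
    ring
  have := ENNReal.inner_le_Lp_mul_Lq Finset.univ (fun y => (f y * Q y ^ (1 - a)) ^ (1 / a))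
    (fun y => Q y ^ ((a - 1) / a)) hpq
  have e1 : ∀ y, (f y * Q y ^ (1 - a)) ^ (1 / a) * Q y ^ ((a - 1) / a) = f y ^ (1 / a) := by
    intro y
    by_cases hf : f y = 0
    · simp [hf, h0]
    have hq := hex y hf
    rw [ENNReal.mul_rpow_of_nonneg _ _ (by positivity), mul_assoc, ← ENNReal.rpow_mul,
      ← ENNReal.rpow_add _ _ hq (hQ.ne_top y)]
    rw [show (1 - a) * (1 / a) + (a - 1) / a = 0 by ring]
    simp
  have e2 : ∀ y, ((f y * Q y ^ (1 - a)) ^ (1 / a)) ^ a = f y * Q y ^ (1 - a) := by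
    intro y
    rw [← ENNReal.rpow_mul, one_div_mul_cancel h0.ne', ENNReal.rpow_one]
  have e3 : ∀ y, (Q y ^ ((a - 1) / a)) ^ (a / (a - 1)) = Q y := by
    intro y
    have : a - 1 ≠ 0 := by linarith
    rw [← ENNReal.rpow_mul, show (a - 1) / a * (a / (a - 1)) = 1 by field_simp, ENNReal.rpow_one]
  simp only [e1, e2, e3, show ∑ y, Q y = 1 from hQ, ENNReal.one_rpow, mul_one] at this
  calc _ ≤ ((∑ y, f y * Q y ^ (1 - a)) ^ (1 / a)) ^ a := ENNReal.rpow_le_rpow this h0.le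
    _ = _ := by rw [← ENNReal.rpow_mul, one_div_mul_cancel h0.ne', ENNReal.rpow_one]

lemma opt_value {a : ℝ} (h0 : 0 < a) (f : B → ℝ≥0∞) (hf : ∀ y, f y ≠ ⊤)
    (hS : ∑ y, f y ^ (1 / a) ≠ 0) :
    ∃ Q : B → ℝ≥0∞, IsDist Q ∧ ∑ y, f y * Q y ^ (1 - a) = (∑ y, f y ^ (1 / a)) ^ a := by
  set S := ∑ y, f y ^ (1 / a) with hSdef
  have hft : ∀ y, f y ^ (1 / a) ≠ ⊤ := fun y => ENNReal.rpow_ne_top_of_nonneg (by positivity) (hf y)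
  have hSt : S ≠ ⊤ := by
    rw [hSdef]; exact ENNReal.sum_ne_top.2 fun y _ => hft y
  refine ⟨fun y => f y ^ (1 / a) * S⁻¹, ?_, ?_⟩
  · unfold IsDist
    rw [← Finset.sum_mul, ← hSdef]; exact ENNReal.mul_inv_cancel hS hSt
  · have : ∀ y, f y * (f y ^ (1 / a) * S⁻¹) ^ (1 - a) = f y ^ (1 / a) * S ^ (a - 1) := by
      intro y
      by_cases hy : f y = 0
      · simp [hy, h0]
      rw [ENNReal.mul_rpow_of_ne_top (hft y) (by simpa using hS), ← mul_assoc, ← ENNReal.rpow_mul]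
      congr 1
      · nth_rw 1 [← ENNReal.rpow_one (f y)]
        rw [← ENNReal.rpow_add _ _ hy (hf y)]
        congr 1
        field_simp
        ring
      · rw [← ENNReal.rpow_neg_one, ← ENNReal.rpow_mul]; congr 1; ring
    simp_rw [this]
    rw [← Finset.sum_mul, ← hSdef]
    nth_rw 1 [← ENNReal.rpow_one S]
    rw [← ENNReal.rpow_add _ _ hS hSt]
    congr 1; ring

lemma margX_joint {W : A → B → ℝ≥0∞} (hW : IsChannel W) (P : A → ℝ≥0∞) (x : A) :
    margX (joint P W) x = P x := by
  simp only [margX, joint]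
  rw [← Finset.mul_sum, hW x, mul_one]

lemma joint_sum {a : ℝ} (h0 : 0 < a) {W : A → B → ℝ≥0∞} (hW : IsChannel W) {P : A → ℝ≥0∞} (hP : IsDist P)
    {Q : B → ℝ≥0∞} (hQ : ∀ y, Q y ≠ ⊤) :
    ∑ p, joint P W p ^ a * (margX (joint P W) p.1 * Q p.2) ^ (1 - a) =
      ∑ x, P x * ∑ y, W x y ^ a * Q y ^ (1 - a) := by
  rw [Fintype.sum_prod_type]
  refine Finset.sum_congr rfl fun x _ => ?_
  rw [Finset.mul_sum]
  refine Finset.sum_congr rfl fun y _ => ?_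
  rw [margX_joint hW]
  simp only [joint]
  by_cases hx : P x = 0
  · simp [hx, h0]
  have hxt := hP.ne_top x
  rw [ENNReal.mul_rpow_of_nonneg _ _ h0.le, ENNReal.mul_rpow_of_ne_top hxt (hQ y), mul_mul_mul_comm,
    ← ENNReal.rpow_add _ _ hx hxt]
  simp

lemma IsDist.joint {W : A → B → ℝ≥0∞} (hW : IsChannel W) {P : A → ℝ≥0∞} (hP : IsDist P) :
    IsDist (joint P W) := by
  unfold IsDist
  rw [Fintype.sum_prod_type]
  have : ∀ x, ∑ y, RST.joint P W (x, y) = P x := fun x => margX_joint hW P x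
  simp_rw [this]; exact hP

lemma IsChannel.prodCh {W : A → B → ℝ≥0∞} (hW : IsChannel W) (n : ℕ) : IsChannel (prodCh n W) := by
  intro xs
  unfold RST.prodCh
  rw [sum_pi_prod (fun i => W (xs i))]
  simp [hW _]

lemma IsDist.prodDist {P : A → ℝ≥0∞} (hP : IsDist P) (n : ℕ) : IsDist (prodDist n P) := by
  unfold IsDist RST.prodDist
  rw [sum_pi_prod (fun _ => P)]
  simp [show ∑ y, P y = 1 from hP]

/-- averaging the n-letter sum over a product input -/
lemma avg_sum {n : ℕ} {a : ℝ} (h0 : 0 < a) (W : A → B → ℝ≥0∞) (P : A → ℝ≥0∞) (Qn : (Fin n → B) → ℝ≥0∞) :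
    ∑ xs, prodDist n P xs * ∑ ys, prodCh n W xs ys ^ a * Qn ys ^ (1 - a) =
      ∑ ys, (∏ i, ∑ x, P x * W x (ys i) ^ a) * Qn ys ^ (1 - a) := by
  simp_rw [Finset.mul_sum]
  rw [Finset.sum_comm]
  refine Finset.sum_congr rfl fun ys _ => ?_
  rw [← sum_pi_prod (fun i x => P x * W x (ys i) ^ a), Finset.sum_mul]
  refine Finset.sum_congr rfl fun xs _ => ?_
  simp only [prodDist, prodCh]
  rw [Finset.prod_mul_distrib, ENNReal.prod_rpow_of_nonneg h0.le, mul_assoc]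

lemma f_pow_sum {n : ℕ} {a : ℝ} (h0 : 0 < a) (f : B → ℝ≥0∞) :
    ∑ ys : Fin n → B, (∏ i, f (ys i)) ^ (1 / a) = (∑ y, f y ^ (1 / a)) ^ n := by
  simp_rw [← ENNReal.prod_rpow_of_nonneg (show 0 ≤ 1 / a by positivity)]
  rw [sum_pi_prod (fun _ y => f y ^ (1 / a))]
  simp

lemma S_ne_zero {a : ℝ} (h0 : 0 < a) {W : A → B → ℝ≥0∞} (hW : IsChannel W) {P : A → ℝ≥0∞} (hP : IsDist P) :
    ∑ y, (∑ x, P x * W x y ^ a) ^ (1 / a) ≠ 0 := by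
  intro h
  rw [Finset.sum_eq_zero_iff] at h
  have h2 : ∀ x y, P x = 0 ∨ W x y = 0 := by
    intro x y
    have := h y (Finset.mem_univ _)
    rw [ENNReal.rpow_eq_zero_iff_of_pos (by positivity), Finset.sum_eq_zero_iff] at this
    have := this x (Finset.mem_univ _)
    rw [mul_eq_zero, ENNReal.rpow_eq_zero_iff_of_pos h0] at this
    exact this
  have : ∑ x, P x = 0 := by
    refine Finset.sum_eq_zero fun x _ => ?_
    by_contra hx
    have h3 : ∀ y, W x y = 0 := fun y => (h2 x y).resolve_left hx
    have := hW x
    simp [h3] at this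
  rw [show ∑ x, P x = 1 from hP] at this
  exact one_ne_zero this

lemma IsChannel.ne_top {W : A → B → ℝ≥0∞} (hW : IsChannel W) (x : A) (y : B) : W x y ≠ ⊤ :=
  IsDist.ne_top (hW x) y

lemma f_ne_top {a : ℝ} (h0 : 0 < a) {W : A → B → ℝ≥0∞} (hW : IsChannel W) {P : A → ℝ≥0∞} (hP : IsDist P)
    (y : B) : ∑ x, P x * W x y ^ a ≠ ⊤ :=
  ENNReal.sum_ne_top.2 fun x _ => ENNReal.mul_ne_top (hP.ne_top x)
    (ENNReal.rpow_ne_top_of_nonneg h0.le (hW.ne_top x y))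

lemma renyiMI_le {α : ℝ≥0∞} {P : A × B → ℝ≥0∞} {d : EReal} (Q : B → ℝ≥0∞) (hQ : IsDist Q)
    (h : renyiD α P (fun p => margX P p.1 * Q p.2) ≤ d) : renyiMI α P ≤ d :=
  (iInf_le _ (⟨Q, hQ⟩ : {Q : B → ℝ≥0∞ // IsDist Q})).trans h

lemma two_pow_nat_root {n : ℕ} (hn : 0 < n) (u : ℝ) : ENNReal.ofReal ((2:ℝ) ^ u) =
    ENNReal.ofReal ((2:ℝ) ^ (u / n)) ^ n := by
  rw [← ENNReal.ofReal_pow (two_rpow_pos _).le, ← Real.rpow_natCast, ← Real.rpow_mul two_pos.le,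
    div_mul_cancel₀ _ (by exact_mod_cast hn.ne')]

lemma rpow_pow_comm (s : ℝ≥0∞) (n : ℕ) (a : ℝ) : (s ^ n) ^ a = (s ^ a) ^ n := by
  rw [← ENNReal.rpow_natCast, ← ENNReal.rpow_natCast, ← ENNReal.rpow_mul, ← ENNReal.rpow_mul, mul_comm]

lemma conv_lt {n : ℕ} (hn : 0 < n) {a : ℝ} (h0 : 0 < a) (h1 : a < 1) {W : A → B → ℝ≥0∞} (hW : IsChannel W)
    {P : A → ℝ≥0∞} (hP : IsDist P) {Qn : (Fin n → B) → ℝ≥0∞} (hQn : IsDist Qn) {t : ℝ}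
    (h : ∀ xs, renyiD (ENNReal.ofReal a) (prodCh n W xs) Qn ≤ t) :
    renyiMI (ENNReal.ofReal a) (joint P W) ≤ ((t / n : ℝ) : EReal) := by
  obtain ⟨Q, hQ, hval⟩ := opt_value h0 (fun y => ∑ x, P x * W x y ^ a) (f_ne_top h0 hW hP) (S_ne_zero h0 hW hP)
  refine renyiMI_le Q hQ ?_
  rw [renyiD_lt_one_iff h0 h1, joint_sum h0 hW hP hQ.ne_top]
  simp_rw [renyiD_lt_one_iff h0 h1] at h
  have e : ∑ x, P x * ∑ y, W x y ^ a * Q y ^ (1 - a) = ∑ y, (∑ x, P x * W x y ^ a) * Q y ^ (1 - a) := by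
    simp_rw [Finset.mul_sum, Finset.sum_mul]
    rw [Finset.sum_comm]
    simp_rw [mul_assoc]
  rw [e, hval]
  have h2 : ENNReal.ofReal (2 ^ ((a - 1) * t)) ≤ ((∑ y, (∑ x, P x * W x y ^ a) ^ (1 / a)) ^ a) ^ n := by
    calc ENNReal.ofReal (2 ^ ((a - 1) * t)) = ∑ xs, prodDist n P xs * ENNReal.ofReal (2 ^ ((a - 1) * t)) := by
          rw [← Finset.sum_mul, show ∑ xs, prodDist n P xs = 1 from hP.prodDist n, one_mul]
      _ ≤ ∑ xs, prodDist n P xs * ∑ ys, prodCh n W xs ys ^ a * Qn ys ^ (1 - a) := by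
          gcongr with xs; exact h xs
      _ = _ := avg_sum h0 W P Qn
      _ ≤ _ := holder_lt h0 h1 (fun ys : Fin n → B => ∏ i, ∑ x, P x * W x (ys i) ^ a) Qn hQn
      _ = _ := by rw [f_pow_sum h0 (fun y => ∑ x, P x * W x y ^ a), rpow_pow_comm]
  rw [two_pow_nat_root hn] at h2
  have := (ENNReal.pow_le_pow_left_iff hn.ne').1 h2
  rwa [mul_div_assoc] at this

lemma conv_gt {n : ℕ} (hn : 0 < n) {a : ℝ} (h1 : 1 < a) {W : A → B → ℝ≥0∞} (hW : IsChannel W)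
    {P : A → ℝ≥0∞} (hP : IsDist P) {Qn : (Fin n → B) → ℝ≥0∞} (hQn : IsDist Qn) {t : ℝ}
    (h : ∀ xs, renyiD (ENNReal.ofReal a) (prodCh n W xs) Qn ≤ t) :
    renyiMI (ENNReal.ofReal a) (joint P W) ≤ ((t / n : ℝ) : EReal) := by
  have h0 : 0 < a := by linarith
  obtain ⟨Q, hQ, hval⟩ := opt_value h0 (fun y => ∑ x, P x * W x y ^ a) (f_ne_top h0 hW hP) (S_ne_zero h0 hW hP)
  refine renyiMI_le Q hQ ?_
  rw [renyiD_gt_one_iff h1, joint_sum h0 hW hP hQ.ne_top]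
  simp_rw [renyiD_gt_one_iff h1] at h
  have e : ∑ x, P x * ∑ y, W x y ^ a * Q y ^ (1 - a) = ∑ y, (∑ x, P x * W x y ^ a) * Q y ^ (1 - a) := by
    simp_rw [Finset.mul_sum, Finset.sum_mul]
    rw [Finset.sum_comm]
    simp_rw [mul_assoc]
  rw [e, hval]
  have h2 : ((∑ y, (∑ x, P x * W x y ^ a) ^ (1 / a)) ^ a) ^ n ≤ ENNReal.ofReal (2 ^ ((a - 1) * t)) := by
    calc ENNReal.ofReal (2 ^ ((a - 1) * t)) = ∑ xs, prodDist n P xs * ENNReal.ofReal (2 ^ ((a - 1) * t)) := by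
          rw [← Finset.sum_mul, show ∑ xs, prodDist n P xs = 1 from hP.prodDist n, one_mul]
      _ ≥ ∑ xs, prodDist n P xs * ∑ ys, prodCh n W xs ys ^ a * Qn ys ^ (1 - a) := by
          rw [ge_iff_le]
          gcongr with xs; exact h xs
      _ = _ := avg_sum h0 W P Qn
      _ ≥ _ := holder_gt h1 (fun ys : Fin n → B => ∏ i, ∑ x, P x * W x (ys i) ^ a) Qn hQn
      _ = _ := by rw [f_pow_sum h0 (fun y => ∑ x, P x * W x y ^ a), rpow_pow_comm]
  rw [two_pow_nat_root hn] at h2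
  have := (ENNReal.pow_le_pow_left_iff hn.ne').1 h2
  rwa [mul_div_assoc] at this

lemma conv_zero {n : ℕ} (hn : 0 < n) [Nonempty B] {W : A → B → ℝ≥0∞} (hW : IsChannel W)
    {P : A → ℝ≥0∞} (hP : IsDist P) {Qn : (Fin n → B) → ℝ≥0∞} (hQn : IsDist Qn) {t : ℝ}
    (h : ∀ xs, renyiD 0 (prodCh n W xs) Qn ≤ t) :
    renyiMI 0 (joint P W) ≤ ((t / n : ℝ) : EReal) := by
  simp_rw [renyiD_zero_iff] at h
  set g : B → ℝ≥0∞ := fun y => ∑ x, P x * (if W x y ≠ 0 then 1 else 0) with hg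
  obtain ⟨y0, hy0⟩ := Finite.exists_max g
  refine renyiMI_le (fun y => if y = y0 then 1 else 0) (by simp [IsDist]) ?_
  rw [renyiD_zero_iff]
  have e : ∑ p with joint P W p ≠ 0, margX (joint P W) p.1 * (if p.2 = y0 then 1 else 0) = g y0 := by
    rw [Finset.sum_filter, Fintype.sum_prod_type, hg]
    refine Finset.sum_congr rfl fun x _ => ?_
    rw [Finset.sum_eq_single y0]
    · rw [margX_joint hW]
      by_cases hx : P x = 0
      · simp [hx]
      · simp [joint, hx]
    · intro b _ hb; simp [hb]
    · simp
  rw [e]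
  have h2 : ENNReal.ofReal (2 ^ (-t)) ≤ g y0 ^ n := by
    calc ENNReal.ofReal (2 ^ (-t)) = ∑ xs, prodDist n P xs * ENNReal.ofReal (2 ^ (-t)) := by
          rw [← Finset.sum_mul, show ∑ xs, prodDist n P xs = 1 from hP.prodDist n, one_mul]
      _ ≤ ∑ xs, prodDist n P xs * ∑ ys with prodCh n W xs ys ≠ 0, Qn ys := by
          gcongr with xs; exact h xs
      _ = ∑ ys, (∏ i, g (ys i)) * Qn ys := by
          simp_rw [Finset.sum_filter, Finset.mul_sum]
          rw [Finset.sum_comm]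
          refine Finset.sum_congr rfl fun ys _ => ?_
          rw [hg, ← sum_pi_prod (fun i x => P x * (if W x (ys i) ≠ 0 then 1 else 0)), Finset.sum_mul]
          refine Finset.sum_congr rfl fun xs _ => ?_
          rw [Finset.prod_mul_distrib, mul_assoc]
          simp only [prodDist]
          congr 1
          by_cases hz : prodCh n W xs ys ≠ 0
          · rw [if_pos hz]
            have hz' := Finset.prod_ne_zero_iff.1 hz
            rw [Finset.prod_eq_one, one_mul]
            intro i _
            rw [if_pos (hz' i (Finset.mem_univ _))]
          · rw [if_neg hz]
            push Not at hz
            obtain ⟨i, _, hi⟩ := Finset.prod_eq_zero_iff.1 hz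
            rw [Finset.prod_eq_zero (Finset.mem_univ i), zero_mul]
            simp [hi]
      _ ≤ ∑ ys, g y0 ^ n * Qn ys := by
          gcongr with ys
          calc _ ≤ ∏ i : Fin n, g y0 := Finset.prod_le_prod' fun i _ => hy0 (ys i)
            _ = _ := by simp
      _ = g y0 ^ n := by rw [← Finset.mul_sum, show ∑ ys, Qn ys = 1 from hQn, mul_one]
  rw [two_pow_nat_root hn] at h2
  have := (ENNReal.pow_le_pow_left_iff hn.ne').1 h2
  rwa [neg_div] at this

/-- `S = ∑_y max_x W(y|x)` bound from `D_∞`. -/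
lemma conv_top {n : ℕ} (hn : 0 < n) [Nonempty A] {W : A → B → ℝ≥0∞} (hW : IsChannel W)
    {P : A → ℝ≥0∞} (hP : IsDist P) {Qn : (Fin n → B) → ℝ≥0∞} (hQn : IsDist Qn) {t : ℝ}
    (h : ∀ xs, renyiD ⊤ (prodCh n W xs) Qn ≤ t) :
    renyiMI ⊤ (joint P W) ≤ ((t / n : ℝ) : EReal) := by
  have h' : ∀ xs ys, prodCh n W xs ys ≤ ENNReal.ofReal (2 ^ t) * Qn ys := fun xs =>
    (renyiD_top_iff (IsDist.ne_top (hW.prodCh n xs)) _ _).1 (h xs)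
  have hm : ∀ y, ∃ x0, ∀ x, W x y ≤ W x0 y := fun y => Finite.exists_max (fun x => W x y)
  choose m hm using hm
  set g : B → ℝ≥0∞ := fun y => W (m y) y with hg
  set S := ∑ y, g y with hS
  have hSt : S ≠ ⊤ := ENNReal.sum_ne_top.2 fun y _ => hW.ne_top _ _
  have hS0 : S ≠ 0 := by
    obtain ⟨x⟩ := ‹Nonempty A›
    have : 1 ≤ S := by rw [← hW x]; exact Finset.sum_le_sum fun y _ => hm y x
    exact (lt_of_lt_of_le one_pos this).ne'
  have h2 : S ^ n ≤ ENNReal.ofReal (2 ^ t) := by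
    calc S ^ n = ∏ i : Fin n, S := by simp
      _ = ∑ ys : Fin n → B, ∏ i, g (ys i) := (sum_pi_prod (fun _ => g)).symm
      _ ≤ ∑ ys : Fin n → B, ENNReal.ofReal (2 ^ t) * Qn ys :=
        Finset.sum_le_sum fun ys _ => h' (fun i => m (ys i)) ys
      _ = _ := by rw [← Finset.mul_sum, show ∑ ys, Qn ys = 1 from hQn, mul_one]
  rw [two_pow_nat_root hn] at h2
  have h3 := (ENNReal.pow_le_pow_left_iff hn.ne').1 h2
  refine renyiMI_le (fun y => S⁻¹ * g y) (by
    unfold IsDist; rw [← Finset.mul_sum]; exact ENNReal.inv_mul_cancel hS0 hSt) ?_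
  rw [renyiD_top_iff (IsDist.ne_top (IsDist.joint hW hP))]
  rintro ⟨x, y⟩
  rw [margX_joint hW]
  simp only [joint]
  rw [mul_left_comm]
  gcongr
  rw [← mul_assoc]
  calc W x y ≤ 1 * g y := by rw [one_mul]; exact hm y x
    _ = S * S⁻¹ * g y := by rw [ENNReal.mul_inv_cancel hS0 hSt]
    _ ≤ _ := by gcongr
end
end RST

namespace RST

section
variable {A B : Type*} [Fintype A] [Fintype B]

lemma sum_pi_prod_real {n : ℕ} (f : Fin n → B → ℝ) :
    ∑ k : Fin n → B, ∏ l, f l (k l) = ∏ l, ∑ y, f l y := by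
  rw [Finset.prod_univ_sum]
  simp

lemma sum_fin_succ {n : ℕ} (F : (Fin (n+1) → B) → ℝ) :
    ∑ ys, F ys = ∑ y, ∑ ys : Fin n → B, F (Fin.cons y ys) := by
  rw [← Equiv.sum_comp (Fin.consEquiv fun _ : Fin (n+1) => B), Fintype.sum_prod_type]
  rfl

lemma E_linear {n : ℕ} (v u : Fin n → B → ℝ) (hv : ∀ i, ∑ y, v i y = 1) :
    ∑ ys : Fin n → B, (∏ i, v i (ys i)) * ∑ i, u i (ys i) = ∑ i, ∑ y, v i y * u i y := by
  induction n with
  | zero => simp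
  | succ n ih =>
    rw [sum_fin_succ]
    simp only [Fin.prod_univ_succ, Fin.sum_univ_succ, Fin.cons_zero, Fin.cons_succ]
    have h1 := ih (fun i => v i.succ) (fun i => u i.succ) (fun i => hv i.succ)
    have h2 := sum_pi_prod_real (fun i : Fin n => v i.succ)
    simp only [hv, Finset.prod_const_one] at h2
    have : ∀ y, ∑ ys : Fin n → B, v 0 y * (∏ i, v i.succ (ys i)) * (u 0 y + ∑ i, u i.succ (ys i))
        = v 0 y * u 0 y + v 0 y * ∑ i : Fin n, ∑ y, v i.succ y * u i.succ y := by
      intro y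
      rw [← h1, Finset.mul_sum, ← mul_one (v 0 y * u 0 y), ← h2, Finset.mul_sum, ← Finset.sum_add_distrib]
      exact Finset.sum_congr rfl fun ys _ => by ring
    simp_rw [this]
    rw [Finset.sum_add_distrib, ← Finset.sum_mul, hv, one_mul]

lemma E_sq {n : ℕ} (v u : Fin n → B → ℝ) (hv : ∀ i, ∑ y, v i y = 1) (hu : ∀ i, ∑ y, v i y * u i y = 0) :
    ∑ ys : Fin n → B, (∏ i, v i (ys i)) * (∑ i, u i (ys i)) ^ 2 = ∑ i, ∑ y, v i y * u i y ^ 2 := by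
  induction n with
  | zero => simp
  | succ n ih =>
    rw [sum_fin_succ]
    simp only [Fin.prod_univ_succ, Fin.sum_univ_succ, Fin.cons_zero, Fin.cons_succ]
    have h1 := ih (fun i => v i.succ) (fun i => u i.succ) (fun i => hv i.succ) (fun i => hu i.succ)
    have h3 := E_linear (fun i : Fin n => v i.succ) (fun i => u i.succ) (fun i => hv i.succ)
    simp only [hu, Finset.sum_const_zero] at h3
    have h2 := sum_pi_prod_real (fun i : Fin n => v i.succ)
    simp only [hv, Finset.prod_const_one] at h2
    have : ∀ y, ∑ ys : Fin n → B, v 0 y * (∏ i, v i.succ (ys i)) * (u 0 y + ∑ i, u i.succ (ys i)) ^ 2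
        = v 0 y * u 0 y ^ 2 * 1 + 2 * v 0 y * u 0 y * 0 + v 0 y * ∑ i : Fin n, ∑ y, v i.succ y * u i.succ y ^ 2 := by
      intro y
      rw [← h1, ← h3, ← h2, Finset.mul_sum, Finset.mul_sum, Finset.mul_sum, ← Finset.sum_add_distrib,
        ← Finset.sum_add_distrib]
      exact Finset.sum_congr rfl fun ys _ => by ring
    simp_rw [this]
    simp only [mul_one, mul_zero, add_zero]
    rw [Finset.sum_add_distrib, ← Finset.sum_mul, hv, one_mul]

lemma log2_pos : 0 < Real.log 2 := Real.log_pos (by norm_num)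

lemma logb_ge {x : ℝ} (hx : 0 < x) : (1 - x⁻¹) / Real.log 2 ≤ Real.logb 2 x := by
  have h := Real.log_le_sub_one_of_pos (inv_pos.2 hx)
  rw [Real.log_inv] at h
  rw [Real.logb]
  have := log2_pos
  gcongr
  linarith

lemma dist_real {P : A → ℝ≥0∞} (h : IsDist P) : ∑ x, (P x).toReal = 1 := by
  rw [← ENNReal.toReal_sum (fun x _ => h.ne_top x), show ∑ x, P x = 1 from h]; simp

lemma gibbs {p q : A → ℝ} (hp : ∀ x, 0 ≤ p x) (hq : ∀ x, 0 ≤ q x) (hp1 : ∑ x, p x = 1) (hq1 : ∑ x, q x ≤ 1)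
    (hs : ∀ x, p x ≠ 0 → q x ≠ 0) : 0 ≤ ∑ x, p x * Real.logb 2 (p x / q x) := by
  have h : ∀ x, (p x - q x) / Real.log 2 ≤ p x * Real.logb 2 (p x / q x) := by
    intro x
    have l2 := log2_pos
    by_cases hx : p x = 0
    · rw [hx]; simp only [zero_sub, zero_mul]
      have := hq x
      rw [neg_div, neg_nonpos]; positivity
    have hpx := lt_of_le_of_ne (hp x) (Ne.symm hx)
    have hqx := lt_of_le_of_ne (hq x) (Ne.symm (hs x hx))
    have := mul_le_mul_of_nonneg_left (logb_ge (div_pos hpx hqx)) hpx.le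
    refine le_trans (le_of_eq ?_) this
    field_simp
  calc (0:ℝ) ≤ (1 - ∑ x, q x) / Real.log 2 := div_nonneg (by linarith) log2_pos.le
    _ = ∑ x, (p x - q x) / Real.log 2 := by rw [← Finset.sum_div, Finset.sum_sub_distrib, hp1]
    _ ≤ _ := Finset.sum_le_sum fun x _ => h x

lemma renyiD_nonneg {α : ℝ≥0∞} {P Q : A → ℝ≥0∞} (hP : IsDist P) (hQ : IsDist Q) {d : ℝ}
    (h : renyiD α P Q ≤ d) : 0 ≤ d := by
  rcases order_cases α with rfl | rfl | rfl | ⟨a, h0, h1, rfl⟩ | ⟨a, h1, rfl⟩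
  · rw [renyiD_zero_iff] at h
    have : ∑ x with P x ≠ 0, Q x ≤ 1 := by
      rw [← show ∑ x, Q x = 1 from hQ]
      exact Finset.sum_le_sum_of_subset (Finset.filter_subset _ _)
    have := h.trans this
    rw [← ENNReal.ofReal_one, ENNReal.ofReal_le_ofReal_iff zero_le_one] at this
    by_contra hd
    push Not at hd
    have h2 := Real.one_lt_rpow (x := 2) (z := -d) (by norm_num) (by linarith)
    linarith
  · rw [renyiD_one_iff hP.ne_top hQ.ne_top] at h
    refine le_trans ?_ h.2
    refine gibbs (fun x => ENNReal.toReal_nonneg) (fun x => ENNReal.toReal_nonneg) (dist_real hP) (dist_real hQ).le ?_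
    intro x hx
    have := h.1 x (by intro h0; simp [h0] at hx)
    exact (ENNReal.toReal_pos this (hQ.ne_top x)).ne'
  · rw [renyiD_top_iff hP.ne_top] at h
    have : ∑ x, P x ≤ ∑ x, ENNReal.ofReal (2 ^ d) * Q x := Finset.sum_le_sum fun x _ => h x
    rw [← Finset.mul_sum, show ∑ x, P x = 1 from hP, show ∑ x, Q x = 1 from hQ, mul_one,
      ← ENNReal.ofReal_one, ENNReal.ofReal_le_ofReal_iff (two_rpow_pos d).le] at this
    by_contra hd
    push Not at hd
    have h2 := Real.rpow_lt_one_of_one_lt_of_neg (x := 2) (by norm_num) hd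
    linarith
  · rw [renyiD_lt_one_iff h0 h1] at h
    have h2 := h.trans (holder_lt h0 h1 (fun x => P x ^ a) Q hQ)
    have e : ∀ x, (P x ^ a) ^ (1 / a) = P x := fun x => by
      rw [← ENNReal.rpow_mul, mul_one_div_cancel h0.ne', ENNReal.rpow_one]
    simp only [e, show ∑ x, P x = 1 from hP, ENNReal.one_rpow] at h2
    rw [← ENNReal.ofReal_one, ENNReal.ofReal_le_ofReal_iff zero_le_one] at h2
    by_contra hd
    push Not at hd
    have h3 := Real.one_lt_rpow (x := 2) (z := (a - 1) * d) (by norm_num) (by nlinarith)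
    linarith
  · have h0 : 0 < a := by linarith
    rw [renyiD_gt_one_iff h1] at h
    have h2 := (holder_gt h1 (fun x => P x ^ a) Q hQ).trans h
    have e : ∀ x, (P x ^ a) ^ (1 / a) = P x := fun x => by
      rw [← ENNReal.rpow_mul, mul_one_div_cancel h0.ne', ENNReal.rpow_one]
    simp only [e, show ∑ x, P x = 1 from hP, ENNReal.one_rpow] at h2
    rw [← ENNReal.ofReal_one, ENNReal.ofReal_le_ofReal_iff (two_rpow_pos _).le] at h2
    by_contra hd
    push Not at hd
    have h3 := Real.rpow_lt_one_of_one_lt_of_neg (x := 2) (z := (a - 1) * d) (by norm_num) (by nlinarith)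
    linarith

lemma joint_one_iff {W : A → B → ℝ≥0∞} (hW : IsChannel W) {P : A → ℝ≥0∞} (hP : IsDist P)
    {Q : B → ℝ≥0∞} (hQ : ∀ y, Q y ≠ ⊤) (d : ℝ) :
    renyiD 1 (joint P W) (fun p => margX (joint P W) p.1 * Q p.2) ≤ d ↔
      (∀ x y, P x ≠ 0 → W x y ≠ 0 → Q y ≠ 0) ∧
      ∑ x, (P x).toReal * ∑ y, (W x y).toReal * Real.logb 2 ((W x y).toReal / (Q y).toReal) ≤ d := by
  rw [renyiD_one_iff (IsDist.ne_top (IsDist.joint hW hP)) (by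
    intro p; rw [margX_joint hW]; exact ENNReal.mul_ne_top (hP.ne_top _) (hQ _))]
  refine and_congr ?_ ?_
  · simp only [Prod.forall, margX_joint hW, joint, mul_ne_zero_iff]
    constructor
    · intro h x y h1 h2; exact (h x y ⟨h1, h2⟩).2
    · rintro h x y ⟨h1, h2⟩; exact ⟨h1, h x y h1 h2⟩
  · rw [Fintype.sum_prod_type]
    have : ∀ x, ∑ y, (joint P W (x, y)).toReal * Real.logb 2 ((joint P W (x, y)).toReal / (margX (joint P W) (x, y).1 * Q (x, y).2).toReal)
      = (P x).toReal * ∑ y, (W x y).toReal * Real.logb 2 ((W x y).toReal / (Q y).toReal) := by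
      intro x
      rw [Finset.mul_sum]
      refine Finset.sum_congr rfl fun y _ => ?_
      rw [margX_joint hW]
      simp only [joint, ENNReal.toReal_mul]
      by_cases hx : (P x).toReal = 0
      · simp [hx]
      rw [mul_div_mul_left _ _ hx, mul_assoc]
    simp_rw [this]

lemma conv_one {n : ℕ} (hn : 0 < n) {W : A → B → ℝ≥0∞} (hW : IsChannel W)
    {P : A → ℝ≥0∞} (hP : IsDist P) {Qn : (Fin n → B) → ℝ≥0∞} (hQn : IsDist Qn) {t : ℝ}
    (h : ∀ xs, renyiD 1 (prodCh n W xs) Qn ≤ t) :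
    renyiMI 1 (joint P W) ≤ ((t / n : ℝ) : EReal) := by
  set PY : B → ℝ≥0∞ := fun y => ∑ x, P x * W x y with hPY
  have hPYd : IsDist PY := by
    unfold IsDist
    rw [hPY, Finset.sum_comm]
    simp_rw [← Finset.mul_sum, hW _, mul_one]
    exact hP
  refine renyiMI_le PY hPYd ?_
  rw [joint_one_iff hW hP hPYd.ne_top]
  constructor
  · intro x y hx hy h0
    rw [hPY] at h0
    have := (Finset.sum_eq_zero_iff.1 h0) x (Finset.mem_univ _)
    simp [hx, hy] at this
  set p : A → ℝ := fun x => (P x).toReal with hp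
  set w : A → B → ℝ := fun x y => (W x y).toReal with hw
  set q : B → ℝ := fun y => (PY y).toReal with hq
  set qn : (Fin n → B) → ℝ := fun ys => (Qn ys).toReal with hqn
  have hp0 : ∀ x, 0 ≤ p x := fun x => ENNReal.toReal_nonneg
  have hw0 : ∀ x y, 0 ≤ w x y := fun x y => ENNReal.toReal_nonneg
  have hq0 : ∀ y, 0 ≤ q y := fun y => ENNReal.toReal_nonneg
  have hqn0 : ∀ ys, 0 ≤ qn ys := fun y => ENNReal.toReal_nonneg
  have hp1 : ∑ x, p x = 1 := dist_real hP
  have hw1 : ∀ x, ∑ y, w x y = 1 := fun x => dist_real (hW x)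
  have hqn1 : ∑ ys, qn ys = 1 := dist_real hQn
  have hqe : ∀ y, q y = ∑ x, p x * w x y := by
    intro y
    simp only [hq, hPY, hp, hw]
    rw [ENNReal.toReal_sum (fun x _ => ENNReal.mul_ne_top (hP.ne_top x) (hW.ne_top x y))]
    simp
  have hx : ∀ xs : Fin n → A, (∀ ys : Fin n → B, ∏ i, w (xs i) (ys i) ≠ 0 → qn ys ≠ 0) ∧
      ∑ ys : Fin n → B, (∏ i, w (xs i) (ys i)) * Real.logb 2 ((∏ i, w (xs i) (ys i)) / qn ys) ≤ t := by
    intro xs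
    have := (renyiD_one_iff (IsDist.ne_top (hW.prodCh n xs)) hQn.ne_top t).1 (h xs)
    simp only [prodCh, ENNReal.toReal_prod] at this
    refine ⟨fun ys hys => ?_, this.2⟩
    refine (ENNReal.toReal_pos (this.1 ys ?_) (hQn.ne_top _)).ne'
    rw [Finset.prod_ne_zero_iff] at hys ⊢
    intro i hi h0
    exact hys i hi (by simp [hw, h0])
  rw [le_div_iff₀ (by exact_mod_cast hn)]
  have hpn1 : ∑ xs : Fin n → A, ∏ i, p (xs i) = 1 := by
    rw [sum_pi_prod_real (fun _ => p)]; simp [hp1]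
  have hpn0 : ∀ xs : Fin n → A, 0 ≤ ∏ i, p (xs i) := fun xs => Finset.prod_nonneg fun i _ => hp0 _
  have l2 := log2_pos
  have hpt : ∀ (xs : Fin n → A) (ys : Fin n → B), (∏ i, p (xs i)) * ((∏ i, w (xs i) (ys i)) * ∑ i, Real.logb 2 (w (xs i) (ys i) / q (ys i)))
      + (∏ i, p (xs i)) * ((∏ i, w (xs i) (ys i)) * ((1 - qn ys / ∏ i, q (ys i)) / Real.log 2)) ≤
      (∏ i, p (xs i)) * ((∏ i, w (xs i) (ys i)) * Real.logb 2 ((∏ i, w (xs i) (ys i)) / qn ys)) := by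
    intro xs ys
    rw [← mul_add, ← mul_add]
    by_cases hP0 : ∏ i, p (xs i) = 0
    · simp [hP0]
    by_cases hW0 : ∏ i, w (xs i) (ys i) = 0
    · simp [hW0]
    have hP1 := Finset.prod_ne_zero_iff.1 hP0
    have hW1 := Finset.prod_ne_zero_iff.1 hW0
    have hpp : ∀ i, 0 < p (xs i) := fun i => lt_of_le_of_ne (hp0 _) (Ne.symm (hP1 i (Finset.mem_univ _)))
    have hww : ∀ i, 0 < w (xs i) (ys i) := fun i => lt_of_le_of_ne (hw0 _ _) (Ne.symm (hW1 i (Finset.mem_univ _)))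
    have hqq : ∀ i, 0 < q (ys i) := fun i => by
      rw [hqe]
      exact Finset.sum_pos' (fun x _ => mul_nonneg (hp0 x) (hw0 _ _)) ⟨xs i, Finset.mem_univ _, mul_pos (hpp i) (hww i)⟩
    have hqnp : 0 < qn ys := lt_of_le_of_ne (hqn0 _) (Ne.symm ((hx xs).1 ys hW0))
    have hqp : 0 < ∏ i, q (ys i) := Finset.prod_pos fun i _ => hqq i
    have hwp : 0 < ∏ i, w (xs i) (ys i) := Finset.prod_pos fun i _ => hww i
    refine mul_le_mul_of_nonneg_left (mul_le_mul_of_nonneg_left ?_ hwp.le) (hpn0 xs)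
    rw [← Real.logb_prod _ _ (fun i _ => (div_pos (hww i) (hqq i)).ne'), Finset.prod_div_distrib]
    have e : (∏ i, w (xs i) (ys i)) / qn ys = (∏ i, w (xs i) (ys i)) / (∏ i, q (ys i)) * ((∏ i, q (ys i)) / qn ys) := by
      field_simp
    rw [e, Real.logb_mul (by positivity) (by positivity)]
    have := logb_ge (div_pos hqp hqnp)
    rw [inv_div] at this
    linarith
  have hsum := Finset.sum_le_sum fun xs (_ : xs ∈ Finset.univ) => Finset.sum_le_sum fun ys (_ : ys ∈ Finset.univ) => hpt xs ys
  simp_rw [Finset.sum_add_distrib, ← Finset.mul_sum] at hsum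
  have hR : ∑ xs : Fin n → A, (∏ i, p (xs i)) * ∑ ys, (∏ i, w (xs i) (ys i)) * Real.logb 2 ((∏ i, w (xs i) (ys i)) / qn ys) ≤ t := by
    calc _ ≤ ∑ xs : Fin n → A, (∏ i, p (xs i)) * t :=
          Finset.sum_le_sum fun xs _ => mul_le_mul_of_nonneg_left (hx xs).2 (hpn0 xs)
      _ = t := by rw [← Finset.sum_mul, hpn1, one_mul]
  have hL1 : ∑ xs : Fin n → A, (∏ i, p (xs i)) * ∑ ys : Fin n → B, (∏ i, w (xs i) (ys i)) * ∑ i, Real.logb 2 (w (xs i) (ys i) / q (ys i))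
      = (∑ x, p x * ∑ y, w x y * Real.logb 2 (w x y / q y)) * n := by
    have : ∀ xs : Fin n → A, ∑ ys : Fin n → B, (∏ i, w (xs i) (ys i)) * ∑ i, Real.logb 2 (w (xs i) (ys i) / q (ys i))
        = ∑ i, (∑ y, w (xs i) y * Real.logb 2 (w (xs i) y / q y)) := fun xs =>
      E_linear (fun i => w (xs i)) (fun i y => Real.logb 2 (w (xs i) y / q y)) (fun i => hw1 _)
    simp_rw [this]
    rw [E_linear (fun _ => p) (fun _ x => ∑ y, w x y * Real.logb 2 (w x y / q y)) (fun _ => hp1)]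
    simp [mul_comm]
  have hL2 : 0 ≤ ∑ xs : Fin n → A, (∏ i, p (xs i)) * ∑ ys : Fin n → B, (∏ i, w (xs i) (ys i)) * ((1 - qn ys / ∏ i, q (ys i)) / Real.log 2) := by
    simp_rw [Finset.mul_sum]
    rw [Finset.sum_comm]
    have : ∀ ys : Fin n → B, (∏ i, q (ys i) - qn ys) / Real.log 2 ≤ ∑ xs : Fin n → A, (∏ i, p (xs i)) * ((∏ i, w (xs i) (ys i)) * ((1 - qn ys / ∏ i, q (ys i)) / Real.log 2)) := by
      intro ys
      simp_rw [← mul_assoc, ← Finset.prod_mul_distrib]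
      rw [← Finset.sum_mul, sum_pi_prod_real (fun i x => p x * w x (ys i))]
      simp_rw [← hqe]
      rw [← mul_div_assoc]
      gcongr
      by_cases h0 : ∏ i, q (ys i) = 0
      · simp [h0, hqn0]
      · rw [mul_sub, mul_one, mul_div_cancel₀ _ h0]
    refine le_trans ?_ (Finset.sum_le_sum fun ys _ => this ys)
    rw [← Finset.sum_div, Finset.sum_sub_distrib, hqn1, sum_pi_prod_real (fun _ => q)]
    have : ∑ y, q y = 1 := dist_real hPYd
    simp [this]
  rw [hL1] at hsum
  linarith

lemma conv_all {α : ℝ≥0∞} {n : ℕ} (hn : 0 < n) [Nonempty A] [Nonempty B] {W : A → B → ℝ≥0∞} (hW : IsChannel W)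
    {Qn : (Fin n → B) → ℝ≥0∞} (hQn : IsDist Qn) {t : ℝ}
    (h : ∀ xs, renyiD α (prodCh n W xs) Qn ≤ t) :
    renyiCap α W ≤ ((t / n : ℝ) : EReal) := by
  refine iSup_le fun P => ?_
  rcases order_cases α with rfl | rfl | rfl | ⟨a, h0, h1, rfl⟩ | ⟨a, h1, rfl⟩
  · exact conv_zero hn hW P.2 hQn h
  · exact conv_one hn hW P.2 hQn h
  · exact conv_top hn hW P.2 hQn h
  · exact conv_lt hn h0 h1 hW P.2 hQn h
  · exact conv_gt hn h1 hW P.2 hQn h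
end
end RST

namespace RST
section
variable {A B : Type*} [Fintype A] [Fintype B]

lemma renyiD_self {α : ℝ≥0∞} {P : A → ℝ≥0∞} (hP : IsDist P) : renyiD α P P ≤ ((0:ℝ) : EReal) := by
  have key : ∀ a : ℝ, 0 < a → ∑ x, P x ^ a * P x ^ (1 - a) = 1 := by
    intro a ha
    rw [← hP]
    refine Finset.sum_congr rfl fun x _ => ?_
    by_cases h : P x = 0
    · simp [h, ENNReal.zero_rpow_of_pos ha]
    · rw [← ENNReal.rpow_add _ _ h (hP.ne_top x)]; simp
  rcases order_cases α with rfl | rfl | rfl | ⟨a, h0, h1, rfl⟩ | ⟨a, h1, rfl⟩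
  · rw [renyiD_zero_iff]
    rw [Finset.sum_filter_ne_zero, hP]; simp
  · rw [renyiD_one_iff hP.ne_top hP.ne_top]
    refine ⟨fun x h => h, ?_⟩
    refine (Finset.sum_eq_zero fun x _ => ?_).le
    by_cases h : (P x).toReal = 0
    · simp [h]
    · rw [div_self h]; simp
  · rw [renyiD_top_iff hP.ne_top]; simp
  · rw [renyiD_lt_one_iff h0 h1, key a h0]; simp
  · rw [renyiD_gt_one_iff h1, key a (by linarith)]; simp

lemma ereal_le_of_forall {x y : EReal} (h : ∀ z : ℝ, x ≤ z → y ≤ z) : y ≤ x :=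
  EReal.le_of_forall_lt_iff_le.1 fun z hz => h z hz.le

lemma renyiCap_real [Nonempty A] [Nonempty B] (α : ℝ≥0∞) {W : A → B → ℝ≥0∞} (hW : IsChannel W) :
    ∃ I : ℝ, 0 ≤ I ∧ renyiCap α W = I := by
  have hcard : (0:ℝ) < Fintype.card B := by exact_mod_cast Fintype.card_pos
  have hU : renyiCap α W ≤ (((0 + Real.logb 2 (Fintype.card B)) / (1:ℕ) : ℝ) : EReal) := by
    have hQ : IsDist (fun _ : Fin 1 → B => (Fintype.card B : ℝ≥0∞)⁻¹) := by
      unfold IsDist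
      simp
      rw [ENNReal.mul_inv_cancel] <;> simp
    refine conv_all one_pos hW hQ fun xs => ?_
    refine renyiD_scale (Q' := prodCh 1 W xs) (hW.prodCh 1 xs) (by simp) hcard (fun ys => ?_) (renyiD_self (hW.prodCh 1 xs))
    rw [ENNReal.ofReal_natCast, ENNReal.mul_inv_cancel (by simp) (by simp)]
    exact IsDist.le_one (hW.prodCh 1 xs) ys
  have hL : (0 : EReal) ≤ renyiCap α W := by
    have hP : IsDist (fun _ : A => (Fintype.card A : ℝ≥0∞)⁻¹) := by
      unfold IsDist
      simp
      rw [ENNReal.mul_inv_cancel] <;> simp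
    refine le_trans ?_ (le_iSup _ ⟨_, hP⟩)
    refine le_iInf fun Q => ?_
    refine ereal_le_of_forall fun z hz => ?_
    refine EReal.coe_nonneg.2 (renyiD_nonneg (IsDist.joint hW hP) ?_ hz)
    have hQ1 : ∑ y, Q.1 y = 1 := Q.2
    change ∑ p : A × B, margX (joint _ W) p.1 * Q.1 p.2 = 1
    simp_rw [margX_joint hW]
    rw [Fintype.sum_prod_type]
    refine Eq.trans (Finset.sum_congr rfl fun x _ => ?_) hP
    change ∑ y, (Fintype.card A : ℝ≥0∞)⁻¹ * Q.1 y = (Fintype.card A : ℝ≥0∞)⁻¹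
    rw [← Finset.mul_sum, hQ1, mul_one]
  refine ⟨(renyiCap α W).toReal, EReal.toReal_nonneg hL, ?_⟩
  rw [EReal.coe_toReal]
  · intro h; rw [h] at hU; simp at hU
  · intro h; rw [h] at hL; simp at hL

lemma sim_A {α : ℝ≥0∞} {n : ℕ} (hn : 0 < n) [Nonempty A] [Nonempty B] {W : A → B → ℝ≥0∞} (hW : IsChannel W)
    {c t : ℝ} {N : (Fin n → A) → (Fin n → B) → ℝ≥0∞} (hN : IsSimulation c N)
    (h : ∀ xs, renyiD α (prodCh n W xs) (N xs) ≤ t) :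
    renyiCap α W ≤ (((t + c) / n : ℝ) : EReal) ∧ 0 ≤ t := by
  obtain ⟨M, Q, hM1, hMc, hQ, hNd, hle⟩ := simulation_bound hN
  constructor
  · refine conv_all hn hW hQ fun xs => ?_
    refine (renyiD_scale (hW.prodCh n xs) hQ.ne_top (by linarith) (hle xs) (h xs)).trans ?_
    exact_mod_cast by linarith
  · inhabit A
    exact renyiD_nonneg (hW.prodCh n (fun _ => default)) (hNd _) (h _)

lemma sim_B {a b : ℝ} (ha : 0 < a) (hab : a ≤ b) (hb : b < 1) {n : ℕ} (hn : 0 < n) [Nonempty A] [Nonempty B]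
    {W : A → B → ℝ≥0∞} (hW : IsChannel W)
    {c t : ℝ} {N : (Fin n → A) → (Fin n → B) → ℝ≥0∞} (hN : IsSimulation c N)
    (h : ∀ xs, renyiD (ENNReal.ofReal a) (prodCh n W xs) (N xs) ≤ t) :
    renyiCap (ENNReal.ofReal b) W ≤ (((t / (a * (1 - b) / (b * (1 - a))) + c) / n : ℝ) : EReal) := by
  obtain ⟨M, Q, hM1, hMc, hQ, hNd, hle⟩ := simulation_bound hN
  refine conv_all hn hW hQ fun xs => ?_
  have hb0 : 0 < b := by linarith
  have ha1 : a < 1 := by linarith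
  rw [renyiD_lt_one_iff hb0 hb]
  have h1 := (renyiD_lt_one_iff ha ha1 _ _ _).1 (h xs)
  have he : 0 ≤ a / b - a := by
    rw [sub_nonneg, le_div_iff₀ hb0]; nlinarith
  have hab1 : a / b ≤ 1 := (div_le_one hb0).2 hab
  have hab0 : 0 < a / b := by positivity
  set S := ∑ ys, prodCh n W xs ys ^ b * Q ys ^ (1 - b) with hS
  have h2 : ∑ ys, prodCh n W xs ys ^ a * N xs ys ^ (1 - a) ≤
      ENNReal.ofReal M ^ (a / b - a) * ∑ ys, (prodCh n W xs ys ^ a * Q ys ^ (a / b - a)) * N xs ys ^ (1 - a / b) := by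
    rw [Finset.mul_sum]
    refine Finset.sum_le_sum fun ys _ => ?_
    have : N xs ys ^ (1 - a) = N xs ys ^ (a / b - a) * N xs ys ^ (1 - a / b) := by
      rw [← ENNReal.rpow_add_of_nonneg _ _ he (by linarith)]; congr 1; ring
    rw [this]
    calc _ ≤ prodCh n W xs ys ^ a * ((ENNReal.ofReal M * Q ys) ^ (a / b - a) * N xs ys ^ (1 - a / b)) := by
          gcongr
          exact hle xs ys
      _ = _ := by rw [ENNReal.mul_rpow_of_nonneg _ _ he]; ring
  have h3 : ∑ ys, (prodCh n W xs ys ^ a * Q ys ^ (a / b - a)) * N xs ys ^ (1 - a / b) ≤ S ^ (a / b) := by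
    have e : ∀ ys, (prodCh n W xs ys ^ a * Q ys ^ (a / b - a)) ^ (1 / (a / b)) = prodCh n W xs ys ^ b * Q ys ^ (1 - b) := by
      intro ys
      rw [ENNReal.mul_rpow_of_nonneg _ _ (by positivity), ← ENNReal.rpow_mul, ← ENNReal.rpow_mul]
      congr 2 <;> field_simp
    rcases hab1.lt_or_eq with h' | h'
    · have := holder_lt hab0 h' (fun ys => prodCh n W xs ys ^ a * Q ys ^ (a / b - a)) (N xs) (hNd xs)
      simp_rw [e] at this
      exact this
    · have e2 : a = b := by field_simp at h'; exact h'
      rw [h', hS, e2]; simp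
  have h4 := h1.trans (h2.trans (mul_le_mul_right h3 _))
  have h5 : ENNReal.ofReal M ≤ ENNReal.ofReal (2 ^ c) := by
    apply ENNReal.ofReal_le_ofReal
    rw [Real.logb_le_iff_le_rpow (by norm_num) (by linarith)] at hMc
    exact hMc
  have h6 := h4.trans (mul_le_mul_left (ENNReal.rpow_le_rpow h5 he) _)
  have h7 := ENNReal.rpow_le_rpow h6 (z := b / a) (by positivity)
  rw [ENNReal.mul_rpow_of_nonneg _ _ (by positivity), ← ENNReal.rpow_mul, ← ENNReal.rpow_mul,
    ENNReal.ofReal_rpow_of_pos (two_rpow_pos _), ENNReal.ofReal_rpow_of_pos (two_rpow_pos _),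
    ← Real.rpow_mul (by norm_num), ← Real.rpow_mul (by norm_num)] at h7
  have e1 : a / b * (b / a) = 1 := by field_simp
  rw [e1, ENNReal.rpow_one] at h7
  have h8 := mul_le_mul_right h7 (ENNReal.ofReal (2 ^ (-(c * ((a / b - a) * (b / a))))))
  rw [← mul_assoc (ENNReal.ofReal _), ← ENNReal.ofReal_mul (two_rpow_pos _).le, ← ENNReal.ofReal_mul (two_rpow_pos _).le,
    ← Real.rpow_add two_pos, ← Real.rpow_add two_pos, neg_add_cancel, Real.rpow_zero, ENNReal.ofReal_one, one_mul] at h8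
  refine le_trans (le_of_eq ?_) h8
  congr 2
  have : 1 - a ≠ 0 := by linarith
  have : 1 - b ≠ 0 := by linarith
  field_simp
  ring

lemma le_inv_mul_simD {α : ℝ≥0∞} {n : ℕ} (hn : 0 < n) {W : A → B → ℝ≥0∞} {c : ℝ} {K : ℝ}
    (h : ∀ N t, IsSimulation c N → (∀ xs, renyiD α (prodCh n W xs) (N xs) ≤ (t:ℝ)) → K ≤ t / n) :
    (K : EReal) ≤ (((1 : ℝ) / n : ℝ) : EReal) * simD α (prodCh n W) c := by
  have hn' : (0:ℝ) < n := by exact_mod_cast hn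
  refine ereal_le_of_forall fun z hz => ?_
  rw [one_div, ereal_pos_mul_le_iff hn'] at hz
  refine EReal.le_of_forall_lt_iff_le.1 fun w hw => ?_
  have : simD α (prodCh n W) c < ((n * w : ℝ) : EReal) := by
    refine lt_of_le_of_lt hz ?_
    have : z < w := by exact_mod_cast hw
    exact_mod_cast by nlinarith
  obtain ⟨N, hN⟩ := iInf_lt_iff.1 this
  have := h N.1 (n * w) N.2 (fun xs => (le_iSup (fun x => renyiD α (prodCh n W x) (N.1 x)) xs).trans hN.le)
  rw [mul_div_cancel_left₀ _ hn'.ne'] at this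
  exact_mod_cast this

lemma limsup_conv {α : ℝ≥0∞} {W : A → B → ℝ≥0∞} {r s I : ℝ} (hs : 0 ≤ s)
    {c : ℕ → ℝ} (hc : RateOK r c)
    (h : ∀ n : ℕ, 0 < n → ((s * (I - c n / n) : ℝ) : EReal) ≤ (((1 : ℝ) / n : ℝ) : EReal) * simD α (prodCh n W) (c n)) :
    ((s * (I - r) : ℝ) : EReal) ≤ limsup (fun n : ℕ => (((1 : ℝ) / n : ℝ) : EReal) * simD α (prodCh n W) (c n)) atTop := by
  refine EReal.ge_of_forall_gt_iff_ge.1 fun z hz => ?_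
  have hz' : z < s * (I - r) := by exact_mod_cast hz
  obtain ⟨ε, hε, hε2⟩ : ∃ ε > 0, z ≤ s * (I - r - ε) := by
    refine ⟨(s * (I - r) - z) / (s + 1), div_pos (by linarith) (by linarith), ?_⟩
    have : s * ((s * (I - r) - z) / (s + 1)) ≤ s * (I - r) - z := by
      rw [← mul_div_assoc, div_le_iff₀ (by linarith)]; nlinarith
    linarith [mul_sub s (I - r) ((s * (I - r) - z) / (s + 1))]
  have hev : ∀ᶠ n : ℕ in atTop, ((c n / n : ℝ) : EReal) < ((r + ε : ℝ) : EReal) := by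
    refine eventually_lt_of_limsup_lt (lt_of_le_of_lt hc.2 ?_)
    exact_mod_cast by linarith
  have : ∀ᶠ n : ℕ in atTop, (z : EReal) ≤ (((1 : ℝ) / n : ℝ) : EReal) * simD α (prodCh n W) (c n) := by
    filter_upwards [hev, eventually_gt_atTop 0] with n h1 h2
    refine le_trans ?_ (h n h2)
    have h1' : c n / n < r + ε := by exact_mod_cast h1
    have : z ≤ s * (I - c n / n) := hε2.trans (mul_le_mul_of_nonneg_left (by linarith) hs)
    exact_mod_cast this
  calc (z : EReal) = limsup (fun _ : ℕ => (z : EReal)) atTop := by simp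
    _ ≤ _ := limsup_le_limsup this

lemma Esc_ge_A [Nonempty A] [Nonempty B] (α : ℝ≥0∞) {W : A → B → ℝ≥0∞} (hW : IsChannel W) (r : ℝ) :
    max (renyiCap α W - (r : EReal)) 0 ≤ Esc α W r := by
  obtain ⟨I, hI0, hI⟩ := renyiCap_real α hW
  rw [hI]
  refine le_iInf fun c => max_le ?_ ?_
  · have := limsup_conv (α := α) (W := W) (s := 1) (I := I) zero_le_one c.2 fun n hn => le_inv_mul_simD hn fun N t hN h => by
      have := (sim_A hn hW hN h).1
      rw [hI, EReal.coe_le_coe_iff, add_div] at this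
      linarith
    simpa using this
  · have := limsup_conv (α := α) (W := W) (s := 0) (I := I) le_rfl c.2 fun n hn => le_inv_mul_simD hn fun N t hN h => by
      have := (sim_A hn hW hN h).2
      simp; positivity
    simpa using this

lemma Esc_ge_B [Nonempty A] [Nonempty B] {a b : ℝ} (ha : 0 < a) (hab : a ≤ b) (hb : b ≤ 1) (ha1 : a < 1)
    {W : A → B → ℝ≥0∞} (hW : IsChannel W) (r : ℝ) :
    (((a * (1 - b)) / (b * (1 - a)) : ℝ) : EReal) * (renyiCap (ENNReal.ofReal b) W - (r : EReal))
      ≤ Esc (ENNReal.ofReal a) W r := by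
  obtain ⟨I, hI0, hI⟩ := renyiCap_real (ENNReal.ofReal b) hW
  rw [hI]
  rcases hb.lt_or_eq with hb | rfl
  · refine le_iInf fun c => ?_
    have hs : 0 < (a * (1 - b)) / (b * (1 - a)) := by
      have : 0 < 1 - b := by linarith
      have : 0 < 1 - a := by linarith
      have : 0 < b := by linarith
      positivity
    have := limsup_conv (α := ENNReal.ofReal a) (W := W) (s := (a * (1 - b)) / (b * (1 - a))) (I := I) hs.le c.2 fun n hn => le_inv_mul_simD hn fun N t hN h => by
      have := (sim_B ha hab hb hn hW hN h)
      rw [hI, EReal.coe_le_coe_iff, add_div] at this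
      rw [← sub_le_iff_le_add] at this
      calc _ ≤ (a * (1 - b)) / (b * (1 - a)) * (t / ((a * (1 - b)) / (b * (1 - a))) / n) := mul_le_mul_of_nonneg_left this hs.le
        _ = _ := by rw [← mul_div_assoc, mul_div_cancel₀ _ hs.ne']
    exact_mod_cast this
  · refine le_trans ?_ ((le_max_right _ _).trans (Esc_ge_A (ENNReal.ofReal a) hW r))
    simp
end
end RST

namespace RST
section

lemma minimax {ι E : Type*} [Fintype ι] [Nonempty ι] [AddCommGroup E] [Module ℝ E] {K : Set E}
    {f : ι → E → ℝ} (hf : ∀ i, ConvexOn ℝ K (f i)) {c : ℝ}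
    (h : ∀ p : ι → ℝ, (∀ i, 0 ≤ p i) → ∑ i, p i = 1 → ∃ v ∈ K, ∑ i, p i * f i v < c) :
    ∃ v ∈ K, ∀ i, f i v < c := by
  have hKc : Convex ℝ K := (hf (Classical.arbitrary ι)).1
  by_contra hcon
  set C : Set (ι → ℝ) := {z | ∃ v ∈ K, ∀ i, f i v < z i} with hC
  have hCo : IsOpen C := by
    have : C = ⋃ v ∈ K, {z : ι → ℝ | ∀ i, f i v < z i} := by ext z; simp [hC]
    rw [this]
    refine isOpen_biUnion fun v _ => ?_
    simp_rw [Set.ofPred_forall]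
    exact isOpen_iInter_of_finite fun i => isOpen_lt continuous_const (continuous_apply i)
  have hCc : Convex ℝ C := by
    rintro z ⟨v, hv, hz⟩ z' ⟨v', hv', hz'⟩ a b ha hb hab
    refine ⟨a • v + b • v', hKc hv hv' ha hb hab, fun i => ?_⟩
    refine lt_of_le_of_lt ((hf i).2 hv hv' ha hb hab) ?_
    simp only [smul_eq_mul, Pi.add_apply, Pi.smul_apply]
    rcases ha.eq_or_lt with rfl | ha'
    · have : b = 1 := by linarith
      subst this; simpa using hz' i
    · have h1 := mul_lt_mul_of_pos_left (hz i) ha'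
      have h2 := mul_le_mul_of_nonneg_left (hz' i).le hb
      linarith
  have hcC : (fun _ => c) ∉ C := fun ⟨v, hv, hh⟩ => hcon ⟨v, hv, hh⟩
  obtain ⟨φ, hφ⟩ := geometric_hahn_banach_open_point hCc hCo hcC
  set l : ι → ℝ := fun i => φ (Pi.single i 1) with hl
  have hφl : ∀ z, φ z = ∑ i, z i * l i := by
    intro z
    conv_lhs => rw [pi_eq_sum_univ' z]
    rw [map_sum]
    refine Finset.sum_congr rfl fun i _ => ?_
    rw [map_smul, smul_eq_mul]
  obtain ⟨v0, hv0, -⟩ := h (fun _ => (Fintype.card ι : ℝ)⁻¹) (fun _ => by positivity) (by simp)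
  have hz0 : (fun i => f i v0 + 1) ∈ C := ⟨v0, hv0, fun i => by simp⟩
  have hl0 : ∀ i, l i ≤ 0 := by
    intro i
    by_contra hi
    push Not at hi
    set D := φ (fun _ => c) - φ (fun i => f i v0 + 1) with hD
    have hD0 : 0 < D := sub_pos.2 (hφ _ hz0)
    have hm : (fun i => f i v0 + 1) + (D / l i) • Pi.single (M := fun _ => ℝ) i 1 ∈ C := by
      refine ⟨v0, hv0, fun j => ?_⟩
      have : 0 ≤ (D / l i) * (Pi.single (M := fun _ => ℝ) i 1 j) := by
        refine mul_nonneg (by positivity) ?_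
        by_cases hj : j = i
        · subst hj; simp
        · simp [hj]
      simp only [Pi.add_apply, Pi.smul_apply, smul_eq_mul]
      linarith
    have := hφ _ hm
    rw [map_add, map_smul, smul_eq_mul] at this
    change _ + D / l i * l i < _ at this
    rw [div_mul_cancel₀ _ hi.ne'] at this
    linarith
  set S := ∑ i, - l i with hS
  have hSn : 0 ≤ S := Finset.sum_nonneg fun i _ => by linarith [hl0 i]
  have hSp : 0 < S := by
    rcases hSn.eq_or_lt with h0 | h0
    · exfalso
      have h1 : ∀ i, l i = 0 := by
        intro i
        have := (Finset.sum_eq_zero_iff_of_nonneg (fun i _ => by linarith [hl0 i])).1 h0.symm i (Finset.mem_univ _)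
        linarith
      have := hφ _ hz0
      rw [hφl, hφl] at this
      simp [h1] at this
    · exact h0
  obtain ⟨v, hv, hlt⟩ := h (fun i => - l i / S) (fun i => div_nonneg (by linarith [hl0 i]) hSn)
    (by rw [← Finset.sum_div]; exact div_self hSp.ne')
  set η := c - ∑ i, - l i / S * f i v with hη
  have := hφ (fun i => f i v + η) ⟨v, hv, fun i => by linarith⟩
  rw [hφl, hφl, ← Finset.mul_sum] at this
  have e1 : ∑ i, (f i v + η) * l i = ∑ i, f i v * l i + η * ∑ i, l i := by
    rw [Finset.mul_sum, ← Finset.sum_add_distrib]; exact Finset.sum_congr rfl fun i _ => by ring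
  have e2 : ∑ i, l i = - S := by rw [hS, Finset.sum_neg_distrib]; ring
  have e3 : ∑ i, - l i / S * f i v = - (∑ i, f i v * l i) / S := by
    rw [← Finset.sum_neg_distrib, Finset.sum_div]; exact Finset.sum_congr rfl fun i _ => by ring
  rw [e1, e2, hη, e3] at this
  field_simp at this
  linarith

/-- joint convexity of `v log (v/q)` -/
lemma kl_term_convex {v1 v2 q1 q2 a b : ℝ} (hv1 : 0 ≤ v1) (hv2 : 0 ≤ v2) (hq1 : 0 ≤ q1) (hq2 : 0 ≤ q2)
    (h1 : q1 = 0 → v1 = 0) (h2 : q2 = 0 → v2 = 0) (ha : 0 ≤ a) (hb : 0 ≤ b) (hab : a + b = 1) :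
    (a * v1 + b * v2) * Real.logb 2 ((a * v1 + b * v2) / (a * q1 + b * q2)) ≤
      a * (v1 * Real.logb 2 (v1 / q1)) + b * (v2 * Real.logb 2 (v2 / q2)) := by
  rcases ha.eq_or_lt with rfl | ha'
  · have : b = 1 := by linarith
    subst this; simp
  rcases hb.eq_or_lt with rfl | hb'
  · have : a = 1 := by linarith
    subst this; simp
  set v := a * v1 + b * v2 with hv
  set q := a * q1 + b * q2 with hq
  have hvn : 0 ≤ v := by positivity
  rcases hvn.eq_or_lt with h0 | h0
  · have e1 : v1 = 0 := by nlinarith [mul_nonneg ha hv1, mul_nonneg hb hv2]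
    have e2 : v2 = 0 := by nlinarith [mul_nonneg ha hv1, mul_nonneg hb hv2]
    rw [← h0]; simp [e1, e2]
  have hqn : 0 ≤ q := by positivity
  have hqp : 0 < q := by
    rcases hqn.eq_or_lt with hq0 | hq0
    · have e1 : q1 = 0 := by nlinarith [mul_nonneg ha hq1, mul_nonneg hb hq2]
      have e2 : q2 = 0 := by nlinarith [mul_nonneg ha hq1, mul_nonneg hb hq2]
      rw [hv, h1 e1, h2 e2] at h0; simp at h0
    · exact hq0
  have key : ∀ u p : ℝ, 0 ≤ u → 0 ≤ p → (p = 0 → u = 0) →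
      u * Real.logb 2 (v / q) + (u - p * (v / q)) / Real.log 2 ≤ u * Real.logb 2 (u / p) := by
    intro u p hu hp hup
    have l2 := log2_pos
    rcases hu.eq_or_lt with rfl | hu'
    · have : 0 ≤ p * (v / q) / Real.log 2 := by positivity
      have e : (0 - p * (v / q)) / Real.log 2 = - (p * (v / q) / Real.log 2) := by ring
      simp only [zero_mul, zero_add, e]; linarith
    have hp' : 0 < p := lt_of_le_of_ne hp (fun h => hu'.ne' (hup h.symm))
    have e : u / p = v / q * ((u / p) / (v / q)) := by field_simp
    rw [e, Real.logb_mul (by positivity) (by positivity)]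
    have := logb_ge (x := (u / p) / (v / q)) (by positivity)
    have h3 := mul_le_mul_of_nonneg_left this hu
    have e2 : u * ((1 - (u / p / (v / q))⁻¹) / Real.log 2) = (u - p * (v / q)) / Real.log 2 := by
      field_simp
    rw [e2] at h3
    linarith
  have k1 := mul_le_mul_of_nonneg_left (key v1 q1 hv1 hq1 h1) ha
  have k2 := mul_le_mul_of_nonneg_left (key v2 q2 hv2 hq2 h2) hb
  have e : a * ((v1 - q1 * (v / q)) / Real.log 2) + b * ((v2 - q2 * (v / q)) / Real.log 2) = 0 := by
    have : a * ((v1 - q1 * (v / q)) / Real.log 2) + b * ((v2 - q2 * (v / q)) / Real.log 2) = (v - q * (v / q)) / Real.log 2 := by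
      rw [hv, hq]; ring
    rw [this, mul_div_cancel₀ _ hqp.ne']; simp
  have e2 : v * Real.logb 2 (v / q) = a * (v1 * Real.logb 2 (v / q)) + b * (v2 * Real.logb 2 (v / q)) := by
    rw [hv]; ring
  rw [e2]
  linarith
end
end RST

namespace RST
section
variable {A B : Type*} [Fintype A] [Fintype B]

lemma convexOn_rpow_negative {p : ℝ} (hp : p < 0) : ConvexOn ℝ (Set.Ioi 0) fun x : ℝ => x ^ p := by
  refine ⟨convex_Ioi 0, ?_⟩
  intro x hx y hy a b ha hb hab
  have hx' : 0 < x := hx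
  have hy' : 0 < y := hy
  have hz : 0 < a • x + b • y := (convex_Ioi (0:ℝ)) hx hy ha hb hab
  have h1 := strictConcaveOn_log_Ioi.concaveOn.2 hx hy ha hb hab
  have h2 := convexOn_exp.2 (Set.mem_univ (p * Real.log x)) (Set.mem_univ (p * Real.log y)) ha hb hab
  simp only [smul_eq_mul] at *
  rw [Real.rpow_def_of_pos hz, Real.rpow_def_of_pos hx', Real.rpow_def_of_pos hy', mul_comm (Real.log x), mul_comm (Real.log y)]
  refine le_trans (Real.exp_le_exp.2 ?_) h2
  nlinarith

/-- Distributions bounded below by `δ`. -/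
def Kset (B : Type*) [Fintype B] (δ : ℝ) : Set (B → ℝ) := {q | (∀ y, δ ≤ q y) ∧ ∑ y, q y = 1}

lemma Kset_convex (δ : ℝ) : Convex ℝ (Kset B δ) := by
  rintro q ⟨h1, h2⟩ q' ⟨h1', h2'⟩ a b ha hb hab
  refine ⟨fun y => ?_, ?_⟩
  · simp only [Pi.add_apply, Pi.smul_apply, smul_eq_mul]
    nlinarith [mul_le_mul_of_nonneg_left (h1 y) ha, mul_le_mul_of_nonneg_left (h1' y) hb, congrArg (· * δ) hab]
  · simp only [Pi.add_apply, Pi.smul_apply, smul_eq_mul]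
    rw [Finset.sum_add_distrib, ← Finset.mul_sum, ← Finset.mul_sum, h2, h2']; linarith

/-- The distribution in `ℝ≥0∞` associated with a real vector. -/
def eD (q : B → ℝ) : B → ℝ≥0∞ := fun y => ENNReal.ofReal (q y)

lemma eD_dist {q : B → ℝ} (h0 : ∀ y, 0 ≤ q y) (h1 : ∑ y, q y = 1) : IsDist (eD q) := by
  unfold IsDist eD
  rw [← ENNReal.ofReal_sum_of_nonneg fun y _ => h0 y, h1, ENNReal.ofReal_one]

lemma eD_ne_top (q : B → ℝ) (y : B) : eD q y ≠ ⊤ := ENNReal.ofReal_ne_top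

lemma convexOn_sum_proj {K : Set (B → ℝ)} {s : Set ℝ} (hK : Convex ℝ K) (hs : ∀ q ∈ K, ∀ y, q y ∈ s) {g : ℝ → ℝ} (hg : ConvexOn ℝ s g)
    {w : B → ℝ} (hw : ∀ y, 0 ≤ w y) : ConvexOn ℝ K fun q => ∑ y, w y * g (q y) := by
  refine ⟨hK, fun q hq q' hq' a b ha hb hab => ?_⟩
  simp only [smul_eq_mul, Finset.mul_sum, ← Finset.sum_add_distrib]
  refine Finset.sum_le_sum fun y _ => ?_
  have := hg.2 (hs q hq y) (hs q' hq' y) ha hb hab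
  have := mul_le_mul_of_nonneg_left this (hw y)
  simp only [smul_eq_mul, Pi.add_apply, Pi.smul_apply] at *
  linarith

lemma cap_point {α : ℝ≥0∞} {W : A → B → ℝ≥0∞} (hW : IsChannel W) {d δ : ℝ} (hd : renyiCap α W < d)
    (hδ : 0 < δ) (hδ1 : δ * Fintype.card B < 1) {P : A → ℝ≥0∞} (hP : IsDist P) :
    ∃ q ∈ Kset B δ, renyiD α (joint P W) (fun p => margX (joint P W) p.1 * eD q p.2) ≤
      ((d + Real.logb 2 (1 - δ * Fintype.card B)⁻¹ : ℝ) : EReal) := by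
  have h1 : renyiMI α (joint P W) < d := lt_of_le_of_lt (le_iSup (fun P : {P : A → ℝ≥0∞ // IsDist P} => renyiMI α (joint P.1 W)) ⟨P, hP⟩) hd
  obtain ⟨Q, hQ⟩ := iInf_lt_iff.1 h1
  have hc : 0 < 1 - δ * Fintype.card B := by linarith
  have hQr := dist_real Q.2
  refine ⟨fun y => (1 - δ * Fintype.card B) * (Q.1 y).toReal + δ, ⟨fun y => ?_, ?_⟩, ?_⟩
  · have : 0 ≤ (1 - δ * Fintype.card B) * (Q.1 y).toReal := by positivity
    linarith
  · rw [Finset.sum_add_distrib, ← Finset.mul_sum, hQr]; simp; ring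
  · refine renyiD_scale (IsDist.joint hW hP) ?_ (inv_pos.2 hc) ?_ hQ.le
    · intro p
      rw [margX_joint hW]
      exact ENNReal.mul_ne_top (hP.ne_top _) (eD_ne_top _ _)
    · intro p
      rw [mul_left_comm]
      refine mul_le_mul_right ?_ _
      unfold eD
      rw [← ENNReal.ofReal_mul (inv_pos.2 hc).le]
      conv_lhs => rw [← ENNReal.ofReal_toReal (Q.2.ne_top p.2)]
      refine ENNReal.ofReal_le_ofReal ?_
      rw [mul_add, ← mul_assoc, inv_mul_cancel₀ hc.ne', one_mul]
      have : 0 ≤ (1 - δ * Fintype.card B)⁻¹ * δ := by positivity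
      linarith

lemma row_sum {a : ℝ} (ha : 0 < a) {w : B → ℝ≥0∞} (hw : ∀ y, w y ≠ ⊤) {q : B → ℝ} (hq : ∀ y, 0 < q y) :
    ∑ y, w y ^ a * eD q y ^ (1 - a) = ENNReal.ofReal (∑ y, (w y).toReal ^ a * q y ^ (1 - a)) := by
  rw [ENNReal.ofReal_sum_of_nonneg (fun y _ => by have := hq y; positivity)]
  refine Finset.sum_congr rfl fun y _ => ?_
  rw [ENNReal.ofReal_mul (by positivity), ← ENNReal.ofReal_rpow_of_nonneg ENNReal.toReal_nonneg ha.le,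
    ENNReal.ofReal_toReal (hw y), ← ENNReal.ofReal_rpow_of_pos (hq y)]
  rfl

lemma avg_row_sum {a : ℝ} (ha : 0 < a) {W : A → B → ℝ≥0∞} (hW : IsChannel W) {p : A → ℝ} (hp : ∀ x, 0 ≤ p x)
    (hp1 : ∑ x, p x = 1) {q : B → ℝ} (hq : ∀ y, 0 < q y) :
    ∑ z, joint (eD p) W z ^ a * (margX (joint (eD p) W) z.1 * eD q z.2) ^ (1 - a) =
      ENNReal.ofReal (∑ x, p x * ∑ y, (W x y).toReal ^ a * q y ^ (1 - a)) := by
  have hq0 : ∀ x, 0 ≤ ∑ y, (W x y).toReal ^ a * q y ^ (1 - a) :=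
    fun x => Finset.sum_nonneg fun y _ => by have := hq y; positivity
  rw [joint_sum ha hW (eD_dist hp hp1) (eD_ne_top q), ENNReal.ofReal_sum_of_nonneg (fun x _ => mul_nonneg (hp x) (hq0 x))]
  refine Finset.sum_congr rfl fun x _ => ?_
  rw [row_sum ha (hW.ne_top x) hq, ENNReal.ofReal_mul (hp x)]; rfl

lemma cap_ach [Nonempty A] {α : ℝ≥0∞} (hα : α ≠ ⊤) {W : A → B → ℝ≥0∞} (hW : IsChannel W) {d d' δ : ℝ}
    (hd : renyiCap α W < d)
    (hδ : 0 < δ) (hδ1 : δ * Fintype.card B < 1) (hd' : d + Real.logb 2 (1 - δ * Fintype.card B)⁻¹ < d') :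
    ∃ q ∈ Kset B δ, ∀ x, renyiD α (W x) (eD q) ≤ (d' : EReal) := by
  have hpos : ∀ q ∈ Kset B δ, ∀ y, 0 < q y := fun q hq y => lt_of_lt_of_le hδ (hq.1 y)
  set d0 := d + Real.logb 2 (1 - δ * Fintype.card B)⁻¹ with hd0
  rcases order_cases α with rfl | rfl | rfl | ⟨a, h0, h1, rfl⟩ | ⟨a, h1, rfl⟩
  · skip
    refine Exists.elim (minimax (K := Kset B δ) (f := fun x q => ∑ y ∈ Finset.univ.filter (fun y => W x y ≠ 0), - q y) (c := - 2 ^ (-d'))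
      (fun x => ⟨Kset_convex δ, fun q _ q' _ a b _ _ _ => by
        simp only [smul_eq_mul, Finset.mul_sum, ← Finset.sum_add_distrib, Pi.add_apply, Pi.smul_apply]
        exact Finset.sum_le_sum fun y _ => by ring_nf; rfl⟩) ?_) (fun q hqh => ?_)
    rotate_left
    · obtain ⟨hq, h⟩ := hqh
      refine ⟨q, hq, fun x => ?_⟩
      rw [renyiD_zero_iff]
      unfold eD
      rw [← ENNReal.ofReal_sum_of_nonneg fun y _ => (hpos q hq y).le]
      refine ENNReal.ofReal_le_ofReal ?_
      have := h x
      rw [Finset.sum_neg_distrib] at this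
      linarith
    · intro p hp hp1
      obtain ⟨q, hq, h⟩ := cap_point hW hd hδ hδ1 (eD_dist hp hp1)
      refine ⟨q, hq, ?_⟩
      rw [renyiD_zero_iff] at h
      have e : ∑ x ∈ Finset.univ.filter fun x => joint (eD p) W x ≠ 0, margX (joint (eD p) W) x.1 * eD q x.2
          = ENNReal.ofReal (∑ x, p x * ∑ y ∈ Finset.univ.filter (fun y => W x y ≠ 0), q y) := by
        rw [Finset.sum_filter, Fintype.sum_prod_type,
          ENNReal.ofReal_sum_of_nonneg (fun x _ => mul_nonneg (hp x) (Finset.sum_nonneg fun y _ => (hpos q hq y).le))]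
        refine Finset.sum_congr rfl fun x _ => ?_
        rw [ENNReal.ofReal_mul (hp x), ENNReal.ofReal_sum_of_nonneg fun y _ => (hpos q hq y).le, Finset.sum_filter, Finset.mul_sum]
        refine Finset.sum_congr rfl fun y _ => ?_
        rw [margX_joint hW]
        by_cases hx : eD p x = 0
        · simp [hx, show ENNReal.ofReal (p x) = 0 from hx]
        · by_cases hy : W x y = 0
          · simp [joint, hy]
          · simp [joint, hy, hx]; rfl
      rw [e] at h
      have h2 := (ENNReal.ofReal_le_ofReal_iff' ).1 h
      have h3 : (2:ℝ) ^ (-d0) ≤ ∑ x, p x * ∑ y ∈ Finset.univ.filter (fun y => W x y ≠ 0), q y :=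
        h2.resolve_right (not_le.2 (two_rpow_pos _))
      have h4 : (2:ℝ) ^ (-d') < 2 ^ (-d0) := Real.rpow_lt_rpow_of_exponent_lt (by norm_num) (by linarith)
      simp_rw [Finset.sum_neg_distrib, mul_neg]
      rw [Finset.sum_neg_distrib]
      linarith
  · skip
    refine Exists.elim (minimax (K := Kset B δ) (f := fun x q => ∑ y, (W x y).toReal * Real.logb 2 ((W x y).toReal / q y)) (c := d')
      (fun x => ⟨Kset_convex δ, fun q hq q' hq' a b ha hb hab => by
        simp only [smul_eq_mul, Finset.mul_sum, ← Finset.sum_add_distrib, Pi.add_apply, Pi.smul_apply]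
        refine Finset.sum_le_sum fun y _ => ?_
        have := kl_term_convex (v1 := (W x y).toReal) (v2 := (W x y).toReal) (q1 := q y) (q2 := q' y) (a := a) (b := b)
          ENNReal.toReal_nonneg ENNReal.toReal_nonneg (hpos q hq y).le (hpos q' hq' y).le
          (fun h => absurd h (hpos q hq y).ne') (fun h => absurd h (hpos q' hq' y).ne') ha hb hab
        rwa [← add_mul, hab, one_mul] at this⟩) ?_) (fun q hqh => ?_)
    rotate_left
    · obtain ⟨hq, h⟩ := hqh
      refine ⟨q, hq, fun x => ?_⟩
      rw [renyiD_one_iff (hW.ne_top x) (eD_ne_top q)]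
      refine ⟨fun y _ => (ENNReal.ofReal_pos.2 (hpos q hq y)).ne', ?_⟩
      have := (h x).le
      simpa [eD, ENNReal.toReal_ofReal (hpos q hq _).le] using this
    · intro p hp hp1
      obtain ⟨q, hq, h⟩ := cap_point hW hd hδ hδ1 (eD_dist hp hp1)
      refine ⟨q, hq, ?_⟩
      rw [joint_one_iff hW (eD_dist hp hp1) (eD_ne_top q)] at h
      have h2 := h.2
      simp only [eD, ENNReal.toReal_ofReal (hpos q hq _).le, ENNReal.toReal_ofReal (hp _)] at h2
      linarith
  · exact absurd rfl hα
  · skip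
    refine Exists.elim (minimax (K := Kset B δ) (f := fun x q => ∑ y, (W x y).toReal ^ a * (- (q y ^ (1 - a)))) (c := - 2 ^ ((a - 1) * d'))
      (fun x => convexOn_sum_proj (s := Set.Ici 0) (g := fun t => - (t ^ (1 - a))) (Kset_convex δ) (fun q hq y => (hpos q hq y).le)
        (Real.concaveOn_rpow (by linarith) (by linarith)).neg (fun y => by positivity)) ?_) (fun q hqh => ?_)
    rotate_left
    · obtain ⟨hq, h⟩ := hqh
      refine ⟨q, hq, fun x => ?_⟩
      rw [renyiD_lt_one_iff h0 h1, row_sum h0 (hW.ne_top x) (hpos q hq)]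
      refine ENNReal.ofReal_le_ofReal ?_
      have := h x
      simp_rw [mul_neg] at this
      rw [Finset.sum_neg_distrib] at this
      linarith
    · intro p hp hp1
      obtain ⟨q, hq, h⟩ := cap_point hW hd hδ hδ1 (eD_dist hp hp1)
      refine ⟨q, hq, ?_⟩
      rw [renyiD_lt_one_iff h0 h1, avg_row_sum h0 hW hp hp1 (hpos q hq)] at h
      have h2 := (ENNReal.ofReal_le_ofReal_iff' ).1 h
      have h3 := h2.resolve_right (not_le.2 (two_rpow_pos _))
      have h4 : (2:ℝ) ^ ((a - 1) * d') < 2 ^ ((a - 1) * d0) := Real.rpow_lt_rpow_of_exponent_lt (by norm_num) (by nlinarith)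
      simp_rw [mul_neg, Finset.sum_neg_distrib, mul_neg]
      rw [Finset.sum_neg_distrib]
      linarith
  · have h0 : 0 < a := by linarith
    refine Exists.elim (minimax (K := Kset B δ) (f := fun x q => ∑ y, (W x y).toReal ^ a * (q y ^ (1 - a))) (c := 2 ^ ((a - 1) * d'))
      (fun x => convexOn_sum_proj (s := Set.Ioi 0) (g := fun t => (t ^ (1 - a))) (Kset_convex δ) (fun q hq y => (hpos q hq y))
        (convexOn_rpow_negative (by linarith)) (fun y => by positivity)) ?_) (fun q hqh => ?_)
    rotate_left
    · obtain ⟨hq, h⟩ := hqh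
      refine ⟨q, hq, fun x => ?_⟩
      rw [renyiD_gt_one_iff h1, row_sum h0 (hW.ne_top x) (hpos q hq)]
      exact ENNReal.ofReal_le_ofReal (h x).le
    · intro p hp hp1
      obtain ⟨q, hq, h⟩ := cap_point hW hd hδ hδ1 (eD_dist hp hp1)
      refine ⟨q, hq, ?_⟩
      rw [renyiD_gt_one_iff h1, avg_row_sum h0 hW hp hp1 (hpos q hq)] at h
      have h3 := (ENNReal.ofReal_le_ofReal_iff (two_rpow_pos _).le).1 h
      have h4 : (2:ℝ) ^ ((a - 1) * d0) < 2 ^ ((a - 1) * d') := Real.rpow_lt_rpow_of_exponent_lt (by norm_num) (by nlinarith)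
      linarith

/-- a smoothing parameter of small cost -/
lemma exists_delta (m : ℕ) {ε : ℝ} (hε : 0 < ε) : ∃ δ : ℝ, 0 < δ ∧ δ * m < 1 ∧ Real.logb 2 (1 - δ * m)⁻¹ < ε := by
  have h1 : (2:ℝ) ^ (-ε) < 1 := Real.rpow_lt_one_of_one_lt_of_neg (by norm_num) (by linarith)
  have h2 := two_rpow_pos (-ε)
  have hm : (0:ℝ) < m + 1 := by positivity
  refine ⟨(1 - 2 ^ (-ε)) / (m + 1), div_pos (by linarith) hm, ?_, ?_⟩
  · rw [div_mul_eq_mul_div, div_lt_one hm]; nlinarith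
  · have h3 : (2:ℝ) ^ (-ε) < 1 - (1 - 2 ^ (-ε)) / (m + 1) * m := by
      have : (1 - (2:ℝ) ^ (-ε)) / (m + 1) * m < 1 - 2 ^ (-ε) := by
        rw [div_mul_eq_mul_div, div_lt_iff₀ hm]; nlinarith
      linarith
    rw [Real.logb_inv]
    have := Real.logb_lt_logb (b := 2) (by norm_num) h2 h3
    rw [Real.logb_rpow (by norm_num) (by norm_num)] at this
    linarith

lemma cap_ach_top [Nonempty A] [Nonempty B] {W : A → B → ℝ≥0∞} (hW : IsChannel W) {I : ℝ} (hI : renyiCap ⊤ W = I) :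
    ∃ Q, IsDist Q ∧ ∀ x, renyiD ⊤ (W x) Q ≤ (I : EReal) := by
  set h : B → ℝ≥0∞ := fun y => ⨆ x, W x y with hh
  have hWh : ∀ x y, W x y ≤ h y := fun x y => le_iSup (fun x => W x y) x
  have hle : ∀ y, h y ≤ 1 := fun y => iSup_le fun x => IsDist.le_one (hW x) y
  set S := ∑ y, h y with hS
  have hS0 : S ≠ 0 := by
    inhabit A
    have : 1 ≤ S := by rw [← hW default]; exact Finset.sum_le_sum fun y _ => hWh _ y
    exact (lt_of_lt_of_le one_pos this).ne'
  have hSt : S ≠ ⊤ := ENNReal.sum_ne_top.2 fun y _ => ne_top_of_le_ne_top ENNReal.one_ne_top (hle y)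
  have hSI : S ≤ ENNReal.ofReal (2 ^ I) := by
    rw [← elog2_le_iff]
    rw [← hI]
    have hP : IsDist (fun _ : A => (Fintype.card A : ℝ≥0∞)⁻¹) := by
      unfold IsDist
      simp
      rw [ENNReal.mul_inv_cancel] <;> simp
    refine le_trans ?_ (le_iSup _ ⟨_, hP⟩)
    refine le_iInf fun Q => ereal_le_of_forall fun z hz => ?_
    rw [renyiD_top_iff (IsDist.joint hW hP).ne_top] at hz
    rw [elog2_le_iff, ← mul_one (ENNReal.ofReal _)]
    have hQ1 : ∑ y, Q.1 y = 1 := Q.2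
    rw [← hQ1, Finset.mul_sum]
    refine Finset.sum_le_sum fun y _ => iSup_le fun x => ?_
    have h1 := hz (x, y)
    rw [margX_joint hW] at h1
    simp only [joint] at h1
    rw [mul_left_comm] at h1
    exact (ENNReal.mul_le_mul_iff_right (by simp) (by simp)).1 h1
  refine ⟨fun y => h y / S, ?_, fun x => ?_⟩
  · unfold IsDist
    simp_rw [div_eq_mul_inv]
    rw [← Finset.sum_mul, ENNReal.mul_inv_cancel hS0 hSt]
  · rw [renyiD_top_iff (hW.ne_top x)]
    intro y
    calc W x y ≤ h y := hWh x y
      _ = S * (h y / S) := (ENNReal.mul_div_cancel hS0 hSt).symm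
      _ ≤ _ := mul_le_mul_left hSI _
end
end RST

namespace RST
section
variable {A B : Type*} [Fintype A] [Fintype B]

lemma ach_limsup {α : ℝ≥0∞} {W : A → B → ℝ≥0∞} {r T : ℝ} (hr : 0 ≤ r)
    (h : ∀ ε > 0, ∃ e : ℕ → ℝ, Tendsto (fun n : ℕ => e n / n) atTop (nhds 0) ∧
      ∀ n : ℕ, 0 < n → simD α (prodCh n W) (n * r) ≤ ((n * (T + ε) + e n : ℝ) : EReal)) :
    Esc α W r ≤ (T : EReal) := by
  have hc : RateOK r (fun n => n * r) := by
    refine ⟨fun n => by positivity, ?_⟩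
    have : (fun n : ℕ => ((n * r / n : ℝ) : EReal)) =ᶠ[atTop] fun _ => (r : EReal) := by
      filter_upwards [eventually_gt_atTop 0] with n hn
      have : (n : ℝ) ≠ 0 := by exact_mod_cast hn.ne'
      rw [mul_div_cancel_left₀ _ this]
    rw [limsup_congr this]; simp
  refine (iInf_le _ ⟨_, hc⟩).trans ?_
  refine EReal.le_of_forall_lt_iff_le.1 fun z hz => ?_
  have hz' : T < z := by exact_mod_cast hz
  obtain ⟨e, he, h⟩ := h ((z - T) / 2) (by linarith)
  have hev : ∀ᶠ n : ℕ in atTop, e n / n < (z - T) / 2 := he.eventually_lt_const (by linarith)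
  have : ∀ᶠ n : ℕ in atTop, (((1 : ℝ) / n : ℝ) : EReal) * simD α (prodCh n W) (n * r) ≤ (z : EReal) := by
    filter_upwards [hev, eventually_gt_atTop 0] with n h1 hn
    have hn' : (0:ℝ) < n := by exact_mod_cast hn
    rw [one_div, ereal_pos_mul_le_iff hn']
    refine (h n hn).trans ?_
    rw [EReal.coe_le_coe_iff]
    rw [div_lt_iff₀ hn'] at h1
    nlinarith
  calc _ ≤ limsup (fun _ : ℕ => (z : EReal)) atTop := limsup_le_limsup this
    _ = z := by simp

lemma sim_exists {α : ℝ≥0∞} {n : ℕ} {W : A → B → ℝ≥0∞} (hW : IsChannel W) {r : ℝ} (hr : 0 ≤ r)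
    {Q : (Fin n → B) → ℝ≥0∞} (hQ : IsDist Q) {N' : (Fin n → A) → (Fin n → B) → ℝ≥0∞}
    (h1 : ∀ xs, ∑ ys, N' xs ys ≤ 1) (h2 : ∀ xs ys, N' xs ys ≤ ENNReal.ofReal (2 ^ (n * r - 1)) * Q ys) {t : ℝ}
    (h3 : ∀ xs, renyiD α (prodCh n W xs) (N' xs) ≤ t) :
    simD α (prodCh n W) (n * r) ≤ ((t + 2 : ℝ) : EReal) := by
  have hx : (1:ℝ) ≤ 2 ^ (n * r) := Real.one_le_rpow (by norm_num) (by positivity)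
  set M := ⌊(2:ℝ) ^ (n * r)⌋₊ with hM
  have hM0 : 0 < M := Nat.floor_pos.2 hx
  have hM1 : (1:ℝ) ≤ M := by exact_mod_cast hM0
  have hMle : (M:ℝ) ≤ 2 ^ (n * r) := Nat.floor_le (by linarith)
  have hMlt : (2:ℝ) ^ (n * r) < M + 1 := Nat.lt_floor_add_one _
  have hlog : Real.logb 2 M ≤ n * r := by
    rw [Real.logb_le_iff_le_rpow (by norm_num) (by linarith)]; exact hMle
  have hG : (2:ℝ) ^ (n * r - 1) ≤ M := by
    rw [Real.rpow_sub two_pos, Real.rpow_one]; linarith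
  obtain ⟨N, hN, hle⟩ := rejection hM0 hlog hQ h1 (fun xs ys => (h2 xs ys).trans (mul_le_mul_left (by
    rw [← ENNReal.ofReal_natCast]; exact ENNReal.ofReal_le_ofReal hG) _))
  obtain ⟨_, _, _, _, _, hNd, _⟩ := simulation_bound hN
  refine (iInf_le _ ⟨N, hN⟩).trans (iSup_le fun xs => ?_)
  refine (renyiD_scale (hW.prodCh n xs) (hNd xs).ne_top (by norm_num) (hle xs) (h3 xs)).trans ?_
  rw [show (4:ℝ) = 2 ^ (2:ℝ) by norm_num, Real.logb_rpow (by norm_num) (by norm_num)]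

lemma eD_prod {n : ℕ} {q : B → ℝ} (hq : ∀ y, 0 ≤ q y) (ys : Fin n → B) : prodDist n (eD q) ys = ENNReal.ofReal (∏ i, q (ys i)) := by
  unfold prodDist eD
  rw [ENNReal.ofReal_prod_of_nonneg fun i _ => hq _]

lemma const_div_tendsto (C : ℝ) : Tendsto (fun n : ℕ => C / (n:ℝ)) atTop (nhds 0) :=
  tendsto_const_div_atTop_nhds_zero_nat C

lemma ach_gt [Nonempty A] [Nonempty B] {a : ℝ} (ha : 1 < a) {W : A → B → ℝ≥0∞} (hW : IsChannel W) {r : ℝ} (hr : 0 ≤ r)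
    {I : ℝ} (hI : renyiCap (ENNReal.ofReal a) W = I) : Esc (ENNReal.ofReal a) W r ≤ ((max (I - r) 0 : ℝ) : EReal) := by
  refine ach_limsup hr fun ε hε => ⟨fun _ => 1 + (a - 1)⁻¹ + 2, const_div_tendsto _, fun n hn => ?_⟩
  obtain ⟨δ, hδ, hδ1, hδ2⟩ := exists_delta (Fintype.card B) (half_pos hε)
  obtain ⟨q, hq, hD⟩ := cap_ach (d := I + ε / 2) (d' := I + ε) (δ := δ) (α := ENNReal.ofReal a) ENNReal.ofReal_ne_top hW
    (by rw [hI]; exact_mod_cast by linarith) hδ hδ1 (by linarith)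
  have hqp : ∀ y, 0 < q y := fun y => lt_of_lt_of_le hδ (hq.1 y)
  have hQd : IsDist (prodDist n (eD q)) := (eD_dist (fun y => (hqp y).le) hq.2).prodDist n
  set G := ENNReal.ofReal (2 ^ (n * r - 1)) with hG
  rw [← add_assoc]
  refine sim_exists hW hr hQd (N' := fun xs ys => min (prodCh n W xs ys) (G * prodDist n (eD q) ys))
    (fun xs => ?_) (fun xs ys => min_le_right _ _) fun xs => ?_
  · rw [← hW.prodCh n xs]; exact Finset.sum_le_sum fun ys _ => min_le_left _ _
  rw [renyiD_gt_one_iff ha]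
  have ha0 : 0 < a := by linarith
  have hprod : ∑ ys, prodCh n W xs ys ^ a * prodDist n (eD q) ys ^ (1 - a) =
      ∏ i, ∑ y, W (xs i) y ^ a * eD q y ^ (1 - a) := by
    rw [← sum_pi_prod (fun i y => W (xs i) y ^ a * eD q y ^ (1 - a))]
    refine Finset.sum_congr rfl fun ys _ => ?_
    rw [Finset.prod_mul_distrib, prodCh, ENNReal.prod_rpow_of_nonneg ha0.le, prodDist,
      ENNReal.prod_rpow_of_ne_top (fun i _ => eD_ne_top q _)]
  have hbd : ∏ i, ∑ y, W (xs i) y ^ a * eD q y ^ (1 - a) ≤ ENNReal.ofReal (2 ^ ((a - 1) * (I + ε))) ^ n := by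
    have := Finset.prod_le_pow_card (Finset.univ : Finset (Fin n)) (fun i => ∑ y, W (xs i) y ^ a * eD q y ^ (1 - a))
      (ENNReal.ofReal (2 ^ ((a - 1) * (I + ε)))) (fun i _ => (renyiD_gt_one_iff ha _ _ _).1 (hD (xs i)))
    simpa using this
  have hpt : ∀ ys, prodCh n W xs ys ^ a * (min (prodCh n W xs ys) (G * prodDist n (eD q) ys)) ^ (1 - a) ≤
      prodCh n W xs ys + G ^ (1 - a) * (prodCh n W xs ys ^ a * prodDist n (eD q) ys ^ (1 - a)) := by
    intro ys
    rcases min_choice (prodCh n W xs ys) (G * prodDist n (eD q) ys) with h | h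
    · rw [h]
      refine le_add_right ?_
      by_cases h0 : prodCh n W xs ys = 0
      · simp [h0, ENNReal.zero_rpow_of_pos ha0]
      · rw [← ENNReal.rpow_add _ _ h0 ((hW.prodCh n).ne_top xs ys)]; simp
    · rw [h]
      refine le_add_left (le_of_eq ?_)
      rw [ENNReal.mul_rpow_of_ne_top ENNReal.ofReal_ne_top (hQd.ne_top ys)]
      ring
  have hsum := Finset.sum_le_sum fun ys (_ : ys ∈ Finset.univ) => hpt ys
  rw [Finset.sum_add_distrib, ← Finset.mul_sum, hprod, hW.prodCh n xs] at hsum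
  refine hsum.trans ((add_le_add le_rfl (mul_le_mul_right hbd _)).trans ?_)
  rw [hG, ENNReal.ofReal_rpow_of_pos (two_rpow_pos _), ← ENNReal.ofReal_pow (two_rpow_pos _).le, ← ENNReal.ofReal_mul (by positivity),
    ← ENNReal.ofReal_one, ← ENNReal.ofReal_add (by norm_num) (by positivity)]
  refine ENNReal.ofReal_le_ofReal ?_
  rw [← Real.rpow_mul (by norm_num), ← Real.rpow_mul_natCast (by norm_num), ← Real.rpow_add two_pos]
  have ha1 : 0 < a - 1 := by linarith
  have e : (a - 1) * (n * (max (I - r) 0 + ε) + (1 + (a - 1)⁻¹)) = 1 + (a - 1) * (n * (max (I - r) 0 + ε) + 1) := by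
    field_simp; ring
  rw [e, Real.rpow_add two_pos 1, Real.rpow_one, two_mul]
  have hn' : (0:ℝ) < n := by exact_mod_cast hn
  refine add_le_add (Real.one_le_rpow (by norm_num) ?_) (Real.rpow_le_rpow_of_exponent_le (by norm_num) ?_)
  · have := le_max_right (I - r) 0
    positivity
  · have h1 := le_max_left (I - r) 0
    have h2 : (n * r - 1) * (1 - a) + (a - 1) * (I + ε) * n = (a - 1) * (n * ((I - r) + ε) + 1) := by ring
    rw [h2]
    gcongr

lemma ach_top [Nonempty A] [Nonempty B] {W : A → B → ℝ≥0∞} (hW : IsChannel W) {r : ℝ} (hr : 0 ≤ r)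
    {I : ℝ} (hI : renyiCap ⊤ W = I) : Esc ⊤ W r ≤ ((max (I - r) 0 : ℝ) : EReal) := by
  refine ach_limsup hr fun ε hε => ⟨fun _ => 1 + 2, const_div_tendsto _, fun n hn => ?_⟩
  obtain ⟨Q, hQ, hD⟩ := cap_ach_top hW hI
  have hn' : (0:ℝ) < n := by exact_mod_cast hn
  set u : ℝ := n * (max (I - r) 0 + ε) + 1 with hu
  have hm0 := le_max_right (I - r) 0
  have hm1 := le_max_left (I - r) 0
  have hu0 : 0 ≤ u := by positivity
  rw [← add_assoc]
  refine sim_exists hW hr (hQ.prodDist n) (N' := fun xs ys => ENNReal.ofReal (2 ^ (-u)) * prodCh n W xs ys)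
    (fun xs => ?_) (fun xs ys => ?_) fun xs => ?_
  · rw [← Finset.mul_sum, hW.prodCh n xs, mul_one]
    rw [← ENNReal.ofReal_one]
    exact ENNReal.ofReal_le_ofReal (Real.rpow_le_one_of_one_le_of_nonpos (by norm_num) (by linarith))
  · have h1 : prodCh n W xs ys ≤ ENNReal.ofReal (2 ^ I) ^ n * prodDist n Q ys := by
      unfold prodCh prodDist
      calc _ ≤ ∏ i, (ENNReal.ofReal (2 ^ I) * Q (ys i)) := Finset.prod_le_prod' fun i _ => (renyiD_top_iff (hW.ne_top _) _ _).1 (hD (xs i)) (ys i)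
        _ = _ := by rw [Finset.prod_mul_distrib]; simp
    refine (mul_le_mul_right h1 _).trans ?_
    rw [← mul_assoc]
    refine mul_le_mul_left ?_ _
    rw [← ENNReal.ofReal_pow (two_rpow_pos _).le, ← ENNReal.ofReal_mul (by positivity)]
    refine ENNReal.ofReal_le_ofReal ?_
    rw [← Real.rpow_mul_natCast (by norm_num), ← Real.rpow_add two_pos]
    refine Real.rpow_le_rpow_of_exponent_le (by norm_num) ?_
    rw [hu]; nlinarith
  · rw [renyiD_top_iff ((hW.prodCh n).ne_top xs)]
    intro ys
    rw [← mul_assoc, ← ENNReal.ofReal_mul (by positivity), ← Real.rpow_add two_pos, add_neg_cancel, Real.rpow_zero,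
      ENNReal.ofReal_one, one_mul]

lemma ach_zero [Nonempty A] [Nonempty B] {W : A → B → ℝ≥0∞} (hW : IsChannel W) {r : ℝ} (hr : 0 ≤ r)
    {I : ℝ} (hI : renyiCap 0 W = I) : Esc 0 W r ≤ ((max (I - r) 0 : ℝ) : EReal) := by
  refine ach_limsup hr fun ε hε => ⟨fun _ => 1 + 2, const_div_tendsto _, fun n hn => ?_⟩
  have hn' : (0:ℝ) < n := by exact_mod_cast hn
  obtain ⟨δ, hδ, hδ1, hδ2⟩ := exists_delta (Fintype.card B) (half_pos hε)
  obtain ⟨q, hq, hD⟩ := cap_ach (d := I + ε / 2) (d' := I + ε) (δ := δ) (α := 0) ENNReal.zero_ne_top hW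
    (by rw [hI]; exact_mod_cast by linarith) hδ hδ1 (by linarith)
  have hqp : ∀ y, 0 < q y := fun y => lt_of_lt_of_le hδ (hq.1 y)
  have hQd : IsDist (prodDist n (eD q)) := (eD_dist (fun y => (hqp y).le) hq.2).prodDist n
  have hm0 := le_max_right (I - r) 0
  have hm1 := le_max_left (I - r) 0
  set G := ENNReal.ofReal (2 ^ (n * r - 1)) with hG
  set S : (Fin n → A) → ℝ≥0∞ := fun xs => ∑ ys ∈ Finset.univ.filter (fun ys => prodCh n W xs ys ≠ 0), prodDist n (eD q) ys with hS
  have hSle : ∀ xs, S xs ≤ 1 := fun xs => by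
    rw [← hQd]; exact Finset.sum_le_sum_of_subset (Finset.filter_subset _ _)
  have hSge : ∀ xs, ENNReal.ofReal (2 ^ (-(n * (I + ε)))) ≤ S xs := by
    intro xs
    have e : S xs = ∏ i, ∑ y ∈ Finset.univ.filter (fun y => W (xs i) y ≠ 0), eD q y := by
      simp only [hS, Finset.sum_filter]
      rw [← sum_pi_prod (fun i y => if W (xs i) y ≠ 0 then eD q y else 0)]
      refine Finset.sum_congr rfl fun ys _ => ?_
      by_cases h : prodCh n W xs ys = 0
      · rw [if_neg (by simpa using h)]
        obtain ⟨i, _, hi⟩ := Finset.prod_eq_zero_iff.1 h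
        exact (Finset.prod_eq_zero (Finset.mem_univ i) (by simp [hi])).symm
      · rw [if_pos h]
        have := Finset.prod_ne_zero_iff.1 h
        exact Finset.prod_congr rfl fun i hi => by rw [if_pos (this i hi)]
    rw [e]
    have : ∏ _i : Fin n, ENNReal.ofReal (2 ^ (-(I + ε))) ≤ ∏ i, ∑ y ∈ Finset.univ.filter (fun y => W (xs i) y ≠ 0), eD q y :=
      Finset.prod_le_prod' fun i _ => (renyiD_zero_iff _ _ _).1 (hD (xs i))
    refine le_trans (le_of_eq ?_) this
    rw [Finset.prod_const, Finset.card_univ, Fintype.card_fin, ← ENNReal.ofReal_pow (two_rpow_pos _).le, ← Real.rpow_mul_natCast (by norm_num)]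
    congr 2; ring
  have hS0 : ∀ xs, S xs ≠ 0 := fun xs => (lt_of_lt_of_le (ENNReal.ofReal_pos.2 (two_rpow_pos _)) (hSge xs)).ne'
  have hSt : ∀ xs, S xs ≠ ⊤ := fun xs => ne_top_of_le_ne_top ENNReal.one_ne_top (hSle xs)
  rw [← add_assoc]
  have hsum : ∀ xs, (∑ ys ∈ Finset.univ.filter (fun ys => prodCh n W xs ys ≠ 0),
      if prodCh n W xs ys ≠ 0 then min G (S xs)⁻¹ * prodDist n (eD q) ys else 0) = min G (S xs)⁻¹ * S xs := by
    intro xs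
    rw [hS, Finset.mul_sum]
    exact Finset.sum_congr rfl fun ys hys => if_pos (Finset.mem_filter.1 hys).2
  refine sim_exists hW hr hQd (N' := fun xs ys => if prodCh n W xs ys ≠ 0 then min G (S xs)⁻¹ * prodDist n (eD q) ys else 0)
    (fun xs => ?_) (fun xs ys => ?_) fun xs => ?_
  · have : ∑ ys, (if prodCh n W xs ys ≠ 0 then min G (S xs)⁻¹ * prodDist n (eD q) ys else 0) = min G (S xs)⁻¹ * S xs := by
      rw [← hsum, Finset.sum_filter]
      exact Finset.sum_congr rfl fun ys _ => by by_cases h : prodCh n W xs ys ≠ 0 <;> simp [h]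
    rw [this]
    exact (mul_le_mul_left (min_le_right _ _) _).trans (ENNReal.inv_mul_cancel (hS0 xs) (hSt xs)).le
  · split_ifs
    · exact mul_le_mul_left (min_le_left _ _) _
    · exact zero_le
  · rw [renyiD_zero_iff, hsum]
    rcases min_choice G (S xs)⁻¹ with h | h
    · rw [h]
      refine le_trans ?_ (mul_le_mul_right (hSge xs) _)
      rw [hG, ← ENNReal.ofReal_mul (two_rpow_pos _).le, ← Real.rpow_add two_pos]
      refine ENNReal.ofReal_le_ofReal (Real.rpow_le_rpow_of_exponent_le (by norm_num) ?_)
      nlinarith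
    · rw [h, ENNReal.inv_mul_cancel (hS0 xs) (hSt xs), ← ENNReal.ofReal_one]
      refine ENNReal.ofReal_le_ofReal (Real.rpow_le_one_of_one_le_of_nonpos (by norm_num) ?_)
      have : 0 ≤ n * (max (I - r) 0 + ε) := by positivity
      linarith
end
end RST

namespace RST
section
variable {A B : Type*} [Fintype A] [Fintype B]

lemma second_moment (B : Type*) [Fintype B] {δ : ℝ} (hδ : 0 < δ) : ∃ C : ℝ, 0 ≤ C ∧ ∀ v : B → ℝ, (∀ y, 0 ≤ v y) → ∑ y, v y = 1 → ∀ q ∈ Kset B δ,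
    ∑ y, v y * Real.logb 2 (v y / q y) ^ 2 ≤ C := by
  refine ⟨∑ _y : B, (2 * (4 / Real.log 2 ^ 2) + 2 * Real.logb 2 δ ^ 2), Finset.sum_nonneg fun y _ => by positivity, ?_⟩
  intro v hv0 hv1 q hq
  have l2 := log2_pos
  refine Finset.sum_le_sum fun y _ => ?_
  have hvy : v y ≤ 1 := by rw [← hv1]; exact Finset.single_le_sum (fun y _ => hv0 y) (Finset.mem_univ y)
  have hq0 : ∀ y, 0 < q y := fun y => lt_of_lt_of_le hδ (hq.1 y)
  have hqy : q y ≤ 1 := by rw [← hq.2]; exact Finset.single_le_sum (fun y _ => (hq0 y).le) (Finset.mem_univ y)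
  rcases (hv0 y).eq_or_lt with h | h
  · rw [← h]; simp; positivity
  rw [Real.logb_div h.ne' (hq0 y).ne']
  have h1 : v y * Real.logb 2 (v y) ^ 2 ≤ 4 / Real.log 2 ^ 2 := by
    have h2 := Real.abs_log_mul_self_rpow_lt (v y) (1/2) h hvy (by norm_num)
    have h3 : (Real.log (v y) * v y ^ ((1:ℝ)/2)) ^ 2 ≤ 4 := by
      rw [← sq_abs]
      have := abs_nonneg (Real.log (v y) * v y ^ ((1:ℝ)/2))
      have h2' : |Real.log (v y) * v y ^ ((1:ℝ)/2)| < 2 := by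
        have e : (1:ℝ)/(1/2) = 2 := by norm_num
        rwa [e] at h2
      nlinarith
    have h4 : (v y ^ ((1:ℝ)/2)) ^ 2 = v y := by
      rw [← Real.rpow_natCast, ← Real.rpow_mul h.le]; norm_num
    rw [mul_pow, h4] at h3
    unfold Real.logb
    rw [div_pow, ← mul_div_assoc]
    gcongr
    linarith
  have h5 : Real.logb 2 δ ≤ Real.logb 2 (q y) := Real.logb_le_logb_of_le (by norm_num) hδ (hq.1 y)
  have h6 : Real.logb 2 (q y) ≤ 0 := Real.logb_nonpos (by norm_num) (hq0 y).le hqy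
  have h7 : Real.logb 2 (q y) ^ 2 ≤ Real.logb 2 δ ^ 2 := by nlinarith
  have h8 : v y * Real.logb 2 (q y) ^ 2 ≤ Real.logb 2 δ ^ 2 := by nlinarith [sq_nonneg (Real.logb 2 (q y))]
  have h9 : (Real.logb 2 (v y) - Real.logb 2 (q y)) ^ 2 ≤ 2 * Real.logb 2 (v y) ^ 2 + 2 * Real.logb 2 (q y) ^ 2 := by
    nlinarith [sq_nonneg (Real.logb 2 (v y) + Real.logb 2 (q y))]
  have h10 := mul_le_mul_of_nonneg_left h9 h.le
  nlinarith

lemma core {n : ℕ} (hn : 0 < n) {v : Fin n → B → ℝ} (hv0 : ∀ i y, 0 ≤ v i y) (hv1 : ∀ i, ∑ y, v i y = 1)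
    {q : B → ℝ} (hq0 : ∀ y, 0 < q y) {C : ℝ} (hC : ∀ i, ∑ y, v i y * Real.logb 2 (v i y / q y) ^ 2 ≤ C)
    {Qn : (Fin n → B) → ℝ} {κ : ℝ} (hκ : 1 ≤ κ) (hQn : ∀ ys, ∏ i, q (ys i) ≤ κ * Qn ys) (R : ℝ) :
    ∑ ys : Fin n → B, (∏ i, v i (ys i)) * Real.logb 2 ((∏ i, v i (ys i)) / min (∏ i, v i (ys i)) (2 ^ (R - 1) * Qn ys)) ≤
      max (∑ i, ∑ y, v i y * Real.logb 2 (v i y / q y) - R) 0 + Real.sqrt n * (1 + C) / 2 + Real.logb 2 κ + 1 := by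
  have hn' : (0:ℝ) < n := by exact_mod_cast hn
  have hsn : 0 < Real.sqrt n := Real.sqrt_pos.2 hn'
  have hss : Real.sqrt n * Real.sqrt n = n := Real.mul_self_sqrt hn'.le
  have hlκ : 0 ≤ Real.logb 2 κ := Real.logb_nonneg (by norm_num) hκ
  set u : Fin n → B → ℝ := fun i y => Real.logb 2 (v i y / q y) with hu
  set μ : Fin n → ℝ := fun i => ∑ y, v i y * u i y with hμ
  set D := ∑ i, ∑ y, v i y * Real.logb 2 (v i y / q y) with hD
  have hDμ : D = ∑ i, μ i := rfl
  set m := max (D - R) 0 with hm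
  have hm0 : 0 ≤ m := le_max_right _ _
  have hm1 : D - R ≤ m := le_max_left _ _
  have hV1 : ∑ ys : Fin n → B, ∏ i, v i (ys i) = 1 := by
    rw [sum_pi_prod_real]; simp [hv1]
  have hpt : ∀ ys : Fin n → B, (∏ i, v i (ys i)) * Real.logb 2 ((∏ i, v i (ys i)) / min (∏ i, v i (ys i)) (2 ^ (R - 1) * Qn ys)) ≤
      (∏ i, v i (ys i)) * (m + Real.logb 2 κ + 1 + Real.sqrt n / 2) +
      (1 / (2 * Real.sqrt n)) * ((∏ i, v i (ys i)) * (∑ i, (u i (ys i) - μ i)) ^ 2) := by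
    intro ys
    have hV0 : 0 ≤ ∏ i, v i (ys i) := Finset.prod_nonneg fun i _ => hv0 _ _
    rcases hV0.eq_or_lt with h0 | h0
    · rw [← h0]; simp
    have hvp : ∀ i, 0 < v i (ys i) := fun i => lt_of_le_of_ne (hv0 _ _) (Ne.symm (Finset.prod_ne_zero_iff.1 h0.ne' i (Finset.mem_univ _)))
    have hQp : 0 < ∏ i, q (ys i) := Finset.prod_pos fun i _ => hq0 _
    have hQn0 : 0 < Qn ys := by
      have := lt_of_lt_of_le hQp (hQn ys)
      exact pos_of_mul_pos_right this (by linarith)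
    set U := ∑ i, (u i (ys i) - μ i) with hU
    set V := ∏ i, v i (ys i) with hV
    rw [show V * (m + Real.logb 2 κ + 1 + Real.sqrt n / 2) + (1 / (2 * Real.sqrt n)) * (V * U ^ 2) =
      V * (m + Real.logb 2 κ + 1 + (Real.sqrt n / 2 + (1 / (2 * Real.sqrt n)) * U ^ 2)) by ring]
    refine mul_le_mul_of_nonneg_left ?_ h0.le
    have hUle : U ≤ Real.sqrt n / 2 + (1 / (2 * Real.sqrt n)) * U ^ 2 := by
      have : 0 ≤ (Real.sqrt n - U) ^ 2 / (2 * Real.sqrt n) := by positivity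
      have e : (Real.sqrt n - U) ^ 2 / (2 * Real.sqrt n) = Real.sqrt n / 2 + (1 / (2 * Real.sqrt n)) * U ^ 2 - U := by
        field_simp; ring
      linarith
    have hE0 : 0 ≤ Real.sqrt n / 2 + (1 / (2 * Real.sqrt n)) * U ^ 2 := by positivity
    rcases min_choice V (2 ^ (R - 1) * Qn ys) with h | h
    · rw [h, div_self h0.ne', Real.logb_one]; linarith
    · rw [h]
      have hG := two_rpow_pos (R - 1)
      have h1 : V / (2 ^ (R - 1) * Qn ys) ≤ V / (∏ i, q (ys i)) * κ * 2 ^ (-(R - 1)) := by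
        rw [Real.rpow_neg (by norm_num), ← div_eq_mul_inv, div_le_div_iff₀ (by positivity) hG]
        have h2 : V ≤ V / (∏ i, q (ys i)) * (κ * Qn ys) := by
          rw [div_mul_eq_mul_div, le_div_iff₀ hQp]
          exact mul_le_mul_of_nonneg_left (hQn ys) h0.le
        nlinarith
      have h2 := Real.logb_le_logb_of_le (b := 2) (by norm_num) (by positivity) h1
      have hκ0 : 0 < κ := by linarith
      rw [Real.logb_mul (by positivity) (by positivity), Real.logb_mul (by positivity) (by positivity),
        Real.logb_rpow (by norm_num) (by norm_num), hV, ← Finset.prod_div_distrib,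
        Real.logb_prod _ _ (fun i _ => (div_pos (hvp i) (hq0 _)).ne')] at h2
      have h3 : ∑ i, Real.logb 2 (v i (ys i) / q (ys i)) = U + D := by
        rw [hU, hDμ, ← Finset.sum_add_distrib]
        exact Finset.sum_congr rfl fun i _ => by simp [hu]
      rw [h3] at h2
      linarith
  have hsum := Finset.sum_le_sum fun ys (_ : ys ∈ Finset.univ) => hpt ys
  rw [Finset.sum_add_distrib, ← Finset.sum_mul, ← Finset.mul_sum, hV1, one_mul,
    E_sq v (fun i y => u i y - μ i) hv1 (fun i => by
      simp_rw [mul_sub]; rw [Finset.sum_sub_distrib, ← Finset.sum_mul, hv1]; simp [hμ])] at hsum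
  have hvar : ∑ i, ∑ y, v i y * (u i y - μ i) ^ 2 ≤ n * C := by
    have : ∀ i, ∑ y, v i y * (u i y - μ i) ^ 2 ≤ C := by
      intro i
      have e : ∑ y, v i y * (u i y - μ i) ^ 2 = ∑ y, v i y * u i y ^ 2 - μ i ^ 2 := by
        have : ∀ y, v i y * (u i y - μ i) ^ 2 = v i y * u i y ^ 2 - 2 * μ i * (v i y * u i y) + μ i ^ 2 * v i y := fun y => by ring
        simp_rw [this]
        rw [Finset.sum_add_distrib, Finset.sum_sub_distrib, ← Finset.mul_sum, ← Finset.mul_sum, hv1]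
        change _ - 2 * μ i * μ i + _ = _
        ring
      rw [e]
      have := hC i
      change ∑ y, v i y * u i y ^ 2 ≤ C at this
      nlinarith [sq_nonneg (μ i)]
    calc _ ≤ ∑ _i : Fin n, C := Finset.sum_le_sum fun i _ => this i
      _ = n * C := by simp
  have h4 : (1 / (2 * Real.sqrt n)) * ∑ i, ∑ y, v i y * (u i y - μ i) ^ 2 ≤ Real.sqrt n * C / 2 := by
    calc _ ≤ (1 / (2 * Real.sqrt n)) * (n * C) := mul_le_mul_of_nonneg_left hvar (by positivity)
      _ = _ := by
        field_simp
        rw [Real.sq_sqrt hn'.le]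
  linarith

/-- Jensen: variational upper bound for the divergence of order in `(0,1)`. -/
lemma variational {a : ℝ} (h0 : 0 < a) (h1 : a < 1) {P N V : B → ℝ} (hP : ∀ y, 0 ≤ P y) (hN : ∀ y, 0 ≤ N y)
    (hV : ∀ y, 0 ≤ V y) (hV1 : ∑ y, V y = 1) (hVP : ∀ y, V y ≠ 0 → P y ≠ 0) (hVN : ∀ y, V y ≠ 0 → N y ≠ 0) :
    renyiD (ENNReal.ofReal a) (eD P) (eD N) ≤ ((a / (1 - a) * ∑ y, V y * Real.logb 2 (V y / P y) + ∑ y, V y * Real.logb 2 (V y / N y) : ℝ) : EReal) := by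
  rw [renyiD_lt_one_iff h0 h1]
  have e : ∑ y, eD P y ^ a * eD N y ^ (1 - a) = ENNReal.ofReal (∑ y, P y ^ a * N y ^ (1 - a)) := by
    rw [ENNReal.ofReal_sum_of_nonneg (fun y _ => by have := hP y; have := hN y; positivity)]
    refine Finset.sum_congr rfl fun y _ => ?_
    unfold eD
    rw [ENNReal.ofReal_rpow_of_nonneg (hP y) h0.le, ENNReal.ofReal_rpow_of_nonneg (hN y) (by linarith), ENNReal.ofReal_mul (Real.rpow_nonneg (hP y) _)]
  rw [e]
  refine ENNReal.ofReal_le_ofReal ?_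
  set g : B → ℝ := fun y => - (a * Real.logb 2 (V y / P y) + (1 - a) * Real.logb 2 (V y / N y)) with hg
  have hJ := (convexOn_rpow_left (b := 2) two_pos).map_sum_le (t := Finset.univ) (w := V) (p := g) (fun y _ => hV y) hV1 (fun y _ => Set.mem_univ _)
  have e2 : (a - 1) * (a / (1 - a) * ∑ y, V y * Real.logb 2 (V y / P y) + ∑ y, V y * Real.logb 2 (V y / N y)) = ∑ y, V y • g y := by
    have : ∀ y, V y • g y = - a * (V y * Real.logb 2 (V y / P y)) + (a - 1) * (V y * Real.logb 2 (V y / N y)) := fun y => by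
      simp only [hg, smul_eq_mul]; ring
    simp_rw [this]
    rw [Finset.sum_add_distrib, ← Finset.mul_sum, ← Finset.mul_sum]
    have : 1 - a ≠ 0 := by linarith
    field_simp
    ring
  rw [e2]
  refine hJ.trans (Finset.sum_le_sum fun y _ => ?_)
  by_cases hy : V y = 0
  · simp only [hy, zero_smul]
    have := hP y; have := hN y
    positivity
  have hVp : 0 < V y := lt_of_le_of_ne (hV y) (Ne.symm hy)
  have hPp : 0 < P y := lt_of_le_of_ne (hP y) (Ne.symm (hVP y hy))
  have hNp : 0 < N y := lt_of_le_of_ne (hN y) (Ne.symm (hVN y hy))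
  refine le_of_eq ?_
  have e3 : ∀ x : ℝ, 0 < x → (2:ℝ) ^ (Real.logb 2 x) = x := fun x hx => Real.rpow_logb two_pos (by norm_num) hx
  have e4 : g y = a * Real.logb 2 (P y) + (1 - a) * Real.logb 2 (N y) + - Real.logb 2 (V y) := by
    simp only [hg]
    rw [Real.logb_div hVp.ne' hPp.ne', Real.logb_div hVp.ne' hNp.ne']; ring
  rw [smul_eq_mul, e4, Real.rpow_add two_pos, Real.rpow_add two_pos, mul_comm a, mul_comm (1 - a), Real.rpow_mul two_pos.le,
    Real.rpow_mul two_pos.le, e3 _ hPp, e3 _ hNp, Real.rpow_neg two_pos.le, e3 _ hVp]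
  field_simp
end
end RST

namespace RST
section
variable {A B : Type*} [Fintype A] [Fintype B]

lemma err_tendsto (c k : ℝ) : Tendsto (fun n : ℕ => (Real.sqrt n * c + k) / n) atTop (nhds 0) := by
  have h1 : Tendsto (fun n : ℕ => c * (Real.sqrt n)⁻¹ + k / n) atTop (nhds (c * 0 + 0)) := by
    refine Tendsto.add (Tendsto.const_mul _ ?_) (const_div_tendsto k)
    exact tendsto_inv_atTop_zero.comp (Real.tendsto_sqrt_atTop.comp tendsto_natCast_atTop_atTop)
  rw [mul_zero, add_zero] at h1
  refine h1.congr' ?_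
  filter_upwards [eventually_gt_atTop 0] with n hn
  have hn' : (0:ℝ) < n := by exact_mod_cast hn
  have hs : 0 < Real.sqrt n := Real.sqrt_pos.2 hn'
  have hss : Real.sqrt n * Real.sqrt n = n := Real.mul_self_sqrt hn'.le
  rw [add_div]
  congr 1
  rw [eq_div_iff hn'.ne']
  nth_rewrite 2 [← hss]
  field_simp

lemma logb_succ_le (n : ℕ) : Real.logb 2 (n + 1) ≤ 2 * Real.sqrt n / Real.log 2 := by
  have l2 := log2_pos
  unfold Real.logb
  gcongr
  have h0 : (0:ℝ) ≤ n := by positivity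
  have h1 : Real.log (n + 1) = 2 * Real.log (Real.sqrt (n + 1)) := by
    rw [Real.log_sqrt (by positivity)]; ring
  have h2 := Real.log_le_sub_one_of_pos (Real.sqrt_pos.2 (by positivity : (0:ℝ) < n + 1))
  have h3 : Real.sqrt (n + 1) ≤ Real.sqrt n + 1 := by
    rw [Real.sqrt_le_left (by positivity)]
    nlinarith [Real.sq_sqrt h0, Real.sqrt_nonneg (n:ℝ)]
  linarith

lemma prodCh_toReal {n : ℕ} (W : A → B → ℝ≥0∞) (xs : Fin n → A) (ys : Fin n → B) :
    (prodCh n W xs ys).toReal = ∏ i, (W (xs i) (ys i)).toReal := by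
  unfold prodCh; rw [ENNReal.toReal_prod]

lemma prodCh_eD {n : ℕ} {W : A → B → ℝ≥0∞} (hW : IsChannel W) (xs : Fin n → A) :
    prodCh n W xs = eD fun ys => ∏ i, (W (xs i) (ys i)).toReal := by
  funext ys
  unfold eD
  beta_reduce
  rw [← prodCh_toReal, ENNReal.ofReal_toReal ((hW.prodCh n).ne_top xs ys)]

lemma ach_one [Nonempty A] [Nonempty B] {W : A → B → ℝ≥0∞} (hW : IsChannel W) {r : ℝ} (hr : 0 ≤ r)
    {I : ℝ} (hI : renyiCap 1 W = I) : Esc 1 W r ≤ ((max (I - r) 0 : ℝ) : EReal) := by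
  refine ach_limsup hr fun ε hε => ?_
  obtain ⟨δ, hδ, hδ1, hδ2⟩ := exists_delta (Fintype.card B) (half_pos hε)
  obtain ⟨q, hq, hD⟩ := cap_ach (d := I + ε / 2) (d' := I + ε) (δ := δ) (α := 1) ENNReal.one_ne_top hW
    (by rw [hI]; exact_mod_cast by linarith) hδ hδ1 (by linarith)
  have hqp : ∀ y, 0 < q y := fun y => lt_of_lt_of_le hδ (hq.1 y)
  obtain ⟨C, hC0, hC⟩ := second_moment B hδ
  refine ⟨fun n => Real.sqrt n * ((1 + C) / 2) + (1 + 2), err_tendsto _ _, fun n hn => ?_⟩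
  have hn' : (0:ℝ) < n := by exact_mod_cast hn
  have hQd : IsDist (prodDist n (eD q)) := (eD_dist (fun y => (hqp y).le) hq.2).prodDist n
  have w0 : ∀ x y, 0 ≤ (W x y).toReal := fun x y => ENNReal.toReal_nonneg
  have w1 : ∀ x, ∑ y, (W x y).toReal = 1 := fun x => dist_real (hW x)
  have hV0 : ∀ (xs : Fin n → A) (ys : Fin n → B), 0 ≤ ∏ i, (W (xs i) (ys i)).toReal := fun xs ys => Finset.prod_nonneg fun i _ => w0 _ _
  have hQ0 : ∀ ys : Fin n → B, 0 < ∏ i, q (ys i) := fun ys => Finset.prod_pos fun i _ => hqp _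
  rw [← add_assoc, ← add_assoc]
  refine sim_exists hW hr hQd (N' := fun xs => eD fun ys => min (∏ i, (W (xs i) (ys i)).toReal) (2 ^ (n * r - 1) * ∏ i, q (ys i)))
    (fun xs => ?_) (fun xs ys => ?_) fun xs => ?_
  · rw [← hW.prodCh n xs, prodCh_eD hW]; exact Finset.sum_le_sum fun ys _ => ENNReal.ofReal_le_ofReal (min_le_left _ _)
  · rw [eD_prod fun y => (hqp y).le, ← ENNReal.ofReal_mul (by positivity)]
    exact ENNReal.ofReal_le_ofReal (min_le_right _ _)
  rw [renyiD_one_iff ((hW.prodCh n).ne_top xs) (eD_ne_top _)]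
  have hmin : ∀ ys : Fin n → B, 0 ≤ min (∏ i, (W (xs i) (ys i)).toReal) ((2:ℝ) ^ (n * r - 1) * ∏ i, q (ys i)) :=
    fun ys => le_min (hV0 _ _) (by have := hQ0 ys; positivity)
  constructor
  · intro ys hys
    have h1 : 0 < ∏ i, (W (xs i) (ys i)).toReal := by
      rw [← prodCh_toReal]; exact ENNReal.toReal_pos hys ((hW.prodCh n).ne_top xs ys)
    have h2 := hQ0 ys
    have h3 : 0 < min (∏ i, (W (xs i) (ys i)).toReal) ((2:ℝ) ^ (n * r - 1) * ∏ i, q (ys i)) := lt_min h1 (by positivity)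
    simpa [eD] using h3
  · have hc := core hn (v := fun i y => (W (xs i) y).toReal) (fun i y => w0 _ _) (fun i => w1 _) hqp (C := C)
      (fun i => hC _ (w0 _) (w1 _) q hq) (Qn := fun ys => ∏ i, q (ys i)) (κ := 1) le_rfl (fun ys => by simp) (n * r)
    have e : ∑ ys, (prodCh n W xs ys).toReal * Real.logb 2 ((prodCh n W xs ys).toReal /
        (eD (fun ys => min (∏ i, (W (xs i) (ys i)).toReal) ((2:ℝ) ^ (n * r - 1) * ∏ i, q (ys i))) ys).toReal) =
        ∑ ys : Fin n → B, (∏ i, (W (xs i) (ys i)).toReal) * Real.logb 2 ((∏ i, (W (xs i) (ys i)).toReal) / min (∏ i, (W (xs i) (ys i)).toReal) ((2:ℝ) ^ (n * r - 1) * ∏ i, q (ys i))) := by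
      refine Finset.sum_congr rfl fun ys _ => ?_
      rw [prodCh_toReal]
      unfold eD
      rw [ENNReal.toReal_ofReal (hmin ys)]
    rw [e]
    refine hc.trans ?_
    have hrow : ∀ i, ∑ y, (W (xs i) y).toReal * Real.logb 2 ((W (xs i) y).toReal / q y) ≤ I + ε := by
      intro i
      have := ((renyiD_one_iff (hW.ne_top _) (eD_ne_top _) _).1 (hD (xs i))).2
      refine le_trans (le_of_eq ?_) this
      refine Finset.sum_congr rfl fun y _ => ?_
      unfold eD
      rw [ENNReal.toReal_ofReal (hqp y).le]
    have hs : ∑ i, ∑ y, (W (xs i) y).toReal * Real.logb 2 ((W (xs i) y).toReal / q y) ≤ n * (I + ε) := by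
      refine (Finset.sum_le_sum fun i _ => hrow i).trans ?_
      simp
      linarith
    have h1 := le_max_left (I - r) 0
    have h2 := le_max_right (I - r) 0
    have hm : max (∑ i, ∑ y, (W (xs i) y).toReal * Real.logb 2 ((W (xs i) y).toReal / q y) - n * r) 0 ≤ n * (max (I - r) 0 + ε) := by
      refine max_le ?_ (by positivity)
      nlinarith
    rw [Real.logb_one]
    linarith

end
end RST

namespace RST
section
variable {A B : Type*} [Fintype A] [Fintype B]

/-- Real-valued relative entropy (base 2). -/
def kl (v q : B → ℝ) : ℝ := ∑ y, v y * Real.logb 2 (v y / q y)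

lemma kl_self (w : B → ℝ) : kl w w = 0 := by
  unfold kl
  refine Finset.sum_eq_zero fun y _ => ?_
  by_cases h : w y = 0
  · simp [h]
  · rw [div_self h]; simp

lemma tilt {β : ℝ} (h0 : 0 < β) (h1 : β < 1) {w q : B → ℝ} (hw : ∀ y, 0 ≤ w y) (hw1 : ∑ y, w y = 1) (hq : ∀ y, 0 < q y)
    {d : ℝ} (hd : (2:ℝ) ^ ((β - 1) * d) ≤ ∑ y, w y ^ β * q y ^ (1 - β)) :
    ∃ V : B → ℝ, (∀ y, 0 ≤ V y) ∧ ∑ y, V y = 1 ∧ (∀ y, w y = 0 → V y = 0) ∧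
      β * kl V w + (1 - β) * kl V q ≤ (1 - β) * d := by
  set Z := ∑ y, w y ^ β * q y ^ (1 - β) with hZ
  have hZ0 : 0 < Z := lt_of_lt_of_le (two_rpow_pos _) hd
  have hV0 : ∀ y, 0 ≤ w y ^ β * q y ^ (1 - β) / Z := fun y => by have := hw y; have := hq y; positivity
  have hV1 : ∑ y, w y ^ β * q y ^ (1 - β) / Z = 1 := by rw [← Finset.sum_div, div_self hZ0.ne']
  refine ⟨fun y => w y ^ β * q y ^ (1 - β) / Z, hV0, hV1, ?_, ?_⟩
  · intro y hy; simp [hy, Real.zero_rpow h0.ne']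
  · have hlZ : (β - 1) * d ≤ Real.logb 2 Z := by
      rw [Real.le_logb_iff_rpow_le (by norm_num) hZ0]; exact hd
    have e : β * kl (fun y => w y ^ β * q y ^ (1 - β) / Z) w + (1 - β) * kl (fun y => w y ^ β * q y ^ (1 - β) / Z) q =
        ∑ y, (w y ^ β * q y ^ (1 - β) / Z) * (- Real.logb 2 Z) := by
      unfold kl
      rw [Finset.mul_sum, Finset.mul_sum, ← Finset.sum_add_distrib]
      refine Finset.sum_congr rfl fun y _ => ?_
      by_cases h : w y = 0
      · simp [h, Real.zero_rpow h0.ne']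
      have hwy : 0 < w y := lt_of_le_of_ne (hw y) (Ne.symm h)
      have hqy := hq y
      have hwb : 0 < w y ^ β := by positivity
      have hqb : 0 < q y ^ (1 - β) := by positivity
      rw [Real.logb_div (by positivity) hwy.ne', Real.logb_div (by positivity) hqy.ne', Real.logb_div (by positivity) hZ0.ne',
        Real.logb_mul hwb.ne' hqb.ne', Real.logb_rpow_eq_mul_logb_of_pos hwy, Real.logb_rpow_eq_mul_logb_of_pos hqy]
      ring
    rw [e, ← Finset.sum_mul, hV1]
    linarith

/-- The convex set of pairs used in the minimax argument. -/
def PK (w : A → B → ℝ) (δ : ℝ) : Set ((A → B → ℝ) × (B → ℝ)) :=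
  {p | (∀ x y, 0 ≤ p.1 x y) ∧ (∀ x, ∑ y, p.1 x y = 1) ∧ (∀ x y, w x y = 0 → p.1 x y = 0) ∧ p.2 ∈ Kset B δ}

lemma PK_convex (w : A → B → ℝ) (δ : ℝ) : Convex ℝ (PK w δ) := by
  rintro p ⟨h1, h2, h3, h4⟩ p' ⟨h1', h2', h3', h4'⟩ a b ha hb hab
  refine ⟨fun x y => ?_, fun x => ?_, fun x y h => ?_, Kset_convex δ h4 h4' ha hb hab⟩
  · have := h1 x y; have := h1' x y
    simp only [Prod.fst_add, Prod.smul_fst, Pi.add_apply, Pi.smul_apply, smul_eq_mul]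
    positivity
  · simp only [Prod.fst_add, Prod.smul_fst, Pi.add_apply, Pi.smul_apply, smul_eq_mul]
    rw [Finset.sum_add_distrib, ← Finset.mul_sum, ← Finset.mul_sum, h2, h2']; linarith
  · simp [h3 x y h, h3' x y h]

lemma kl1_convex {w : A → B → ℝ} (hw : ∀ x y, 0 ≤ w x y) (δ : ℝ) {P : A → ℝ} (hP : ∀ x, 0 ≤ P x) :
    ConvexOn ℝ (PK w δ) fun p => ∑ x, P x * kl (p.1 x) (w x) := by
  refine ⟨PK_convex w δ, ?_⟩
  rintro p ⟨h1, h2, h3, h4⟩ p' ⟨h1', h2', h3', h4'⟩ a b ha hb hab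
  simp only [smul_eq_mul]
  rw [Finset.mul_sum, Finset.mul_sum, ← Finset.sum_add_distrib]
  refine Finset.sum_le_sum fun x _ => ?_
  have : kl ((a • p + b • p').1 x) (w x) ≤ a * kl (p.1 x) (w x) + b * kl (p'.1 x) (w x) := by
    unfold kl
    rw [Finset.mul_sum, Finset.mul_sum, ← Finset.sum_add_distrib]
    refine Finset.sum_le_sum fun y _ => ?_
    have := kl_term_convex (h1 x y) (h1' x y) (hw x y) (hw x y) (h3 x y) (h3' x y) ha hb hab
    rw [← add_mul, hab, one_mul] at this
    exact this
  have := mul_le_mul_of_nonneg_left this (hP x)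
  linarith

lemma kl2_convex {w : A → B → ℝ} {δ : ℝ} (hδ : 0 < δ) {P : A → ℝ} (hP : ∀ x, 0 ≤ P x) :
    ConvexOn ℝ (PK w δ) fun p => ∑ x, P x * kl (p.1 x) p.2 := by
  refine ⟨PK_convex w δ, ?_⟩
  rintro p ⟨h1, h2, h3, h4⟩ p' ⟨h1', h2', h3', h4'⟩ a b ha hb hab
  simp only [smul_eq_mul]
  rw [Finset.mul_sum, Finset.mul_sum, ← Finset.sum_add_distrib]
  refine Finset.sum_le_sum fun x _ => ?_
  have : kl ((a • p + b • p').1 x) (a • p + b • p').2 ≤ a * kl (p.1 x) p.2 + b * kl (p'.1 x) p'.2 := by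
    unfold kl
    rw [Finset.mul_sum, Finset.mul_sum, ← Finset.sum_add_distrib]
    refine Finset.sum_le_sum fun y _ => ?_
    have p1 : 0 < p.2 y := lt_of_lt_of_le hδ (h4.1 y)
    have p2 : 0 < p'.2 y := lt_of_lt_of_le hδ (h4'.1 y)
    exact kl_term_convex (h1 x y) (h1' x y) p1.le p2.le (fun h => absurd h p1.ne') (fun h => absurd h p2.ne') ha hb hab
  have := mul_le_mul_of_nonneg_left this (hP x)
  linarith

lemma pair_lemma [Nonempty A] [Nonempty B] {α : ℝ} (h0 : 0 < α) (h1 : α < 1) {W : A → B → ℝ≥0∞} (hW : IsChannel W) {r T : ℝ}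
    (hT : ∀ β : ℝ, α ≤ β → β ≤ 1 → (((α * (1 - β)) / (β * (1 - α)) : ℝ) : EReal) * (renyiCap (ENNReal.ofReal β) W - (r : EReal)) ≤ T)
    {ε δ : ℝ} (hε : 0 < ε) (hδ : 0 < δ) (hδ1 : δ * Fintype.card B < 1) (hδ2 : Real.logb 2 (1 - δ * Fintype.card B)⁻¹ < ε)
    {P : A → ℝ} (hP : ∀ x, 0 ≤ P x) (hP1 : ∑ x, P x = 1) :
    ∃ p ∈ PK (fun x y => (W x y).toReal) δ,
      α / (1 - α) * ∑ x, P x * kl (p.1 x) (fun y => (W x y).toReal) < T + 3 * ε ∧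
      α / (1 - α) * ∑ x, P x * kl (p.1 x) (fun y => (W x y).toReal) + ∑ x, P x * kl (p.1 x) p.2 - r < T + 3 * ε := by
  set w : A → B → ℝ := fun x y => (W x y).toReal with hw
  have w0 : ∀ x y, 0 ≤ w x y := fun x y => ENNReal.toReal_nonneg
  have w1 : ∀ x, ∑ y, w x y = 1 := fun x => dist_real (hW x)
  set a := α / (1 - α) with ha
  have h1a : 0 < 1 - α := by linarith
  have ha0 : 0 < a := div_pos h0 h1a
  have hT0 : 0 ≤ T := by
    have := hT 1 h1.le le_rfl
    simp at this
    exact_mod_cast this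
  have c1 := (kl1_convex w0 δ hP).smul ha0.le
  have c2 := (c1.add (kl2_convex (w := w) hδ hP)).add (convexOn_const (-r) (PK_convex w δ))
  obtain ⟨p, hp, hpi⟩ := minimax (ι := Bool) (K := PK w δ) (c := T + 3 * ε)
    (f := fun i p => if i then a * ∑ x, P x * kl (p.1 x) (w x) + ∑ x, P x * kl (p.1 x) p.2 - r else a * ∑ x, P x * kl (p.1 x) (w x))
    (by
      intro i
      cases i
      · simpa using c1
      · simpa [sub_eq_add_neg, Pi.add_def] using c2)
    (by
      intro p hp hp1
      rw [Fintype.sum_bool] at hp1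
      simp only [Fintype.sum_bool, if_true, Bool.false_eq_true, if_false]
      set s := p true with hs
      have hs0 : 0 ≤ s := hp true
      have hs1 : s ≤ 1 := by have := hp false; linarith
      have hpf : p false = 1 - s := by linarith
      rw [hpf]
      rcases hs0.eq_or_lt with h | h
      · refine ⟨(w, fun _ => (Fintype.card B : ℝ)⁻¹), ⟨w0, w1, fun x y h => h, ?_, ?_⟩, ?_⟩
        · intro y
          have : (0:ℝ) < Fintype.card B := by exact_mod_cast Fintype.card_pos
          dsimp only
          rw [← one_div, le_div_iff₀ this]; exact hδ1.le
        · simp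
        · rw [← h]; simp [kl_self]; linarith
      · set β := a / (a + s) with hβ
        have hb0 : 0 < β := by positivity
        have hb1 : β < 1 := by rw [hβ, div_lt_one (by positivity)]; linarith
        have hb2 : 1 - β = s / (a + s) := by rw [hβ]; field_simp; ring
        have hab : α ≤ β := by
          have : α = a / (a + 1) := by rw [ha]; field_simp; ring
          rw [this, hβ]; gcongr
        obtain ⟨I, hI0, hI⟩ := renyiCap_real (ENNReal.ofReal β) hW
        have hTb := hT β hab hb1.le
        have hcoef : α * (1 - β) / (β * (1 - α)) = s := by
          rw [mul_comm β, ← div_mul_div_comm, ← ha, hb2, hβ]; field_simp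
        rw [hcoef, hI] at hTb
        have hTb' : s * (I - r) ≤ T := by exact_mod_cast hTb
        obtain ⟨q, hq, hD⟩ := cap_ach (d := I + ε) (d' := I + 2 * ε) (δ := δ) (α := ENNReal.ofReal β) ENNReal.ofReal_ne_top hW
          (by rw [hI]; exact_mod_cast by linarith) hδ hδ1 (by linarith)
        have hqp : ∀ y, 0 < q y := fun y => lt_of_lt_of_le hδ (hq.1 y)
        have hV : ∀ x, ∃ V : B → ℝ, (∀ y, 0 ≤ V y) ∧ ∑ y, V y = 1 ∧ (∀ y, w x y = 0 → V y = 0) ∧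
            β * kl V (w x) + (1 - β) * kl V q ≤ (1 - β) * (I + 2 * ε) := by
          intro x
          refine tilt hb0 hb1 (w0 x) (w1 x) hqp ?_
          have := (renyiD_lt_one_iff hb0 hb1 _ _ _).1 (hD x)
          rw [row_sum hb0 (hW.ne_top x) hqp] at this
          exact (ENNReal.ofReal_le_ofReal_iff (Finset.sum_nonneg fun y _ => by have := hqp y; positivity)).1 this
        choose V hV0 hV1 hVs hVd using hV
        refine ⟨(V, q), ⟨hV0, hV1, hVs, hq⟩, ?_⟩
        have hx : ∀ x, a * kl (V x) (w x) + s * kl (V x) q ≤ s * (I + 2 * ε) := by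
          intro x
          have h2 := mul_le_mul_of_nonneg_left (hVd x) (by positivity : 0 ≤ a + s)
          have e1 : (a + s) * β = a := by rw [hβ]; field_simp
          have e2 : (a + s) * (1 - β) = s := by rw [hb2]; field_simp
          have e3 : (a + s) * (β * kl (V x) (w x) + (1 - β) * kl (V x) q) = a * kl (V x) (w x) + s * kl (V x) q := by
            rw [mul_add, ← mul_assoc, ← mul_assoc, e1, e2]
          rw [e3, ← mul_assoc, e2] at h2
          exact h2
        have hsum : ∑ x, P x * (a * kl (V x) (w x) + s * kl (V x) q) ≤ s * (I + 2 * ε) := by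
          refine (Finset.sum_le_sum fun x _ => mul_le_mul_of_nonneg_left (hx x) (hP x)).trans ?_
          rw [← Finset.sum_mul, hP1, one_mul]
        have e : ∑ x, P x * (a * kl (V x) (w x) + s * kl (V x) q) = a * ∑ x, P x * kl (V x) (w x) + s * ∑ x, P x * kl (V x) q := by
          rw [Finset.mul_sum, Finset.mul_sum, ← Finset.sum_add_distrib]
          exact Finset.sum_congr rfl fun x _ => by ring
        rw [e] at hsum
        have : s * ε ≤ ε := by nlinarith
        simp only
        nlinarith)
  exact ⟨p, hp, by simpa using hpi false, by simpa using hpi true⟩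

end
end RST

namespace RST
section
variable {A B : Type*} [Fintype A] [Fintype B]

lemma prod_kl {n : ℕ} (v w : Fin n → B → ℝ) (hv1 : ∀ i, ∑ y, v i y = 1) (hs : ∀ i y, w i y = 0 → v i y = 0) :
    ∑ ys : Fin n → B, (∏ i, v i (ys i)) * Real.logb 2 ((∏ i, v i (ys i)) / ∏ i, w i (ys i)) = ∑ i, kl (v i) (w i) := by
  unfold kl
  rw [← E_linear v (fun i y => Real.logb 2 (v i y / w i y)) hv1]
  refine Finset.sum_congr rfl fun ys _ => ?_
  by_cases h : ∏ i, v i (ys i) = 0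
  · rw [h]; simp
  · congr 1
    have h' : ∀ i, v i (ys i) ≠ 0 := fun i => (Finset.prod_ne_zero_iff.1 h) i (Finset.mem_univ i)
    rw [← Finset.prod_div_distrib, Real.logb_prod]
    intro i _
    exact div_ne_zero (h' i) fun h0 => h' i (hs i _ h0)

/-- Empirical frequency vector of a sequence. -/
def emp {n : ℕ} (xs : Fin n → A) : A → ℝ := fun x => ((Finset.univ.filter fun i => xs i = x).card : ℝ) / n

lemma emp_sum {n : ℕ} (hn : 0 < n) (xs : Fin n → A) (φ : A → ℝ) : ∑ i, φ (xs i) = n * ∑ x, emp xs x * φ x := by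
  have hn' : (n:ℝ) ≠ 0 := by exact_mod_cast hn.ne'
  rw [← Finset.sum_fiberwise' Finset.univ xs φ, Finset.mul_sum]
  refine Finset.sum_congr rfl fun x _ => ?_
  rw [Finset.sum_const, nsmul_eq_mul]
  unfold emp
  field_simp

lemma ach_lt [Nonempty A] [Nonempty B] {α : ℝ} (h0 : 0 < α) (h1 : α < 1) {W : A → B → ℝ≥0∞} (hW : IsChannel W) {r T : ℝ} (hr : 0 ≤ r)
    (hT : ∀ β : ℝ, α ≤ β → β ≤ 1 → (((α * (1 - β)) / (β * (1 - α)) : ℝ) : EReal) * (renyiCap (ENNReal.ofReal β) W - (r : EReal)) ≤ T) :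
    Esc (ENNReal.ofReal α) W r ≤ (T : EReal) := by
  refine ach_limsup hr fun ε hε => ?_
  have hε3 : 0 < ε / 3 := by positivity
  obtain ⟨δ, hδ, hδ1, hδ2⟩ := exists_delta (Fintype.card B) hε3
  obtain ⟨C, hC0, hC⟩ := second_moment B hδ
  set w : A → B → ℝ := fun x y => (W x y).toReal with hw
  have w0 : ∀ x y, 0 ≤ w x y := fun x y => ENNReal.toReal_nonneg
  have w1 : ∀ x, ∑ y, w x y = 1 := fun x => dist_real (hW x)
  set a := α / (1 - α) with ha
  have key : ∀ P : A → ℝ, ∃ p ∈ PK w δ, (∀ x, 0 ≤ P x) → ∑ x, P x = 1 →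
      a * ∑ x, P x * kl (p.1 x) (w x) < T + ε ∧ a * ∑ x, P x * kl (p.1 x) (w x) + ∑ x, P x * kl (p.1 x) p.2 - r < T + ε := by
    intro P
    by_cases hP : (∀ x, 0 ≤ P x) ∧ ∑ x, P x = 1
    · obtain ⟨p, hp, h2, h3⟩ := pair_lemma h0 h1 hW hT hε3 hδ hδ1 hδ2 hP.1 hP.2
      have e : 3 * (ε / 3) = ε := by ring
      rw [e] at h2 h3
      exact ⟨p, hp, fun _ _ => ⟨h2, h3⟩⟩
    · obtain ⟨p, hp, -, -⟩ := pair_lemma h0 h1 hW hT hε3 hδ hδ1 hδ2 (P := Pi.single (Classical.arbitrary A) 1)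
        (fun x => by by_cases h : x = Classical.arbitrary A <;> simp [Pi.single_apply, h]) (by simp)
      exact ⟨p, hp, fun h2 h3 => absurd ⟨h2, h3⟩ hP⟩
  choose F hF hF' using key
  have l2 := log2_pos
  refine ⟨fun n => Real.sqrt n * ((1 + C) / 2 + Fintype.card A * (2 / Real.log 2)) + (1 + 2), err_tendsto _ _, fun n hn => ?_⟩
  have hn' : (0:ℝ) < n := by exact_mod_cast hn
  set κ : ℝ := (n + 1) ^ Fintype.card A with hκ
  have hκ1 : 1 ≤ κ := one_le_pow₀ (by linarith)
  have hκ0 : 0 < κ := by linarith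
  have hlκ : Real.logb 2 κ ≤ Real.sqrt n * (Fintype.card A * (2 / Real.log 2)) := by
    rw [hκ, Real.logb_pow]
    have := mul_le_mul_of_nonneg_left (logb_succ_le n) (by positivity : (0:ℝ) ≤ Fintype.card A)
    refine this.trans (le_of_eq ?_)
    ring
  set qq : (A → Fin (n + 1)) → B → ℝ := fun τ => (F fun x => ((τ x : ℕ) : ℝ) / n).2 with hqq
  have hqqK : ∀ τ, qq τ ∈ Kset B δ := fun τ => (hF _).2.2.2
  have hqqp : ∀ τ y, 0 < qq τ y := fun τ y => lt_of_lt_of_le hδ ((hqqK τ).1 y)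
  set Qn : (Fin n → B) → ℝ := fun ys => κ⁻¹ * ∑ τ, ∏ i, qq τ (ys i) with hQn
  have hQnp : ∀ ys, 0 < Qn ys := fun ys => mul_pos (by positivity)
    (Finset.sum_pos (fun τ _ => Finset.prod_pos fun i _ => hqqp τ _) Finset.univ_nonempty)
  have hQn1 : ∑ ys, Qn ys = 1 := by
    rw [hQn, ← Finset.mul_sum, Finset.sum_comm]
    have : ∀ τ, ∑ ys : Fin n → B, ∏ i, qq τ (ys i) = 1 := by
      intro τ
      rw [sum_pi_prod_real (fun _ => qq τ)]
      simp [(hqqK τ).2]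
    simp only [this]
    simp [hκ]
    field_simp
  set v : (Fin n → A) → Fin n → B → ℝ := fun xs i => (F (emp xs)).1 (xs i) with hv
  have hv0 : ∀ xs i y, 0 ≤ v xs i y := fun xs i y => (hF (emp xs)).1 _ _
  have hv1 : ∀ xs i, ∑ y, v xs i y = 1 := fun xs i => (hF (emp xs)).2.1 _
  have hvs : ∀ xs i y, w (xs i) y = 0 → v xs i y = 0 := fun xs i y => (hF (emp xs)).2.2.1 _ _
  have hV0 : ∀ xs (ys : Fin n → B), 0 ≤ ∏ i, v xs i (ys i) := fun xs ys => Finset.prod_nonneg fun i _ => hv0 _ _ _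
  have hV1 : ∀ xs, ∑ ys : Fin n → B, ∏ i, v xs i (ys i) = 1 := by
    intro xs
    rw [sum_pi_prod_real (v xs)]
    simp [hv1]
  rw [← add_assoc, ← add_assoc]
  have hmin : ∀ xs (ys : Fin n → B), 0 ≤ min (∏ i, v xs i (ys i)) ((2:ℝ) ^ (n * r - 1) * Qn ys) :=
    fun xs ys => le_min (hV0 _ _) (by have := hQnp ys; positivity)
  refine sim_exists hW hr (eD_dist (fun ys => (hQnp ys).le) hQn1) (N' := fun xs => eD fun ys => min (∏ i, v xs i (ys i)) (2 ^ (n * r - 1) * Qn ys))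
    (fun xs => ?_) (fun xs ys => ?_) fun xs => ?_
  · have := eD_dist (hV0 xs) (hV1 xs)
    unfold IsDist at this
    rw [← this]; exact Finset.sum_le_sum fun ys _ => ENNReal.ofReal_le_ofReal (min_le_left _ _)
  · unfold eD
    rw [← ENNReal.ofReal_mul (by positivity)]
    exact ENNReal.ofReal_le_ofReal (min_le_right _ _)
  rw [prodCh_eD hW]
  have hvar := variational h0 h1 (P := fun ys : Fin n → B => ∏ i, w (xs i) (ys i)) (N := fun ys => min (∏ i, v xs i (ys i)) (2 ^ (n * r - 1) * Qn ys))
    (V := fun ys => ∏ i, v xs i (ys i)) (fun ys => Finset.prod_nonneg fun i _ => w0 _ _) (hmin xs) (hV0 xs) (hV1 xs)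
    (fun ys h => by
      refine Finset.prod_ne_zero_iff.2 fun i _ h2 => ?_
      exact Finset.prod_ne_zero_iff.1 h i (Finset.mem_univ i) (hvs xs i _ h2))
    (fun ys h => by
      have h2 : 0 < ∏ i, v xs i (ys i) := lt_of_le_of_ne (hV0 xs ys) (Ne.symm h)
      have h3 := hQnp ys
      exact (lt_min h2 (by positivity)).ne')
  refine hvar.trans ?_
  rw [EReal.coe_le_coe_iff]
  have hemp0 : ∀ x, 0 ≤ emp xs x := fun x => by unfold emp; positivity
  have hemp1 : ∑ x, emp xs x = 1 := by
    have := emp_sum hn xs (fun _ => 1)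
    simp at this
    have h2 : (n:ℝ) * 1 = n * ∑ x, emp xs x := by rw [mul_one]; exact this
    exact (mul_left_cancel₀ hn'.ne' h2).symm
  obtain ⟨g1, g2⟩ := hF' (emp xs) hemp0 hemp1
  set q := (F (emp xs)).2 with hq
  have hqK : q ∈ Kset B δ := (hF (emp xs)).2.2.2
  have hτ : ∃ τ : A → Fin (n + 1), qq τ = q := by
    refine ⟨fun x => ⟨(Finset.univ.filter fun i => xs i = x).card, ?_⟩, rfl⟩
    have := Finset.card_filter_le (Finset.univ : Finset (Fin n)) (fun i => xs i = x)
    simp at this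
    omega
  obtain ⟨τ, hτ⟩ := hτ
  have hc := core hn (v := v xs) (hv0 xs) (hv1 xs) (fun y => lt_of_lt_of_le hδ (hqK.1 y)) (C := C)
      (fun i => hC _ (hv0 xs i) (hv1 xs i) q hqK) (Qn := Qn) (κ := κ) hκ1 (fun ys => by
        rw [hQn]
        simp only
        rw [← mul_assoc, mul_inv_cancel₀ hκ0.ne', one_mul, ← hτ]
        exact Finset.single_le_sum (f := fun τ => ∏ i, qq τ (ys i)) (fun τ _ => Finset.prod_nonneg fun i _ => (hqqp τ _).le) (Finset.mem_univ τ)) (n * r)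
  have hk1 := prod_kl (v xs) (fun i => w (xs i)) (hv1 xs) (hvs xs)
  have hk2 : ∑ i, kl (v xs i) (w (xs i)) = n * ∑ x, emp xs x * kl ((F (emp xs)).1 x) (w x) :=
    emp_sum hn xs fun x => kl ((F (emp xs)).1 x) (w x)
  have hk3 : ∑ i, ∑ y, v xs i y * Real.logb 2 (v xs i y / q y) = n * ∑ x, emp xs x * kl ((F (emp xs)).1 x) q :=
    emp_sum hn xs fun x => kl ((F (emp xs)).1 x) q
  rw [hk3] at hc
  rw [hk1, hk2]
  set S1 := ∑ x, emp xs x * kl ((F (emp xs)).1 x) (w x)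
  set S2 := ∑ x, emp xs x * kl ((F (emp xs)).1 x) q
  have hfin : a * (n * S1) + max (n * S2 - n * r) 0 ≤ n * (T + ε) := by
    rcases max_cases (n * S2 - n * r) 0 with ⟨h, -⟩ | ⟨h, -⟩ <;> rw [h] <;> nlinarith
  linarith

end
end RST

namespace RST

/-- **Strong converse exponent of channel simulation** (Theorem 3).
For any discrete memoryless channel `W` and `r ≥ 0`:
`E_sc^{(α)}(W,r) = max_{α ≤ β ≤ 1} (α(1-β))/(β(1-α)) (I_β(W) - r)` for `α ∈ (0,1)`,
and `E_sc^{(α)}(W,r) = |I_α(W) - r|⁺` for `α ∈ {0} ∪ [1,∞]`. -/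
theorem strong_converse_exponent
    {X Y : Type*} [Fintype X] [Fintype Y] [Nonempty X] [Nonempty Y]
    (W : X → Y → ℝ≥0∞) (hW : IsChannel W) (r : ℝ) (hr : 0 ≤ r) :
    (∀ α : ℝ, 0 < α → α < 1 →
      Esc (ENNReal.ofReal α) W r =
        ⨆ β : {β : ℝ // α ≤ β ∧ β ≤ 1},
          (((α * (1 - β.1)) / (β.1 * (1 - α)) : ℝ) : EReal) *
            (renyiCap (ENNReal.ofReal β.1) W - (r : EReal))) ∧
    (∀ α : ℝ≥0∞, α = 0 ∨ 1 ≤ α →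
      Esc α W r = max (renyiCap α W - (r : EReal)) 0) := by
  refine ⟨fun α h0 h1 => le_antisymm ?_ ?_, fun α hα => le_antisymm ?_ (Esc_ge_A α hW r)⟩
  · refine ereal_le_of_forall fun z hz => ?_
    refine ach_lt h0 h1 hW hr fun β hab hb => ?_
    exact (le_iSup (fun β : {β : ℝ // α ≤ β ∧ β ≤ 1} => (((α * (1 - β.1)) / (β.1 * (1 - α)) : ℝ) : EReal) *
            (renyiCap (ENNReal.ofReal β.1) W - (r : EReal))) ⟨β, hab, hb⟩).trans hz
  · exact iSup_le fun β => Esc_ge_B h0 β.2.1 β.2.2 h1 hW r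
  · obtain ⟨I, -, hI⟩ := renyiCap_real α hW
    have e : max (renyiCap α W - (r : EReal)) 0 = ((max (I - r) 0 : ℝ) : EReal) := by
      rw [hI, Monotone.map_max EReal.coe_strictMono.monotone]; rfl
    rw [e]
    rcases order_cases α with rfl | rfl | rfl | ⟨a, ha0, ha1, rfl⟩ | ⟨a, ha1, rfl⟩
    · exact ach_zero hW hr hI
    · exact ach_one hW hr hI
    · exact ach_top hW hr hI
    · exfalso
      rcases hα with h | h
      · simp at h; linarith
      · simp at h; linarith
    · exact ach_gt ha1 hW hr hI

end RST
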